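/- arXiv:2604.20187 — 5 statements merged into one kernel-verified Lean document; each statement's English description precedes it below -/
import Mathlib

section
/- Let S : ℝ³ → ℝ be smooth with compact support contained in the open ball B_R(0), and let p(x,t) := (t/(4π)) ∫_{S²} S(x + tω) dσ(ω). For x ∈ ∂B_R(0) and k > 0 define u(x,k) := ∫_0^∞ p(x,t) e^{ikt} dt (a finite integral, since t ↦ p(x,t) has compact support), and let h₀(z) := −i e^{iz}/z denote the zeroth-order spherical Hankel function of the first kind. Then for every y ∈ B_R(0), S(y) = lim_{ε→0⁺} (1/(2π²)) ∫_0^∞ e^{−εk} k² ( ∫_{∂B_R(0)} Re[ D_ν[x ↦ h₀(k|x−y|)](x) · conj(u(x,k)) ] ds(x) ) dk, where D_ν denotes the directional derivative along the outward unit normal ν_x = x/R of the sphere ∂B_R(0). -/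
open MeasureTheory Real Filter
open scoped RealInnerProductSpace Topology

/-!
Fix `ω` and write `P` for the wave field at `R • ω`, and `r` for `‖R • ω - y‖`. Since
`k ^ 2 * ∂_ν h₀(k r)` is a linear combination of `k * exp (I * k * r)` and
`k ^ 2 * exp (I * k * r)`, integrating by parts twice in time turns `k ^ 2` times the boundary
integrand into a cosine transform `∫ A(ω, t) cos (k (t - r)) dt`, where `A` involves only `P'` and
`P''`. The Abel-regularised integral over `k` of `cos (k (t - r))` is `ε / (ε ^ 2 + (t - r) ^ 2)`,
which tends to `π δ(t - r)`; so the limit is, up to constants, the time-domain back-projection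
`∫ (R - ⟪ω, y⟫) * (d / d(t ^ 2))² P |_{t = r} dσ(ω)`.

To see that this is a multiple of `S y`, regularise it by a Lorentzian of width `δ` in the variable
`t ^ 2`, move both derivatives onto the Lorentzian, and insert Kirchhoff's formula: it becomes the
integral of `S` against a kernel that, in polar coordinates `z = y + δ η θ`, depends on the sphere
only through the average of a function of `⟪ω, θ⟫`. By Archimedes' hat-box theorem that average is
an elementary integral over `[-1, 1]`, and letting `δ → 0` leaves `S y` times a total mass that is
the same for every direction `θ`.
-/

local notation "ℝ³" => EuclideanSpace ℝ (Fin 3)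
local notation "𝕊²" => Metric.sphere (0 : EuclideanSpace ℝ (Fin 3)) 1
local notation "σ₂" => Measure.toSphere (volume : Measure (EuclideanSpace ℝ (Fin 3)))

section ParametricIntegral

universe u

variable {X : Type*} [TopologicalSpace X] [CompactSpace X] [SecondCountableTopology X]
  [MeasurableSpace X] [OpensMeasurableSpace X] {ν : Measure X} [IsFiniteMeasure ν]

theorem continuous_integral_of_compactSpace {Y F : Type*} [TopologicalSpace Y]
    [FirstCountableTopology Y] [LocallyCompactSpace Y] [NormedAddCommGroup F] [NormedSpace ℝ F]
    {g : Y → X → F} (hg : Continuous (Function.uncurry g)) :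
    Continuous fun y => ∫ x, g y x ∂ν := by
  simpa only [Measure.restrict_univ] using
    continuous_parametric_integral_of_continuous (μ := ν) hg isCompact_univ

variable {V : Type*} [NormedAddCommGroup V] [NormedSpace ℝ V] {ι : X → V}
  {H : Type u} [NormedAddCommGroup H] [NormedSpace ℝ H]

theorem contDiff_fderiv_prodMk {F : Type*} [NormedAddCommGroup F] [NormedSpace ℝ F] {n : ℕ}
    {g : H × V → F} (hg : ContDiff ℝ (n + 1) g) :
    ContDiff ℝ n fun q : H × V => fderiv ℝ (fun h => g (h, q.2)) q.1 :=
  ContDiff.fderiv (f := fun (q : H × V) h => g (h, q.2)) (hg.comp (by fun_prop))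
    contDiff_fst le_rfl

variable [FiniteDimensional ℝ H]

theorem hasFDerivAt_integral_of_contDiff {F : Type*} [NormedAddCommGroup F] [NormedSpace ℝ F]
    {g : H × V → F} (hg : ContDiff ℝ 1 g) (hι : Continuous ι) (h₀ : H) :
    HasFDerivAt (fun h => ∫ x, g (h, ι x) ∂ν)
      (∫ x, fderiv ℝ (fun h => g (h, ι x)) h₀ ∂ν) h₀ := by
  have hpair : Continuous fun q : H × X => (q.1, ι q.2) := by fun_prop
  have hderiv : Continuous fun q : H × X => fderiv ℝ (fun h => g (h, ι q.2)) q.1 :=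
    (contDiff_fderiv_prodMk (n := 0) (by simpa using hg)).continuous.comp hpair
  have hint (h : H) : Integrable (fun x => g (h, ι x)) ν :=
    (hg.continuous.comp (hpair.comp (Continuous.prodMk_right h))).integrable_of_hasCompactSupport
      (HasCompactSupport.of_compactSpace _)
  obtain ⟨C, hC⟩ := (isCompact_closedBall h₀ 1).prod (isCompact_univ (X := X))
    |>.exists_bound_of_continuousOn hderiv.continuousOn
  refine hasFDerivAt_integral_of_dominated_of_fderiv_le (Metric.ball_mem_nhds h₀ one_pos)
    (Eventually.of_forall fun h => (hint h).aestronglyMeasurable) (hint h₀)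
    (hderiv.comp (Continuous.prodMk_right h₀)).aestronglyMeasurable
    (ae_of_all _ fun x h hh => hC (h, x) ⟨Metric.ball_subset_closedBall hh, Set.mem_univ x⟩)
    (integrable_const C) (ae_of_all _ fun x h _ => ?_)
  exact ((hg.comp (by fun_prop)).differentiable one_ne_zero h).hasFDerivAt

theorem contDiff_integral {F : Type u} [NormedAddCommGroup F] [NormedSpace ℝ F] {n : ℕ}
    {g : H × V → F} (hg : ContDiff ℝ n g) (hι : Continuous ι) :
    ContDiff ℝ n fun h => ∫ x, g (h, ι x) ∂ν := by
  induction n generalizing F with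
  | zero =>
    simp only [Nat.cast_zero, contDiff_zero] at hg ⊢
    exact continuous_integral_of_compactSpace (hg.comp (by fun_prop))
  | succ n ih =>
    push_cast at hg ⊢
    exact contDiff_succ_iff_hasFDerivAt.2
      ⟨fun h => ∫ x, fderiv ℝ (fun h => g (h, ι x)) h ∂ν, ih (contDiff_fderiv_prodMk hg),
        hasFDerivAt_integral_of_contDiff (hg.of_le le_add_self) hι⟩

end ParametricIntegral

section SphereMeasure

open Module Metric Set

theorem map_coe_volumeIoiPow (n : ℕ) :
    (Measure.volumeIoiPow n).map ((↑) : Ioi (0 : ℝ) → ℝ) =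
      (volume.restrict (Ioi 0)).withDensity fun r => ENNReal.ofReal (r ^ n) := by
  ext s hs
  rw [Measure.volumeIoiPow, Measure.map_apply measurable_subtype_coe hs,
    withDensity_apply _ (measurable_subtype_coe hs), withDensity_apply _ hs,
    ← map_comap_subtype_coe measurableSet_Ioi,
    setLIntegral_map hs (by fun_prop) measurable_subtype_coe]

theorem ae_toReal_ofReal_pow_snd {X : Type*} [MeasurableSpace X] (ν : Measure X) (n : ℕ) :
    ∀ᵐ q : X × ℝ ∂ν.prod (volume.restrict (Ioi 0)),
      (ENNReal.ofReal (q.2 ^ n)).toReal = q.2 ^ n := by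
  have hpos : ∀ᵐ q : X × ℝ ∂ν.prod (volume.restrict (Ioi 0)), 0 < q.2 :=
    Measure.quasiMeasurePreserving_snd.ae (ae_restrict_mem measurableSet_Ioi)
  filter_upwards [hpos] with q hq
  exact ENNReal.toReal_ofReal (pow_nonneg hq.le _)

variable {E F : Type*} [NormedAddCommGroup E] [NormedSpace ℝ E]
  [NormedAddCommGroup F] [NormedSpace ℝ F]

theorem snd_smul_fst_homeomorphUnitSphereProd (x : ({0}ᶜ : Set E)) :
    (homeomorphUnitSphereProd E x).2.1 • (homeomorphUnitSphereProd E x).1.1 = (x : E) := by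
  rw [← homeomorphUnitSphereProd_symm_apply_coe, Homeomorph.symm_apply_apply]

variable [MeasurableSpace E] [BorelSpace E]

theorem measurableEmbedding_polarCoordinates :
    MeasurableEmbedding (Prod.map id (↑) ∘ homeomorphUnitSphereProd E :
      ({0}ᶜ : Set E) → sphere (0 : E) 1 × ℝ) :=
  (MeasurableEmbedding.id.prodMap (.subtype_coe measurableSet_Ioi)).comp
    (Homeomorph.measurableEmbedding _)

variable [FiniteDimensional ℝ E] (μ : Measure E) [μ.IsAddHaarMeasure]

theorem measurePreserving_polarCoordinates :
    MeasurePreserving (Prod.map id (↑) ∘ homeomorphUnitSphereProd E :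
        ({0}ᶜ : Set E) → sphere (0 : E) 1 × ℝ) (μ.comap (↑))
      ((μ.toSphere.prod (volume.restrict (Ioi 0))).withDensity
        fun q => ENNReal.ofReal (q.2 ^ (finrank ℝ E - 1))) := by
  rw [← prod_withDensity_right (g := fun r : ℝ => ENNReal.ofReal (r ^ (finrank ℝ E - 1)))
    (by fun_prop)]
  have hval : MeasurePreserving ((↑) : Ioi (0 : ℝ) → ℝ) (.volumeIoiPow (finrank ℝ E - 1))
      ((volume.restrict (Ioi 0)).withDensity fun r => ENNReal.ofReal (r ^ (finrank ℝ E - 1))) :=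
    ⟨measurable_subtype_coe, map_coe_volumeIoiPow _⟩
  exact ((MeasurePreserving.id _).prod hval).comp μ.measurePreserving_homeomorphUnitSphereProd

variable [Nontrivial E]

theorem integral_eq_integral_sphere_prod_Ioi (f : E → F) :
    ∫ x, f x ∂μ = ∫ q : sphere (0 : E) 1 × ℝ, q.2 ^ (finrank ℝ E - 1) • f (q.2 • (q.1 : E))
      ∂μ.toSphere.prod (volume.restrict (Ioi 0)) := by
  have hpolar := (measurePreserving_polarCoordinates μ).integral_comp
    measurableEmbedding_polarCoordinates fun q => f (q.2 • (q.1 : E))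
  simp only [Function.comp_apply, Prod.map_fst, Prod.map_snd, id,
    snd_smul_fst_homeomorphUnitSphereProd] at hpolar
  rw [integral_subtype_comap (measurableSet_singleton _).compl fun x => f x,
    restrict_compl_singleton] at hpolar
  rw [hpolar, integral_withDensity_eq_integral_toReal_smul (by fun_prop) (by simp)]
  refine integral_congr_ae ?_
  filter_upwards [ae_toReal_ofReal_pow_snd μ.toSphere (finrank ℝ E - 1)] with q hq
  rw [hq]

theorem integrable_iff_integrable_sphere_prod_Ioi {f : E → F} :
    Integrable f μ ↔
      Integrable (fun q : sphere (0 : E) 1 × ℝ => q.2 ^ (finrank ℝ E - 1) • f (q.2 • (q.1 : E)))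
        (μ.toSphere.prod (volume.restrict (Ioi 0))) := by
  have hpolar := (measurePreserving_polarCoordinates μ).integrable_comp_emb
    measurableEmbedding_polarCoordinates (g := fun q => f (q.2 • (q.1 : E)))
  simp only [Function.comp_def, Prod.map_fst, Prod.map_snd, id,
    snd_smul_fst_homeomorphUnitSphereProd] at hpolar
  have hsubtype := integrableOn_iff_comap_subtypeVal (f := f) (μ := μ)
    (measurableSet_singleton (0 : E)).compl
  rw [IntegrableOn, restrict_compl_singleton] at hsubtype
  rw [hsubtype, Function.comp_def, hpolar,
    integrable_withDensity_iff_integrable_smul' (by fun_prop) (by simp)]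
  refine integrable_congr ?_
  filter_upwards [ae_toReal_ofReal_pow_snd μ.toSphere (finrank ℝ E - 1)] with q hq
  rw [hq]

theorem integral_eq_integral_Ioi_integral_sphere {f : E → F} (hf : Integrable f μ) :
    ∫ x, f x ∂μ = ∫ r in Ioi (0 : ℝ), r ^ (finrank ℝ E - 1) •
      ∫ ω : sphere (0 : E) 1, f (r • (ω : E)) ∂μ.toSphere := by
  rw [integral_eq_integral_sphere_prod_Ioi,
    integral_prod_symm _ ((integrable_iff_integrable_sphere_prod_Ioi μ).1 hf)]
  simp only [integral_smul]

theorem setIntegral_ball_eq_integral_integral_sphere {f : E → F} (hf : Continuous f) {T : ℝ}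
    (hT : 0 ≤ T) :
    ∫ x in ball 0 T, f x ∂μ = ∫ r in 0..T, r ^ (finrank ℝ E - 1) •
      ∫ ω : sphere (0 : E) 1, f (r • (ω : E)) ∂μ.toSphere := by
  have hfi : IntegrableOn f (ball 0 T) μ :=
    (hf.continuousOn.integrableOn_compact (isCompact_closedBall _ _)).mono_set
      ball_subset_closedBall
  rw [← integral_indicator measurableSet_ball, integral_eq_integral_Ioi_integral_sphere μ
      (hfi.integrable_indicator measurableSet_ball), intervalIntegral.integral_of_le hT,
    integral_Ioc_eq_integral_Ioo, ← Ioi_inter_Iio, ← setIntegral_indicator measurableSet_Iio]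
  refine setIntegral_congr_fun measurableSet_Ioi fun r (hr : 0 < r) => ?_
  have hmem (ω : sphere (0 : E) 1) : r • (ω : E) ∈ ball 0 T ↔ r < T := by
    simp [norm_smul, abs_of_pos hr]
  by_cases hrT : r < T <;> simp [indicator, hmem, hrT]

theorem hasDerivAt_setIntegral_ball_one [CompleteSpace F] {f : E → F} (hf : Continuous f) :
    HasDerivAt (fun T => ∫ x in ball 0 T, f x ∂μ) (∫ ω : sphere (0 : E) 1, f ω ∂μ.toSphere) 1 := by
  have hcont : Continuous fun r : ℝ => r ^ (finrank ℝ E - 1) •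
      ∫ ω : sphere (0 : E) 1, f (r • (ω : E)) ∂μ.toSphere :=
    (continuous_pow _).smul (continuous_integral_of_compactSpace (by fun_prop))
  have hderiv := intervalIntegral.integral_hasDerivAt_right (hcont.intervalIntegrable 0 1)
    hcont.stronglyMeasurable.stronglyMeasurableAtFilter hcont.continuousAt
  simp only [one_pow, one_smul] at hderiv
  refine hderiv.congr_of_eventuallyEq ?_
  filter_upwards [lt_mem_nhds one_pos] with T hT
  exact setIntegral_ball_eq_integral_integral_sphere μ hf hT.le

theorem integral_sphere_comp_linearIsometryEquiv {E F : Type*} [NormedAddCommGroup E]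
    [InnerProductSpace ℝ E] [FiniteDimensional ℝ E] [Nontrivial E] [MeasurableSpace E]
    [BorelSpace E] [NormedAddCommGroup F] [NormedSpace ℝ F] [CompleteSpace F] (A : E ≃ₗᵢ[ℝ] E)
    {f : E → F} (hf : Continuous f) :
    ∫ ω : sphere (0 : E) 1, f (A ω) ∂(volume : Measure E).toSphere =
      ∫ ω : sphere (0 : E) 1, f ω ∂(volume : Measure E).toSphere := by
  refine (hasDerivAt_setIntegral_ball_one volume (hf.comp A.continuous)).unique ?_
  refine (hasDerivAt_setIntegral_ball_one volume hf).congr_of_eventuallyEq (.of_forall fun T => ?_)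
  have hball := A.measurePreserving.setIntegral_preimage_emb A.toHomeomorph.measurableEmbedding f
    (ball 0 T)
  simpa [LinearIsometryEquiv.preimage_ball] using hball

end SphereMeasure

section HatBox

open Module Metric Set

theorem setIntegral_comp_fst {X Y F : Type*} [MeasurableSpace X] [MeasurableSpace Y]
    [NormedAddCommGroup F] [NormedSpace ℝ F] [CompleteSpace F] {μ : Measure X} {ν : Measure Y}
    [SFinite μ] [SFinite ν] {U : Set (X × Y)} (hU : MeasurableSet U) {f : X → F}
    (hf : IntegrableOn (fun q => f q.1) U (μ.prod ν)) :
    ∫ q in U, f q.1 ∂μ.prod ν = ∫ x, ν.real (Prod.mk x ⁻¹' U) • f x ∂μ := by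
  rw [← integral_indicator hU, integral_prod _ (hf.integrable_indicator hU)]
  refine integral_congr_ae (.of_forall fun x => ?_)
  have hslice (y : Y) : U.indicator (fun q => f q.1) (x, y) =
      (Prod.mk x ⁻¹' U).indicator (fun _ => f x) y := rfl
  simp only [hslice, integral_indicator (measurable_prodMk_left hU), setIntegral_const]

/-- The splitting of `ℝⁿ⁺¹` into its first coordinate and the remaining ones. -/
noncomputable def headTailEquiv (n : ℕ) :
    EuclideanSpace ℝ (Fin (n + 1)) ≃ᵐ ℝ × EuclideanSpace ℝ (Fin n) :=
  (MeasurableEquiv.toLp 2 (Fin (n + 1) → ℝ)).symm.trans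
    ((MeasurableEquiv.piFinSuccAbove (fun _ => ℝ) 0).trans
      ((MeasurableEquiv.refl ℝ).prodCongr (MeasurableEquiv.toLp 2 (Fin n → ℝ))))

theorem measurePreserving_headTailEquiv (n : ℕ) : MeasurePreserving (headTailEquiv n) :=
  ((MeasurePreserving.id volume).prod (PiLp.volume_preserving_toLp (Fin n))).comp
    ((volume_preserving_piFinSuccAbove (fun _ => ℝ) 0).comp (PiLp.volume_preserving_ofLp _))

theorem norm_sq_eq_headTailEquiv {n : ℕ} (x : EuclideanSpace ℝ (Fin (n + 1))) :
    ‖x‖ ^ 2 = (headTailEquiv n x).1 ^ 2 + ‖(headTailEquiv n x).2‖ ^ 2 := by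
  have happly : headTailEquiv n x = (x 0, WithLp.toLp 2 fun i => x i.succ) := rfl
  simp [happly, EuclideanSpace.norm_sq_eq, Fin.sum_univ_succ]

theorem setIntegral_ball_comp_apply_zero {n : ℕ} {f : ℝ → ℝ} (hf : Continuous f) {T : ℝ}
    (hT : 0 ≤ T) :
    ∫ x in ball (0 : EuclideanSpace ℝ (Fin (n + 1))) T, f (x 0) =
      ∫ s in -T..T, volume.real (ball (0 : EuclideanSpace ℝ (Fin n)) √(T ^ 2 - s ^ 2)) * f s := by
  set U : Set (ℝ × EuclideanSpace ℝ (Fin n)) := {q | q.1 ^ 2 + ‖q.2‖ ^ 2 < T ^ 2}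
  have hU : MeasurableSet U := measurableSet_lt (by fun_prop) (by fun_prop)
  have hball : ball (0 : EuclideanSpace ℝ (Fin (n + 1))) T = headTailEquiv n ⁻¹' U := by
    ext x
    simp [U, ← norm_sq_eq_headTailEquiv, sq_lt_sq₀, hT]
  have hslice (s : ℝ) : Prod.mk s ⁻¹' U = ball 0 √(T ^ 2 - s ^ 2) := by
    ext v
    simp [U, Real.lt_sqrt, lt_sub_iff_add_lt']
  have hint : IntegrableOn (fun q : ℝ × EuclideanSpace ℝ (Fin n) => f q.1) U := by
    refine (Continuous.continuousOn (by fun_prop)).integrableOn_compact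
      (isCompact_closedBall (0 : ℝ × EuclideanSpace ℝ (Fin n)) T) |>.mono_set fun q hq => ?_
    have hq' : q.1 ^ 2 + ‖q.2‖ ^ 2 < T ^ 2 := hq
    rw [mem_closedBall_zero_iff, Prod.norm_def, max_le_iff]
    exact ⟨abs_le_of_sq_le_sq (by nlinarith) hT, by nlinarith⟩
  have houtside (s : ℝ) (hs : s ∉ Ioc (-T) T) : √(T ^ 2 - s ^ 2) = 0 := by
    rw [Real.sqrt_eq_zero', sub_nonpos, sq_le_sq, abs_of_nonneg hT, le_abs']
    by_contra! h
    exact hs ⟨h.1, h.2.le⟩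
  rw [hball, intervalIntegral.integral_of_le (by linarith)]
  refine ((measurePreserving_headTailEquiv n).setIntegral_preimage_emb
    (headTailEquiv n).measurableEmbedding (fun q => f q.1) U).trans ?_
  rw [Measure.volume_eq_prod, setIntegral_comp_fst hU hint]
  simp only [hslice, smul_eq_mul]
  exact (setIntegral_eq_integral_of_forall_compl_eq_zero fun s hs => by simp [houtside s hs]).symm

theorem hasDerivAt_integral_neg_self {f : ℝ → ℝ} (hf : Continuous f) (T : ℝ) :
    HasDerivAt (fun T => ∫ s in -T..T, f s) (f T + f (-T)) T := by
  have hprim (t : ℝ) : HasDerivAt (fun t => ∫ s in 0..t, f s) (f t) t :=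
    intervalIntegral.integral_hasDerivAt_right (hf.intervalIntegrable _ _)
      hf.stronglyMeasurable.stronglyMeasurableAtFilter hf.continuousAt
  have hsub : (fun T => ∫ s in -T..T, f s) =
      fun T => (∫ s in 0..T, f s) - ∫ s in 0..-T, f s := funext fun T =>
    (intervalIntegral.integral_interval_sub_left (hf.intervalIntegrable _ _)
      (hf.intervalIntegrable _ _)).symm
  rw [hsub]
  exact ((hprim T).sub ((hprim (-T)).comp T (hasDerivAt_neg T))).congr_deriv (by ring)

theorem setIntegral_ball_comp_apply_zero_three {f : ℝ → ℝ} (hf : Continuous f) {T : ℝ}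
    (hT : 0 ≤ T) :
    ∫ x in ball (0 : ℝ³) T, f (x 0) =
      π * (T ^ 2 * (∫ s in -T..T, f s) - ∫ s in -T..T, s ^ 2 * f s) := by
  have hdisc (s : ℝ) (hs : s ∈ uIcc (-T) T) :
      volume.real (ball (0 : EuclideanSpace ℝ (Fin 2)) √(T ^ 2 - s ^ 2)) * f s =
        π * (T ^ 2 * f s - s ^ 2 * f s) := by
    rw [uIcc_of_le (by linarith)] at hs
    have hsT : 0 ≤ T ^ 2 - s ^ 2 := by nlinarith [hs.1, hs.2]
    simp only [measureReal_def, EuclideanSpace.volume_ball_fin_two, ENNReal.toReal_mul,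
      ENNReal.toReal_pow, ENNReal.toReal_ofReal (sqrt_nonneg _), ENNReal.toReal_ofReal pi_pos.le,
      sq_sqrt hsT]
    ring
  rw [setIntegral_ball_comp_apply_zero hf hT, intervalIntegral.integral_congr hdisc,
    intervalIntegral.integral_const_mul, intervalIntegral.integral_sub
      (Continuous.intervalIntegrable (by fun_prop) _ _)
      (Continuous.intervalIntegrable (by fun_prop) _ _), intervalIntegral.integral_const_mul]

theorem integral_sphere_comp_apply_zero {f : ℝ → ℝ} (hf : Continuous f) :
    ∫ ω : 𝕊², f ((ω : ℝ³) 0) ∂σ₂ = 2 * π * ∫ c in (-1 : ℝ)..1, f c := by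
  have hball : HasDerivAt (fun T => ∫ x in ball (0 : ℝ³) T, f (x 0))
      (∫ ω : 𝕊², f ((ω : ℝ³) 0) ∂σ₂) 1 := hasDerivAt_setIntegral_ball_one volume (by fun_prop)
  have hslices := (((hasDerivAt_pow 2 (1 : ℝ)).mul (hasDerivAt_integral_neg_self hf 1)).sub
    (hasDerivAt_integral_neg_self (f := fun s => s ^ 2 * f s) (by fun_prop) 1)).const_mul π
  have heq := hball.unique <| hslices.congr_of_eventuallyEq <| by
    filter_upwards [lt_mem_nhds one_pos] with T hT
    exact setIntegral_ball_comp_apply_zero_three hf hT.le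
  rw [heq]
  ring

theorem exists_linearIsometryEquiv_apply_zero {n : ℕ} {θ : EuclideanSpace ℝ (Fin (n + 1))}
    (hθ : ‖θ‖ = 1) :
    ∃ A : EuclideanSpace ℝ (Fin (n + 1)) ≃ₗᵢ[ℝ] EuclideanSpace ℝ (Fin (n + 1)),
      ∀ x, A x 0 = ⟪x, θ⟫ := by
  obtain ⟨b, hb⟩ := Orthonormal.exists_orthonormalBasis_extension_of_card_eq (𝕜 := ℝ)
    (E := EuclideanSpace ℝ (Fin (n + 1))) (ι := Fin (n + 1)) (v := fun _ => θ) (s := {0}) (by simp)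
    ⟨fun _ => by simpa using hθ, fun i j hij => absurd (Subsingleton.elim i j) hij⟩
  refine ⟨b.repr, fun x => ?_⟩
  rw [b.repr_apply_apply, hb 0 rfl, real_inner_comm]

theorem integral_sphere_comp_inner {θ : ℝ³} (hθ : ‖θ‖ = 1) {f : ℝ → ℝ} (hf : Continuous f) :
    ∫ ω : 𝕊², f ⟪(ω : ℝ³), θ⟫ ∂σ₂ = 2 * π * ∫ c in (-1 : ℝ)..1, f c := by
  obtain ⟨A, hA⟩ := exists_linearIsometryEquiv_apply_zero hθ
  rw [← integral_sphere_comp_apply_zero hf,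
    ← integral_sphere_comp_linearIsometryEquiv A (f := fun x => f (x 0)) (by fun_prop)]
  simp only [hA]

theorem integral_sphere_inner_mul_comp_inner_eq_zero {E : Type*} [NormedAddCommGroup E]
    [InnerProductSpace ℝ E] [FiniteDimensional ℝ E] [Nontrivial E] [MeasurableSpace E]
    [BorelSpace E] {y θ : E} (hyθ : ⟪y, θ⟫ = 0) {f : ℝ → ℝ} (hf : Continuous f) :
    ∫ ω : sphere (0 : E) 1, ⟪(ω : E), y⟫ * f ⟪(ω : E), θ⟫ ∂(volume : Measure E).toSphere = 0 := by
  set A := (ℝ ∙ y)ᗮ.reflection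
  have hAy : A y = -y := Submodule.reflection_orthogonalComplement_singleton_eq_neg y
  have hAθ : A θ = θ := by
    rwa [Submodule.reflection_eq_self_iff, Submodule.mem_orthogonal_singleton_iff_inner_right]
  have hinner_y (x : E) : ⟪A x, y⟫ = -⟪x, y⟫ := by
    rw [← A.inner_map_map x y, hAy, inner_neg_right, neg_neg]
  have hinner_θ (x : E) : ⟪A x, θ⟫ = ⟪x, θ⟫ := by
    rw [← A.inner_map_map x θ, hAθ]
  have hodd := integral_sphere_comp_linearIsometryEquiv A
    (f := fun x => ⟪x, y⟫ * f ⟪x, θ⟫) (by fun_prop)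
  simp only [hinner_y, hinner_θ, neg_mul, integral_neg] at hodd
  linarith

theorem integral_sphere_sub_inner_mul_comp_inner {θ : ℝ³} (hθ : ‖θ‖ = 1) (y : ℝ³) (R : ℝ)
    {f : ℝ → ℝ} (hf : Continuous f) :
    ∫ ω : 𝕊², (R - ⟪(ω : ℝ³), y⟫) * f ⟪(ω : ℝ³), θ⟫ ∂σ₂ =
      2 * π * ∫ c in (-1 : ℝ)..1, (R - ⟪y, θ⟫ * c) * f c := by
  have hperp : ⟪y - ⟪y, θ⟫ • θ, θ⟫ = 0 := by
    simp [inner_sub_left, real_inner_smul_left, hθ]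
  have hsplit (ω : 𝕊²) : (R - ⟪(ω : ℝ³), y⟫) * f ⟪(ω : ℝ³), θ⟫ =
      (R - ⟪y, θ⟫ * ⟪(ω : ℝ³), θ⟫) * f ⟪(ω : ℝ³), θ⟫ -
        ⟪(ω : ℝ³), y - ⟪y, θ⟫ • θ⟫ * f ⟪(ω : ℝ³), θ⟫ := by
    rw [inner_sub_right, real_inner_smul_right]
    ring
  simp only [hsplit]
  rw [integral_sub, integral_sphere_inner_mul_comp_inner_eq_zero hperp hf, sub_zero,
    integral_sphere_comp_inner hθ (f := fun c => (R - ⟪y, θ⟫ * c) * f c) (by fun_prop)]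
  all_goals
    exact Continuous.integrable_of_hasCompactSupport (by fun_prop) (.of_compactSpace _)

end HatBox

section Lorentzian

open Set Module

/-- The Lorentzian profile; `π⁻¹ * δ⁻¹ * lorentzian (δ⁻¹ * s)` is the Poisson kernel of the upper
half-plane at height `δ`. -/
noncomputable def lorentzian (s : ℝ) : ℝ := (1 + s ^ 2)⁻¹

theorem lorentzian_pos (s : ℝ) : 0 < lorentzian s := by
  unfold lorentzian
  positivity

theorem lorentzian_neg (s : ℝ) : lorentzian (-s) = lorentzian s := by
  simp [lorentzian]

theorem contDiff_lorentzian : ContDiff ℝ 2 lorentzian :=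
  ContDiff.inv (by fun_prop) fun s => by positivity

theorem continuous_lorentzian : Continuous lorentzian :=
  contDiff_lorentzian.continuous

theorem integrable_lorentzian : Integrable lorentzian :=
  integrable_inv_one_add_sq

theorem hasDerivAt_lorentzian (s : ℝ) : HasDerivAt lorentzian (-2 * s * lorentzian s ^ 2) s := by
  have hden : HasDerivAt (fun s : ℝ => 1 + s ^ 2) (2 * s) s := by
    simpa using (hasDerivAt_pow 2 s).const_add 1
  refine (hden.inv (by positivity)).congr_deriv ?_
  rw [lorentzian]
  field_simp

theorem deriv_lorentzian : deriv lorentzian = fun s => -2 * s * lorentzian s ^ 2 :=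
  funext fun s => (hasDerivAt_lorentzian s).deriv

theorem tendsto_mul_lorentzian_cobounded :
    Tendsto (fun s => ‖s‖ * lorentzian s) (Bornology.cobounded ℝ) (𝓝 0) := by
  refine squeeze_zero' (.of_forall fun s => mul_nonneg (norm_nonneg _) (lorentzian_pos s).le) ?_
    (tendsto_inv_atTop_zero.comp tendsto_norm_cobounded_atTop)
  filter_upwards [Bornology.eventually_ne_cobounded (0 : ℝ)] with s hs
  have hs' : 0 < ‖s‖ := norm_pos_iff.2 hs
  rw [Function.comp_apply, lorentzian, ← sq_abs, ← Real.norm_eq_abs, ← div_eq_mul_inv,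
    div_le_iff₀ (by positivity)]
  field_simp
  linarith

theorem tendsto_setIntegral_mul_lorentzian {s : Set ℝ} (hs : MeasurableSet s) {r : ℝ}
    (hsr : s ∈ 𝓝 r) {g : ℝ → ℝ} (hg : IntegrableOn g s) (hgr : ContinuousAt g r) :
    Tendsto (fun δ => ∫ t in s, g t * (δ⁻¹ * lorentzian (δ⁻¹ * (t - r)))) (𝓝[>] 0)
      (𝓝 (π * g r)) := by
  have hcont : ContinuousAt (s.indicator g) r := hgr.congr <| by
    filter_upwards [hsr] with t ht
    rw [indicator_of_mem ht]
  have hpeak := tendsto_integral_comp_smul_smul_of_integrable' (μ := volume)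
    (φ := fun t => π⁻¹ * lorentzian t) (fun t => mul_nonneg (by positivity) (lorentzian_pos t).le)
    (by
      rw [integral_const_mul]
      exact (congrArg _ integral_univ_inv_one_add_sq).trans (inv_mul_cancel₀ pi_ne_zero))
    (by simpa [mul_left_comm] using tendsto_mul_lorentzian_cobounded.const_mul π⁻¹)
    (hg.integrable_indicator hs) hcont
  rw [indicator_of_mem (mem_of_mem_nhds hsr)] at hpeak
  refine ((hpeak.comp tendsto_inv_nhdsGT_zero).const_mul π).congr fun δ => ?_
  rw [← integral_indicator hs, Function.comp_apply, ← integral_const_mul]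
  congr with t
  by_cases ht : t ∈ s
  · have heven : lorentzian (δ⁻¹ * (r - t)) = lorentzian (δ⁻¹ * (t - r)) := by
      rw [← lorentzian_neg, ← mul_neg, neg_sub]
    simp only [indicator_of_mem ht, finrank_self, pow_one, smul_eq_mul, heven]
    field_simp
  · simp [ht]

theorem integral_rescaled_lorentzian {δ : ℝ} (hδ : 0 < δ) (r : ℝ) :
    ∫ t, δ⁻¹ * lorentzian (δ⁻¹ * (t - r)) = π := by
  rw [integral_sub_right_eq_self (fun t => δ⁻¹ * lorentzian (δ⁻¹ * t)), integral_const_mul,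
    Measure.integral_comp_mul_left, inv_inv, abs_of_pos hδ, smul_eq_mul,
    inv_mul_cancel_left₀ hδ.ne']
  exact integral_univ_inv_one_add_sq

theorem integrable_rescaled_lorentzian {δ : ℝ} (hδ : 0 < δ) (r : ℝ) :
    Integrable fun t => δ⁻¹ * lorentzian (δ⁻¹ * (t - r)) :=
  ((integrable_lorentzian.comp_mul_left' (inv_ne_zero hδ.ne')).comp_sub_right r).const_mul _

theorem norm_setIntegral_mul_lorentzian_le {g : ℝ → ℝ} {C : ℝ} (hC : ∀ t, ‖g t‖ ≤ C) (s : Set ℝ)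
    {δ : ℝ} (hδ : 0 < δ) (r : ℝ) :
    ‖∫ t in s, g t * (δ⁻¹ * lorentzian (δ⁻¹ * (t - r)))‖ ≤ C * π := by
  have hker (t : ℝ) : 0 ≤ δ⁻¹ * lorentzian (δ⁻¹ * (t - r)) :=
    mul_nonneg (by positivity) (lorentzian_pos _).le
  have hC0 : 0 ≤ C := (norm_nonneg _).trans (hC 0)
  have hint := (integrable_rescaled_lorentzian hδ r).const_mul C
  calc ‖∫ t in s, g t * (δ⁻¹ * lorentzian (δ⁻¹ * (t - r)))‖
      ≤ ∫ t in s, C * (δ⁻¹ * lorentzian (δ⁻¹ * (t - r))) := by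
        refine norm_integral_le_of_norm_le hint.integrableOn (.of_forall fun t => ?_)
        rw [norm_mul, Real.norm_of_nonneg (hker t)]
        exact mul_le_mul_of_nonneg_right (hC t) (hker t)
    _ ≤ ∫ t, C * (δ⁻¹ * lorentzian (δ⁻¹ * (t - r))) :=
        setIntegral_le_integral hint (.of_forall fun t => mul_nonneg hC0 (hker t))
    _ = C * π := by rw [integral_const_mul, integral_rescaled_lorentzian hδ]

theorem tendsto_integral_setIntegral_mul_lorentzian {X : Type*} [TopologicalSpace X]
    [MeasurableSpace X] [OpensMeasurableSpace X] {ν : Measure X} [IsFiniteMeasure ν]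
    {s : Set ℝ} (hs : MeasurableSet s) {G : X → ℝ → ℝ} (hG : Continuous (Function.uncurry G))
    (hsupp : HasCompactSupport (Function.uncurry G)) {r : X → ℝ} (hr : Continuous r)
    (hsr : ∀ x, s ∈ 𝓝 (r x)) :
    Tendsto (fun δ => ∫ x, (∫ t in s, G x t * (δ⁻¹ * lorentzian (δ⁻¹ * (t - r x)))) ∂ν) (𝓝[>] 0)
      (𝓝 (∫ x, π * G x (r x) ∂ν)) := by
  obtain ⟨C, hC⟩ := hsupp.exists_bound_of_continuous hG
  have hslice (x : X) : Continuous (G x) := by fun_prop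
  refine tendsto_integral_filter_of_dominated_convergence (fun _ => C * π) ?_ ?_
    (integrable_const _) (.of_forall fun x => ?_)
  · refine .of_forall fun δ => AEStronglyMeasurable.integral_prod_right' (ν := volume.restrict s)
      (f := fun q : X × ℝ => G q.1 q.2 * (δ⁻¹ * lorentzian (δ⁻¹ * (q.2 - r q.1)))) ?_
    have := continuous_lorentzian
    exact Continuous.aestronglyMeasurable (by fun_prop)
  · filter_upwards [self_mem_nhdsWithin] with δ hδ
    exact .of_forall fun x => norm_setIntegral_mul_lorentzian_le (fun t => hC (x, t)) s hδ (r x)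
  · have hx : HasCompactSupport (G x) := .of_support_subset_isCompact
      (hsupp.isCompact.image continuous_snd) fun t ht => ⟨(x, t), subset_closure ht, rfl⟩
    exact tendsto_setIntegral_mul_lorentzian hs (hsr x)
      ((hslice x).integrable_of_hasCompactSupport hx).integrableOn (hslice x).continuousAt

theorem integral_exp_neg_mul_cos {ε : ℝ} (hε : 0 < ε) (τ : ℝ) :
    ∫ k in Ioi (0 : ℝ), exp (-ε * k) * cos (k * τ) = ε⁻¹ * lorentzian (ε⁻¹ * τ) := by
  have hre : (-ε + τ * Complex.I : ℂ).re < 0 := by simpa using hε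
  have hcos (k : ℝ) : RCLike.re (Complex.exp ((-ε + τ * Complex.I) * k)) =
      exp (-ε * k) * cos (k * τ) := by
    simp [Complex.exp_re, mul_comm τ k]
  have hint := integral_re (integrableOn_exp_mul_complex_Ioi hre 0)
  simp only [hcos, integral_exp_mul_complex_Ioi hre] at hint
  have hvalue : RCLike.re (-Complex.exp ((-ε + τ * Complex.I) * (0 : ℝ)) / (-ε + τ * Complex.I)) =
      ε / (ε * ε + τ * τ) := by
    simp [Complex.div_re, Complex.normSq_apply]
  rw [hint, hvalue, lorentzian]
  field_simp

theorem integral_exp_neg_mul_integral_mul_cos {X : Type*} [MeasurableSpace X] {ν : Measure X}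
    [SFinite ν] {G τ : X → ℝ} (hG : Integrable G ν) (hτ : Measurable τ) {ε : ℝ} (hε : 0 < ε) :
    ∫ k in Ioi (0 : ℝ), exp (-ε * k) * ∫ x, G x * cos (k * τ x) ∂ν =
      ∫ x, G x * (ε⁻¹ * lorentzian (ε⁻¹ * τ x)) ∂ν := by
  have hint : Integrable (fun q : ℝ × X => exp (-ε * q.1) * (G q.2 * cos (q.1 * τ q.2)))
      ((volume.restrict (Ioi 0)).prod ν) := by
    have hexp : Integrable (fun k => exp (-ε * k)) (volume.restrict (Ioi 0)) :=
      exp_neg_integrableOn_Ioi 0 hε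
    have hcos : Measurable fun q : ℝ × X => cos (q.1 * τ q.2) := by fun_prop
    simpa only [mul_assoc] using (hexp.mul_prod hG).mul_bdd (c := 1) hcos.aestronglyMeasurable
      (.of_forall fun q => abs_cos_le_one _)
  simp only [← integral_const_mul, ← integral_exp_neg_mul_cos hε]
  rw [integral_integral_swap hint]
  simp only [mul_left_comm]

theorem integral_Ioi_lorentzian_mul {w : ℝ} (hw : 0 < w) :
    ∫ η in Ioi (0 : ℝ), lorentzian (η * w) = π / (2 * w) := by
  rw [integral_comp_mul_right_Ioi lorentzian 0 hw, zero_mul, smul_eq_mul]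
  simp only [lorentzian, integral_Ioi_inv_one_add_sq, arctan_zero]
  field_simp
  ring

theorem integrable_lorentzian_mul {w : ℝ} (hw : w ≠ 0) : Integrable fun η => lorentzian (η * w) :=
  integrable_lorentzian.comp_mul_right' hw

theorem lorentzian_mul_le {κ w : ℝ} (hκ : 0 < κ) (hκw : κ ≤ w) (η : ℝ) :
    lorentzian (η * w) ≤ lorentzian (η * κ) := by
  simp only [lorentzian, mul_pow]
  gcongr

theorem norm_mul_deriv_lorentzian_mul_le {κ w : ℝ} (hκ : 0 < κ) (hκw : κ ≤ w) (η : ℝ) :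
    ‖η * deriv lorentzian (η * w)‖ ≤ 2 / κ * lorentzian (η * κ) := by
  have hw : 0 < w := hκ.trans_le hκw
  have hlor : (η * w) ^ 2 * lorentzian (η * w) ≤ 1 := by
    rw [lorentzian, ← div_eq_mul_inv, div_le_one (by positivity)]
    linarith
  have hrewrite : η * deriv lorentzian (η * w) =
      -(2 / w * ((η * w) ^ 2 * lorentzian (η * w)) * lorentzian (η * w)) := by
    rw [deriv_lorentzian]
    field_simp
  have hpos := lorentzian_pos (η * w)
  rw [hrewrite, norm_neg, Real.norm_of_nonneg (by positivity)]
  calc 2 / w * ((η * w) ^ 2 * lorentzian (η * w)) * lorentzian (η * w)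
      ≤ 2 / w * 1 * lorentzian (η * w) := by gcongr
    _ ≤ 2 / κ * lorentzian (η * κ) := by
      rw [mul_one]
      exact mul_le_mul (by gcongr) (lorentzian_mul_le hκ hκw η) hpos.le (by positivity)

theorem integrable_mul_deriv_lorentzian_mul {w : ℝ} (hw : 0 < w) :
    Integrable fun η => η * deriv lorentzian (η * w) := by
  have hcont : Continuous fun η => η * deriv lorentzian (η * w) :=
    continuous_id.mul ((contDiff_lorentzian.continuous_deriv one_le_two).comp (by fun_prop))
  exact ((integrable_lorentzian_mul hw.ne').const_mul (2 / w)).mono' hcont.aestronglyMeasurable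
    (.of_forall fun η => norm_mul_deriv_lorentzian_mul_le hw le_rfl η)

theorem integral_Ioi_mul_deriv_lorentzian_mul {w : ℝ} (hw : 0 < w) :
    ∫ η in Ioi (0 : ℝ), η * deriv lorentzian (η * w) = -(π / (2 * w ^ 2)) := by
  have hderiv (η : ℝ) : HasDerivAt (fun η => η * lorentzian (η * w))
      (lorentzian (η * w) + w * (η * deriv lorentzian (η * w))) η := by
    have hlin : HasDerivAt (fun η => η * w) w η := by simpa using (hasDerivAt_id η).mul_const w
    refine ((hasDerivAt_id η).mul
      ((hasDerivAt_lorentzian (η * w)).differentiableAt.hasDerivAt.comp η hlin)).congr_deriv ?_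
    simp only [id, Function.comp_apply]
    ring
  have htop : Tendsto (fun η => η * lorentzian (η * w)) atTop (𝓝 0) := by
    have hnorm := (tendsto_mul_lorentzian_cobounded.mono_left
      IsOrderBornology.atTop_le_cobounded).comp (tendsto_id.atTop_mul_const hw)
    have hscaled := hnorm.const_mul w⁻¹
    rw [mul_zero] at hscaled
    refine hscaled.congr' ?_
    filter_upwards [eventually_ge_atTop 0] with η hη
    rw [Function.comp_apply, id, Real.norm_of_nonneg (by positivity)]
    field_simp
  have hint₁ := (integrable_lorentzian_mul hw.ne').integrableOn (s := Ioi 0)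
  have hint₂ := ((integrable_mul_deriv_lorentzian_mul hw).const_mul w).integrableOn (s := Ioi 0)
  have hftc := integral_Ioi_of_hasDerivAt_of_tendsto' (fun η _ => hderiv η) (hint₁.add hint₂) htop
  rw [integral_add hint₁ hint₂, integral_Ioi_lorentzian_mul hw, integral_const_mul] at hftc
  field_simp at hftc ⊢
  linarith

end Lorentzian

section BackprojectionKernel

open Set Metric

/-- The kernel against which the source is integrated, in polar coordinates `(θ, η)` centred at `y`
and rescaled by `δ`, when the data on the sphere of radius `R` are back-projected to `y`. Here `u`
stands for `⟪y, θ⟫` and `v` for `δ * η + 2 * u`. -/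
noncomputable def backprojectionKernel (R u v η : ℝ) : ℝ :=
  η ^ 2 * ∫ c in (-1 : ℝ)..1, (R - u * c) * deriv (deriv lorentzian) (η * (v - 2 * R * c))

theorem continuous_deriv_lorentzian : Continuous (deriv lorentzian) :=
  contDiff_lorentzian.continuous_deriv one_le_two

theorem contDiff_deriv_lorentzian : ContDiff ℝ 1 (deriv lorentzian) :=
  contDiff_lorentzian.deriv'

theorem continuous_deriv_deriv_lorentzian : Continuous (deriv (deriv lorentzian)) :=
  contDiff_deriv_lorentzian.continuous_deriv le_rfl

theorem deriv_lorentzian_neg (s : ℝ) : deriv lorentzian (-s) = -deriv lorentzian s := by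
  simp [deriv_lorentzian, lorentzian_neg]

theorem backprojectionKernel_eq {R : ℝ} (hR : R ≠ 0) (u v η : ℝ) :
    backprojectionKernel R u v η =
      (2 * R)⁻¹ * ((R - u) * (η * deriv lorentzian (η * (2 * R - v))) +
        (R + u) * (η * deriv lorentzian (η * (2 * R + v)))) +
      u / (4 * R ^ 2) * (lorentzian (η * (2 * R - v)) - lorentzian (η * (2 * R + v))) := by
  have hprim (c : ℝ) : HasDerivAt
      (fun c => u / (4 * R ^ 2) * lorentzian (η * (v - 2 * R * c)) -
        (2 * R)⁻¹ * η * ((R - u * c) * deriv lorentzian (η * (v - 2 * R * c))))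
      (η ^ 2 * ((R - u * c) * deriv (deriv lorentzian) (η * (v - 2 * R * c)))) c := by
    have harg : HasDerivAt (fun c => η * (v - 2 * R * c)) (-(2 * R * η)) c :=
      ((((hasDerivAt_id c).const_mul (2 * R)).const_sub v).const_mul η).congr_deriv (by ring)
    have hweight : HasDerivAt (fun c => R - u * c) (-u) c :=
      (((hasDerivAt_id c).const_mul u).const_sub R).congr_deriv (by ring)
    have hlor := (hasDerivAt_lorentzian (η * (v - 2 * R * c))).differentiableAt.hasDerivAt
    have hlor' := (contDiff_deriv_lorentzian.differentiable one_ne_zero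
      (η * (v - 2 * R * c))).hasDerivAt
    refine (((hlor.comp c harg).const_mul _).sub
      ((hweight.mul (hlor'.comp c harg)).const_mul _)).congr_deriv ?_
    simp only [Function.comp_apply]
    field_simp
    ring
  have hcont := continuous_deriv_deriv_lorentzian
  have hleft : η * (v - 2 * R * 1) = -(η * (2 * R - v)) := by ring
  have hright : η * (v - 2 * R * (-1)) = η * (2 * R + v) := by ring
  rw [backprojectionKernel, ← intervalIntegral.integral_const_mul,
    intervalIntegral.integral_eq_sub_of_hasDerivAt (fun c _ => hprim c)
      (Continuous.intervalIntegrable (by fun_prop) _ _), hleft, hright, deriv_lorentzian_neg,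
    lorentzian_neg]
  ring

theorem continuous_backprojectionKernel {R : ℝ} (hR : R ≠ 0) :
    Continuous fun q : ℝ × ℝ × ℝ => backprojectionKernel R q.1 q.2.1 q.2.2 := by
  have hlor := continuous_lorentzian
  have hlor' := continuous_deriv_lorentzian
  simp only [backprojectionKernel_eq hR]
  fun_prop

theorem norm_backprojectionKernel_le {R u v κ : ℝ} (hR : 0 < R) (hκ : 0 < κ) (hu : |u| ≤ R)
    (hv : |v| ≤ 2 * R - κ) (η : ℝ) :
    ‖backprojectionKernel R u v η‖ ≤ (2 / κ + (2 * R)⁻¹) * lorentzian (η * κ) := by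
  obtain ⟨hu₁, hu₂⟩ := abs_le.1 hu
  obtain ⟨hv₁, hv₂⟩ := abs_le.1 hv
  have hminus : κ ≤ 2 * R - v := by linarith
  have hplus : κ ≤ 2 * R + v := by linarith
  have hlor : |lorentzian (η * (2 * R - v)) - lorentzian (η * (2 * R + v))| ≤
      2 * lorentzian (η * κ) := by
    rw [abs_le]
    constructor <;>
      linarith [lorentzian_mul_le hκ hminus η, lorentzian_mul_le hκ hplus η,
        lorentzian_pos (η * (2 * R - v)), lorentzian_pos (η * (2 * R + v))]
  rw [backprojectionKernel_eq hR.ne']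
  calc ‖_‖ ≤ (2 * R)⁻¹ * ((R - u) * (2 / κ * lorentzian (η * κ)) +
        (R + u) * (2 / κ * lorentzian (η * κ))) + R / (4 * R ^ 2) * (2 * lorentzian (η * κ)) := by
        refine (norm_add_le _ _).trans (add_le_add ?_ ?_)
        · rw [norm_mul, Real.norm_of_nonneg (by positivity : 0 ≤ (2 * R)⁻¹)]
          gcongr
          refine (norm_add_le _ _).trans (add_le_add ?_ ?_)
          · rw [norm_mul, Real.norm_of_nonneg (by linarith : 0 ≤ R - u)]
            exact mul_le_mul_of_nonneg_left (norm_mul_deriv_lorentzian_mul_le hκ hminus η)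
              (by linarith)
          · rw [norm_mul, Real.norm_of_nonneg (by linarith : 0 ≤ R + u)]
            exact mul_le_mul_of_nonneg_left (norm_mul_deriv_lorentzian_mul_le hκ hplus η)
              (by linarith)
        · rw [norm_mul, norm_div, Real.norm_of_nonneg (by positivity : 0 ≤ 4 * R ^ 2)]
          exact mul_le_mul (by gcongr; exact hu) hlor (norm_nonneg _) (by positivity)
    _ = (2 / κ + (2 * R)⁻¹) * lorentzian (η * κ) := by
        field_simp
        ring

theorem integral_Ioi_backprojectionKernel_two_mul {R u : ℝ} (hu : |u| < R) :
    ∫ η in Ioi (0 : ℝ), backprojectionKernel R u (2 * u) η = -(π / (8 * R ^ 2)) := by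
  obtain ⟨hu₁, hu₂⟩ := abs_lt.1 hu
  have hR : 0 < R := by linarith
  have hadd_pos : 0 < R + u := by linarith
  have hminus : 0 < 2 * R - 2 * u := by linarith
  have hplus : 0 < 2 * R + 2 * u := by linarith
  have hlor {w : ℝ} (hw : 0 < w) := (integrable_lorentzian_mul hw.ne').integrableOn (s := Ioi 0)
  have hlor' {w : ℝ} (hw : 0 < w) :=
    (integrable_mul_deriv_lorentzian_mul hw).integrableOn (s := Ioi 0)
  have hsub : IntegrableOn (fun η => lorentzian (η * (2 * R - 2 * u)) -
      lorentzian (η * (2 * R + 2 * u))) (Ioi 0) := (hlor hminus).sub (hlor hplus)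
  have hadd : IntegrableOn (fun η => (R - u) * (η * deriv lorentzian (η * (2 * R - 2 * u))) +
      (R + u) * (η * deriv lorentzian (η * (2 * R + 2 * u)))) (Ioi 0) :=
    ((hlor' hminus).const_mul _).add ((hlor' hplus).const_mul _)
  simp only [backprojectionKernel_eq hR.ne']
  rw [integral_add (hadd.const_mul _) (hsub.const_mul _), integral_const_mul, integral_const_mul,
    integral_add ((hlor' hminus).const_mul _) ((hlor' hplus).const_mul _), integral_const_mul,
    integral_const_mul, integral_sub (hlor hminus) (hlor hplus),
    integral_Ioi_lorentzian_mul hminus, integral_Ioi_lorentzian_mul hplus,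
    integral_Ioi_mul_deriv_lorentzian_mul hminus, integral_Ioi_mul_deriv_lorentzian_mul hplus,
    ← mul_sub, ← mul_add]
  field_simp
  ring

theorem toSphere_real_univ_fin_three : Measure.real σ₂ univ = 4 * π := by
  have hball : volume.real (ball (0 : ℝ³) 1) = π * 4 / 3 := by
    rw [measureReal_def, EuclideanSpace.volume_ball_fin_three, ENNReal.ofReal_one, one_pow,
      one_mul, ENNReal.toReal_ofReal (by positivity)]
  rw [Measure.toSphere_real_apply_univ, hball, finrank_euclideanSpace_fin]
  push_cast
  ring

theorem hasCompactSupport_of_forall_le_norm {E F : Type*} [NormedAddCommGroup E] [ProperSpace E]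
    [Zero F] {f : E → F} {R : ℝ} (hf : ∀ z, R ≤ ‖z‖ → f z = 0) : HasCompactSupport f :=
  HasCompactSupport.intro (isCompact_closedBall 0 R) fun z hz =>
    hf z (le_of_lt (by simpa using hz))

theorem integral_mul_backprojectionKernel_two_mul {R : ℝ} {y : ℝ³} (hy : ‖y‖ < R) (a : ℝ)
    (hint : Integrable (fun q : 𝕊² × ℝ => a * backprojectionKernel R ⟪y, q.1⟫ (2 * ⟪y, q.1⟫) q.2)
      ((σ₂).prod (volume.restrict (Ioi 0)))) :
    ∫ q : 𝕊² × ℝ, a * backprojectionKernel R ⟪y, q.1⟫ (2 * ⟪y, q.1⟫) q.2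
      ∂(σ₂).prod (volume.restrict (Ioi 0)) = -(π ^ 2 / (2 * R ^ 2)) * a := by
  have hinner (θ : 𝕊²) : |⟪y, (θ : ℝ³)⟫| < R :=
    (abs_real_inner_le_norm y θ).trans_lt (by rwa [norm_eq_of_mem_sphere, mul_one])
  have hR : R ≠ 0 := ((norm_nonneg y).trans_lt hy).ne'
  simp only [integral_prod _ hint, integral_const_mul,
    integral_Ioi_backprojectionKernel_two_mul (hinner _), integral_const,
    toSphere_real_univ_fin_three, smul_eq_mul]
  field_simp
  ring

theorem norm_mul_backprojectionKernel_le {S : ℝ³ → ℝ} {R C : ℝ} (hC : ∀ z, ‖S z‖ ≤ C)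
    (hsupp : ∀ z, R ≤ ‖z‖ → S z = 0) {y : ℝ³} (hy : ‖y‖ < R) {θ : ℝ³} (hθ : ‖θ‖ = 1) (s η : ℝ) :
    ‖S (y + s • θ) * backprojectionKernel R ⟪y, θ⟫ (s + 2 * ⟪y, θ⟫) η‖ ≤
      C * ((2 / (R - ‖y‖) + (2 * R)⁻¹) * lorentzian (η * (R - ‖y‖))) := by
  have hR : 0 < R := (norm_nonneg y).trans_lt hy
  have hκ : 0 < R - ‖y‖ := by linarith
  have hyθ : |⟪y, θ⟫| ≤ ‖y‖ := (abs_real_inner_le_norm y θ).trans (by rw [hθ, mul_one])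
  have hC₀ : 0 ≤ C := (norm_nonneg _).trans (hC 0)
  have hlor := (lorentzian_pos (η * (R - ‖y‖))).le
  rcases le_or_gt R ‖y + s • θ‖ with hz | hz
  · rw [hsupp _ hz, zero_mul, norm_zero]
    positivity
  · have hzθ : |⟪y + s • θ, θ⟫| ≤ ‖y + s • θ‖ :=
      (abs_real_inner_le_norm _ θ).trans (by rw [hθ, mul_one])
    have hv : s + 2 * ⟪y, θ⟫ = ⟪y + s • θ, θ⟫ + ⟪y, θ⟫ := by
      rw [inner_add_left, real_inner_smul_left, real_inner_self_eq_norm_sq, hθ]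
      ring
    rw [norm_mul]
    refine mul_le_mul (hC _) (norm_backprojectionKernel_le hR hκ (by linarith) ?_ η)
      (norm_nonneg _) hC₀
    rw [hv]
    linarith [abs_add_le ⟪y + s • θ, θ⟫ ⟪y, θ⟫]

theorem tendsto_integral_mul_backprojectionKernel {S : ℝ³ → ℝ} (hS : Continuous S) {R : ℝ}
    (hsupp : ∀ z, R ≤ ‖z‖ → S z = 0) {y : ℝ³} (hy : ‖y‖ < R) :
    Tendsto (fun δ : ℝ => ∫ q : 𝕊² × ℝ, S (y + (δ * q.2) • (q.1 : ℝ³)) *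
        backprojectionKernel R ⟪y, q.1⟫ (δ * q.2 + 2 * ⟪y, q.1⟫) q.2
        ∂(σ₂).prod (volume.restrict (Ioi 0)))
      (𝓝[>] 0) (𝓝 (-(π ^ 2 / (2 * R ^ 2)) * S y)) := by
  obtain ⟨C, hC⟩ := hS.bounded_above_of_compact_support (hasCompactSupport_of_forall_le_norm hsupp)
  have hR : 0 < R := (norm_nonneg y).trans_lt hy
  have hκ : R - ‖y‖ ≠ 0 := by linarith
  have hker := continuous_backprojectionKernel hR.ne'
  have hbound (δ : ℝ) (q : 𝕊² × ℝ) :=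
    norm_mul_backprojectionKernel_le hC hsupp hy (norm_eq_of_mem_sphere q.1) (δ * q.2) q.2
  have hcont : Continuous fun w : ℝ × 𝕊² × ℝ => S (y + (w.1 * w.2.2) • (w.2.1 : ℝ³)) *
      backprojectionKernel R ⟪y, w.2.1⟫ (w.1 * w.2.2 + 2 * ⟪y, w.2.1⟫) w.2.2 :=
    (hS.comp (by fun_prop)).mul (hker.comp (g := fun w => _) (by fun_prop :
      Continuous fun w : ℝ × 𝕊² × ℝ =>
        ((⟪y, (w.2.1 : ℝ³)⟫, w.1 * w.2.2 + 2 * ⟪y, (w.2.1 : ℝ³)⟫, w.2.2) : ℝ × ℝ × ℝ)))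
  have hmeas (δ : ℝ) := (hcont.comp (Continuous.prodMk_right δ)).aestronglyMeasurable
    (μ := (σ₂).prod (volume.restrict (Ioi 0)))
  have hdom : Integrable (fun q : 𝕊² × ℝ =>
      C * ((2 / (R - ‖y‖) + (2 * R)⁻¹) * lorentzian (q.2 * (R - ‖y‖))))
      ((σ₂).prod (volume.restrict (Ioi 0))) :=
    (((integrable_lorentzian_mul hκ).integrableOn.const_mul _).const_mul _).comp_snd σ₂
  have hint₀ := hdom.mono' (hmeas 0) (ae_of_all _ (hbound 0))
  simp only [Function.comp_def, zero_mul, zero_smul, add_zero, zero_add] at hint₀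
  rw [← integral_mul_backprojectionKernel_two_mul hy _ hint₀]
  refine tendsto_integral_filter_of_dominated_convergence _ (Eventually.of_forall hmeas)
    (Eventually.of_forall fun δ => ae_of_all _ (hbound δ)) hdom (ae_of_all _ fun q => ?_)
  have hpoint := ((hcont.comp (Continuous.prodMk_left q)).tendsto 0).mono_left
    (nhdsWithin_le_nhds (s := Ioi 0))
  simpa only [Function.comp_def, zero_mul, zero_smul, add_zero, zero_add] using hpoint

end BackprojectionKernel

section SecondDerivSq

open Set

/-- The second derivative of `f : ℝ → ℝ` with respect to the variable `t ^ 2`, that is,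
`((1 / 2t) d/dt)² f`. Division by zero makes it vanish at `t = 0`. -/
noncomputable def secondDerivSq (f : ℝ → ℝ) (t : ℝ) : ℝ :=
  (t * deriv (deriv f) t - deriv f t) / (4 * t ^ 3)

theorem contDiff_uncurry_deriv {E F : Type*} [NormedAddCommGroup E] [NormedSpace ℝ E]
    [NormedAddCommGroup F] [NormedSpace ℝ F] {n : WithTop ℕ∞} {f : E → ℝ → F}
    (hf : ContDiff ℝ (n + 1) (Function.uncurry f)) :
    ContDiff ℝ n (Function.uncurry fun x => deriv (f x)) := by
  simpa only [fderiv_apply_one_eq_deriv, Function.uncurry_def] using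
    ContDiff.fderiv_apply (f := fun q : E × ℝ => f q.1) (k := fun _ => 1)
      (hf.comp (contDiff_fst.fst.prodMk contDiff_snd)) contDiff_snd contDiff_const le_rfl

theorem deriv_eq_zero_of_abs_notMem_Icc {F : Type*} [NormedAddCommGroup F] [NormedSpace ℝ F]
    {f : ℝ → F} {a b : ℝ} (hf : ∀ t, |t| ∉ Icc a b → f t = 0) :
    ∀ t, |t| ∉ Icc a b → deriv f t = 0 := by
  have hopen : IsOpen {t : ℝ | |t| ∉ Icc a b} := isClosed_Icc.isOpen_compl.preimage continuous_abs
  intro t ht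
  have heq : EqOn f (fun _ => 0) {t : ℝ | |t| ∉ Icc a b} := hf
  simpa using heq.deriv hopen ht

theorem hasCompactSupport_uncurry_of_abs_notMem_Icc {X : Type*} [TopologicalSpace X]
    [CompactSpace X] [R1Space X] {F : Type*} [Zero F] {f : X → ℝ → F} {a b : ℝ}
    (hf : ∀ x t, |t| ∉ Icc a b → f x t = 0) :
    HasCompactSupport (Function.uncurry f) := by
  refine HasCompactSupport.intro (isCompact_univ.prod (isCompact_Icc (a := -b) (b := b))) ?_
  rintro ⟨x, t⟩ hq
  exact hf x t fun ht => hq ⟨mem_univ x, abs_le.1 ht.2⟩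

theorem hasCompactSupport_of_abs_notMem_Icc {F : Type*} [Zero F] {f : ℝ → F} {a b : ℝ}
    (hf : ∀ t, |t| ∉ Icc a b → f t = 0) : HasCompactSupport f :=
  HasCompactSupport.intro (isCompact_Icc (a := -b) (b := b)) fun t ht =>
    hf t fun ht' => ht (abs_le.1 ht'.2)

theorem secondDerivSq_eq_zero {f : ℝ → ℝ} {a b : ℝ} (hf : ∀ t, |t| ∉ Icc a b → f t = 0) {t : ℝ}
    (ht : |t| ∉ Icc a b) : secondDerivSq f t = 0 := by
  have hf' := deriv_eq_zero_of_abs_notMem_Icc hf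
  rw [secondDerivSq, hf' t ht, deriv_eq_zero_of_abs_notMem_Icc hf' t ht, mul_zero, sub_zero,
    zero_div]

theorem continuous_uncurry_secondDerivSq {X : Type*} [TopologicalSpace X] {f : X → ℝ → ℝ}
    (hf' : Continuous (Function.uncurry fun x => deriv (f x)))
    (hf'' : Continuous (Function.uncurry fun x => deriv (deriv (f x)))) {a b : ℝ} (ha : 0 < a)
    (hsupp : ∀ x t, |t| ∉ Icc a b → f x t = 0) :
    Continuous (Function.uncurry fun x => secondDerivSq (f x)) := by
  -- `max (t ^ 2) (a ^ 2)` is `t ^ 2` where `f` need not vanish, and is never zero.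
  have heq : (Function.uncurry fun x => secondDerivSq (f x)) = fun q : X × ℝ =>
      q.2 * (q.2 * deriv (deriv (f q.1)) q.2 - deriv (f q.1) q.2) /
        (4 * max (q.2 ^ 2) (a ^ 2) ^ 2) := by
    funext ⟨x, t⟩
    have hdx := deriv_eq_zero_of_abs_notMem_Icc (hsupp x)
    by_cases ht : a ≤ |t|
    · have ht₀ : t ≠ 0 := abs_pos.1 (ha.trans_le ht)
      have hmax : max (t ^ 2) (a ^ 2) = t ^ 2 := max_eq_left (by rw [← sq_abs t]; gcongr)
      simp only [Function.uncurry_apply_pair, secondDerivSq, hmax]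
      field_simp
    · have ht' : |t| ∉ Icc a b := fun h => ht h.1
      simp only [Function.uncurry_apply_pair, secondDerivSq_eq_zero (hsupp x) ht', hdx t ht',
        deriv_eq_zero_of_abs_notMem_Icc hdx t ht', mul_zero, sub_zero, zero_div]
  rw [heq]
  refine Continuous.div (continuous_snd.mul ((continuous_snd.mul hf'').sub hf')) (by fun_prop)
    fun q => ?_
  have : 0 < max (q.2 ^ 2) (a ^ 2) := lt_max_of_lt_right (by positivity)
  positivity

theorem hasDerivAt_deriv_div_two_mul {f : ℝ → ℝ} (hf : ContDiff ℝ 2 f) {t : ℝ} (ht : t ≠ 0) :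
    HasDerivAt (fun t => deriv f t / (2 * t)) (2 * t * secondDerivSq f t) t := by
  have hf' : ContDiff ℝ 1 (deriv f) := hf.deriv'
  have hf'' := (hf'.differentiable one_ne_zero t).hasDerivAt
  refine (hf''.div ((hasDerivAt_id t).const_mul 2) (by simpa using ht)).congr_deriv ?_
  rw [secondDerivSq]
  simp only [id_eq]
  field_simp
  ring

theorem continuous_secondDerivSq {f : ℝ → ℝ} (hf : ContDiff ℝ 2 f) {a b : ℝ} (ha : 0 < a)
    (hsupp : ∀ t, |t| ∉ Icc a b → f t = 0) : Continuous (secondDerivSq f) := by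
  have hf' : ContDiff ℝ 1 (deriv f) := hf.deriv'
  exact (continuous_uncurry_secondDerivSq (f := fun _ : Unit => f)
    (hf'.continuous.comp continuous_snd) ((hf'.continuous_deriv le_rfl).comp continuous_snd) ha
      fun _ => hsupp).comp (Continuous.prodMk_right ())

theorem integral_Ioi_eq_zero_of_hasDerivAt {E : Type*} [NormedAddCommGroup E] [NormedSpace ℝ E]
    [CompleteSpace E] {g g' : ℝ → E} {a b : ℝ} (ha : 0 < a) (hg : ∀ t, |t| ∉ Icc a b → g t = 0)
    (hderiv : ∀ t ∈ Ioi 0, HasDerivAt g (g' t) t) (hint : IntegrableOn g' (Ioi 0)) :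
    ∫ t in Ioi 0, g' t = 0 := by
  have hnear : g =ᶠ[𝓝 0] fun _ => 0 := by
    filter_upwards [Metric.ball_mem_nhds (0 : ℝ) ha] with t ht
    exact hg t fun h => (not_lt.2 h.1) (by simpa using ht)
  have hfar : g =ᶠ[atTop] fun _ => 0 := by
    filter_upwards [eventually_gt_atTop b] with t ht
    exact hg t fun h => (not_lt.2 h.2) (ht.trans_le (le_abs_self t))
  rw [integral_Ioi_of_hasDerivAt_of_tendsto
    (continuousAt_const.congr hnear.symm).continuousWithinAt hderiv hint
      (tendsto_const_nhds.congr' hfar.symm), hnear.self_of_nhds, sub_zero]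

theorem hasDerivAt_deriv_div_mul_comp_sq_sub {f ψ : ℝ → ℝ} (hf : ContDiff ℝ 2 f)
    (hψ : ContDiff ℝ 2 ψ) {t : ℝ} (ht : t ≠ 0) :
    HasDerivAt (fun t => deriv f t / (2 * t) * ψ (t ^ 2) - f t * deriv ψ (t ^ 2))
      (2 * t * secondDerivSq f t * ψ (t ^ 2) - 2 * t * f t * deriv (deriv ψ) (t ^ 2)) t := by
  have hψ' : ContDiff ℝ 1 (deriv ψ) := hψ.deriv'
  have hsq : HasDerivAt (fun t : ℝ => t ^ 2) (2 * t) t := by simpa using hasDerivAt_pow 2 t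
  have hψt := ((hψ.differentiable two_ne_zero (t ^ 2)).hasDerivAt).comp t hsq
  have hψ't := ((hψ'.differentiable one_ne_zero (t ^ 2)).hasDerivAt).comp t hsq
  have hft := (hf.differentiable two_ne_zero t).hasDerivAt
  refine (((hasDerivAt_deriv_div_two_mul hf ht).mul hψt).sub (hft.mul hψ't)).congr_deriv ?_
  simp only [Function.comp_apply]
  field_simp
  ring

theorem integral_Ioi_secondDerivSq_mul_comp_sq {f : ℝ → ℝ} (hf : ContDiff ℝ 2 f) {a b : ℝ}
    (ha : 0 < a) (hsupp : ∀ t, |t| ∉ Icc a b → f t = 0) {ψ : ℝ → ℝ} (hψ : ContDiff ℝ 2 ψ) :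
    ∫ t in Ioi (0 : ℝ), 2 * t * secondDerivSq f t * ψ (t ^ 2) =
      ∫ t in Ioi (0 : ℝ), 2 * t * f t * deriv (deriv ψ) (t ^ 2) := by
  have hsq := continuous_secondDerivSq hf ha hsupp
  have hint₁ : Integrable fun t => 2 * t * secondDerivSq f t * ψ (t ^ 2) :=
    (by fun_prop : Continuous _).integrable_of_hasCompactSupport
      (hasCompactSupport_of_abs_notMem_Icc fun t => secondDerivSq_eq_zero hsupp).mul_left.mul_right
  have hint₂ : Integrable fun t => 2 * t * f t * deriv (deriv ψ) (t ^ 2) :=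
    (by fun_prop : Continuous _).integrable_of_hasCompactSupport
      (hasCompactSupport_of_abs_notMem_Icc hsupp).mul_left.mul_right
  have hzero (t : ℝ) (ht : |t| ∉ Icc a b) :
      deriv f t / (2 * t) * ψ (t ^ 2) - f t * deriv ψ (t ^ 2) = 0 := by
    rw [hsupp t ht, deriv_eq_zero_of_abs_notMem_Icc hsupp t ht, zero_div, zero_mul, zero_mul,
      sub_zero]
  rw [← sub_eq_zero, ← integral_sub hint₁.integrableOn hint₂.integrableOn]
  exact integral_Ioi_eq_zero_of_hasDerivAt ha hzero
    (fun t ht => hasDerivAt_deriv_div_mul_comp_sq_sub hf hψ (ne_of_gt ht))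
    (hint₁.sub hint₂).integrableOn

theorem integral_Ioi_two_mul_comp_sq (f : ℝ → ℝ → ℝ) :
    ∫ t in Ioi (0 : ℝ), 2 * t * f t (t ^ 2) = ∫ q in Ioi (0 : ℝ), f (√q) q := by
  rw [← integral_comp_rpow_Ioi_of_pos (g := fun q => f (√q) q) two_pos]
  refine setIntegral_congr_fun measurableSet_Ioi fun t ht => ?_
  have ht₀ : 0 ≤ t := le_of_lt ht
  norm_num [sqrt_sq ht₀]

end SecondDerivSq

section Kirchhoff

open Set Metric

/-- Kirchhoff's formula for the solution at `(x, t)` of the wave equation in `ℝ³` with initial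
displacement `0` and initial velocity `S`; for `t < 0` it is the odd continuation in time. -/
noncomputable def kirchhoff (S : ℝ³ → ℝ) (x : ℝ³) (t : ℝ) : ℝ :=
  t / (4 * π) * ∫ ω : 𝕊², S (x + t • (ω : ℝ³)) ∂σ₂

variable {S : ℝ³ → ℝ} {R ρ : ℝ}

theorem contDiff_kirchhoff {n : ℕ} (hS : ContDiff ℝ n S) :
    ContDiff ℝ n (Function.uncurry (kirchhoff S)) :=
  ContDiff.mul (by fun_prop) (contDiff_integral
    (g := fun q : (ℝ³ × ℝ) × ℝ³ => S (q.1.1 + q.1.2 • q.2)) (hS.comp (by fun_prop))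
      continuous_subtype_val)

theorem contDiff_kirchhoff_right (hS : ContDiff ℝ 2 S) (x : ℝ³) : ContDiff ℝ 2 (kirchhoff S x) :=
  (contDiff_kirchhoff hS).comp (contDiff_prodMk_right x)

theorem continuous_deriv_kirchhoff (hS : ContDiff ℝ 2 S) (R : ℝ) :
    Continuous (Function.uncurry fun ω : 𝕊² => deriv (kirchhoff S (R • (ω : ℝ³)))) :=
  (contDiff_uncurry_deriv (n := 1) (contDiff_kirchhoff hS)).continuous.comp
    (by fun_prop : Continuous fun q : 𝕊² × ℝ => (R • (q.1 : ℝ³), q.2))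

theorem continuous_deriv_deriv_kirchhoff (hS : ContDiff ℝ 2 S) (R : ℝ) :
    Continuous (Function.uncurry fun ω : 𝕊² => deriv (deriv (kirchhoff S (R • (ω : ℝ³))))) :=
  (contDiff_uncurry_deriv (n := 0)
    (contDiff_uncurry_deriv (n := 1) (contDiff_kirchhoff hS))).continuous.comp
      (by fun_prop : Continuous fun q : 𝕊² × ℝ => (R • (q.1 : ℝ³), q.2))

theorem norm_smul_coe_sphere {E : Type*} [NormedAddCommGroup E] [NormedSpace ℝ E] (hR : 0 ≤ R)
    (ω : sphere (0 : E) 1) : ‖R • (ω : E)‖ = R := by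
  rw [norm_smul, norm_eq_of_mem_sphere, mul_one, Real.norm_of_nonneg hR]

theorem kirchhoff_eq_zero (hsupp : ∀ z, ρ ≤ ‖z‖ → S z = 0) {x : ℝ³} {t : ℝ}
    (ht : |t| ∉ Icc (‖x‖ - ρ) (‖x‖ + ρ)) : kirchhoff S x t = 0 := by
  have hS (ω : 𝕊²) : S (x + t • (ω : ℝ³)) = 0 := by
    refine hsupp _ ?_
    have hnorm : ‖t • (ω : ℝ³)‖ = |t| := by
      rw [norm_smul, norm_eq_of_mem_sphere, mul_one, Real.norm_eq_abs]
    have hx := norm_sub_le (x + t • (ω : ℝ³)) (t • (ω : ℝ³))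
    have ht' := norm_sub_le (x + t • (ω : ℝ³)) x
    rw [add_sub_cancel_right, hnorm] at hx
    rw [add_sub_cancel_left, hnorm] at ht'
    rw [mem_Icc, not_and_or, not_le, not_le] at ht
    rcases ht with ht | ht <;> linarith
  simp only [kirchhoff, hS, integral_zero, mul_zero]

theorem integral_Ioi_kirchhoff_mul_comp_sq (hS : Continuous S) (hcpt : HasCompactSupport S)
    {ψ : ℝ → ℝ} (hψ : Continuous ψ) (x : ℝ³) :
    ∫ t in Ioi (0 : ℝ), 2 * t * kirchhoff S x t * ψ (t ^ 2) =
      (2 * π)⁻¹ * ∫ z, S z * ψ (‖z - x‖ ^ 2) := by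
  have hint : Integrable fun w : ℝ³ => S (x + w) * ψ (‖w‖ ^ 2) :=
    (by fun_prop : Continuous _).integrable_of_hasCompactSupport
      (hcpt.comp_homeomorph (Homeomorph.addLeft x)).mul_right
  have htranslate : ∫ z, S z * ψ (‖z - x‖ ^ 2) = ∫ w, S (x + w) * ψ (‖w‖ ^ 2) := by
    rw [← integral_add_left_eq_self _ x]
    simp only [add_sub_cancel_left]
  rw [htranslate, integral_eq_integral_Ioi_integral_sphere volume hint, ← integral_const_mul]
  refine setIntegral_congr_fun measurableSet_Ioi fun t ht => ?_
  have ht₀ : 0 ≤ t := le_of_lt ht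
  simp only [kirchhoff, norm_smul_coe_sphere ht₀, integral_mul_const, finrank_euclideanSpace_fin,
    Nat.reduceSub, smul_eq_mul]
  field_simp
  ring

end Kirchhoff

section BackprojectionFormula

open Set Metric

variable {S : ℝ³ → ℝ} {R ρ : ℝ}

theorem contDiff_rescaled_lorentzian (δ c : ℝ) :
    ContDiff ℝ 2 fun q => δ⁻¹ * lorentzian (δ⁻¹ * (q - c)) :=
  contDiff_const.mul (contDiff_lorentzian.comp (by fun_prop))

theorem deriv_deriv_rescaled_lorentzian (δ c q : ℝ) :
    deriv (deriv fun q => δ⁻¹ * lorentzian (δ⁻¹ * (q - c))) q =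
      (δ ^ 3)⁻¹ * deriv (deriv lorentzian) (δ⁻¹ * (q - c)) := by
  have hchain (g : ℝ → ℝ) :
      deriv (fun q => g (δ⁻¹ * (q - c))) = fun q => δ⁻¹ * deriv g (δ⁻¹ * (q - c)) := by
    funext q
    rw [deriv_comp_sub_const (f := fun q => g (δ⁻¹ * q)), deriv_comp_mul_left, smul_eq_mul]
  simp only [deriv_const_mul_field', hchain]
  ring

theorem integral_Ioi_secondDerivSq_kirchhoff_mul_lorentzian (hS : ContDiff ℝ 2 S)
    (hsupp : ∀ z, ρ ≤ ‖z‖ → S z = 0) {x : ℝ³} (hx : ρ < ‖x‖) (δ c : ℝ) :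
    ∫ q in Ioi (0 : ℝ), secondDerivSq (kirchhoff S x) √q * (δ⁻¹ * lorentzian (δ⁻¹ * (q - c))) =
      (2 * π * δ ^ 3)⁻¹ * ∫ z, S z * deriv (deriv lorentzian) (δ⁻¹ * (‖z - x‖ ^ 2 - c)) := by
  have hlor := continuous_deriv_deriv_lorentzian
  calc ∫ q in Ioi (0 : ℝ), secondDerivSq (kirchhoff S x) √q * (δ⁻¹ * lorentzian (δ⁻¹ * (q - c)))
    _ = ∫ t in Ioi (0 : ℝ), 2 * t * secondDerivSq (kirchhoff S x) t *
          (δ⁻¹ * lorentzian (δ⁻¹ * (t ^ 2 - c))) := by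
        simpa only [mul_assoc] using (integral_Ioi_two_mul_comp_sq fun t q =>
          secondDerivSq (kirchhoff S x) t * (δ⁻¹ * lorentzian (δ⁻¹ * (q - c)))).symm
    _ = ∫ t in Ioi (0 : ℝ), 2 * t * kirchhoff S x t *
          ((δ ^ 3)⁻¹ * deriv (deriv lorentzian) (δ⁻¹ * (t ^ 2 - c))) := by
        rw [integral_Ioi_secondDerivSq_mul_comp_sq (contDiff_kirchhoff_right hS x) (sub_pos.2 hx)
          (fun t => kirchhoff_eq_zero hsupp) (contDiff_rescaled_lorentzian δ c)]
        simp only [deriv_deriv_rescaled_lorentzian]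
    _ = (2 * π)⁻¹ * ∫ z, (δ ^ 3)⁻¹ *
          (S z * deriv (deriv lorentzian) (δ⁻¹ * (‖z - x‖ ^ 2 - c))) := by
        rw [integral_Ioi_kirchhoff_mul_comp_sq hS.continuous
          (hasCompactSupport_of_forall_le_norm hsupp)
          (by fun_prop : Continuous fun q => (δ ^ 3)⁻¹ * deriv (deriv lorentzian) (δ⁻¹ * (q - c)))]
        simp only [mul_left_comm]
    _ = (2 * π * δ ^ 3)⁻¹ * ∫ z, S z * deriv (deriv lorentzian) (δ⁻¹ * (‖z - x‖ ^ 2 - c)) := by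
        rw [integral_const_mul, mul_inv (2 * π), mul_assoc]

theorem integral_eq_pow_smul_integral_add_smul {E F : Type*} [NormedAddCommGroup E]
    [NormedSpace ℝ E] [FiniteDimensional ℝ E] [MeasurableSpace E] [BorelSpace E]
    [NormedAddCommGroup F] [NormedSpace ℝ F] (μ : Measure E) [μ.IsAddHaarMeasure] (f : E → F)
    (y : E) {δ : ℝ} (hδ : 0 < δ) :
    ∫ z, f z ∂μ = δ ^ Module.finrank ℝ E • ∫ w, f (y + δ • w) ∂μ := by
  rw [Measure.integral_comp_smul μ (fun z => f (y + z)), integral_add_left_eq_self,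
    abs_of_pos (by positivity), smul_inv_smul₀ (by positivity)]

theorem inv_mul_norm_sq_sub_norm_sq {E : Type*} [NormedAddCommGroup E] [InnerProductSpace ℝ E]
    (y ω : E) {θ : E} (hθ : ‖θ‖ = 1) (R η : ℝ) {δ : ℝ} (hδ : δ ≠ 0) :
    δ⁻¹ * (‖y + δ • η • θ - R • ω‖ ^ 2 - ‖R • ω - y‖ ^ 2) =
      η * (δ * η + 2 * ⟪y, θ⟫ - 2 * R * ⟪ω, θ⟫) := by
  have hexpand : ‖y + δ • η • θ - R • ω‖ ^ 2 =
      ‖R • ω - y‖ ^ 2 + 2 * (δ * η * (⟪y, θ⟫ - R * ⟪ω, θ⟫)) + (δ * η) ^ 2 := by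
    have hsplit : y + δ • η • θ - R • ω = -(R • ω - y) + (δ * η) • θ := by
      rw [mul_smul]
      abel
    rw [hsplit, norm_add_sq_real, norm_neg, norm_smul, hθ, mul_one, Real.norm_eq_abs, sq_abs,
      real_inner_smul_right, inner_neg_left, inner_sub_left, real_inner_smul_left]
    ring
  rw [hexpand]
  field_simp
  ring

theorem sq_mul_integral_sphere_eq_backprojectionKernel (R : ℝ) (y : ℝ³) {θ : ℝ³} (hθ : ‖θ‖ = 1)
    (η : ℝ) {δ : ℝ} (hδ : δ ≠ 0) :
    η ^ 2 * ∫ ω : 𝕊², (R - ⟪(ω : ℝ³), y⟫) * deriv (deriv lorentzian)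
        (δ⁻¹ * (‖y + δ • η • θ - R • (ω : ℝ³)‖ ^ 2 - ‖R • (ω : ℝ³) - y‖ ^ 2)) ∂σ₂ =
      2 * π * backprojectionKernel R ⟪y, θ⟫ (δ * η + 2 * ⟪y, θ⟫) η := by
  have hlor := continuous_deriv_deriv_lorentzian
  simp only [inv_mul_norm_sq_sub_norm_sq y _ hθ R η hδ]
  rw [integral_sphere_sub_inner_mul_comp_inner hθ y R (f := fun c =>
    deriv (deriv lorentzian) (η * (δ * η + 2 * ⟪y, θ⟫ - 2 * R * c))) (by fun_prop),
    backprojectionKernel]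
  ring

theorem integral_mul_integral_swap {X Y : Type*} [TopologicalSpace X] [CompactSpace X]
    [T2Space X] [SecondCountableTopology X] [MeasurableSpace X] [OpensMeasurableSpace X]
    {ν : Measure X} [IsFiniteMeasure ν] [TopologicalSpace Y] [T2Space Y]
    [SecondCountableTopology Y] [MeasurableSpace Y] [OpensMeasurableSpace Y] {μ : Measure Y}
    [IsFiniteMeasureOnCompacts μ] [SFinite μ] {w : X → ℝ} {f : Y → ℝ} {K : Y → X → ℝ}
    (hw : Continuous w) (hf : Continuous f) (hcpt : HasCompactSupport f)
    (hK : Continuous (Function.uncurry K)) :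
    ∫ x, w x * (∫ y, f y * K y x ∂μ) ∂ν = ∫ y, f y * (∫ x, w x * K y x ∂ν) ∂μ := by
  have hcpt' : HasCompactSupport fun q : X × Y => w q.1 * (f q.2 * K q.2 q.1) := by
    refine HasCompactSupport.intro (isCompact_univ.prod hcpt) fun q hq => ?_
    rw [image_eq_zero_of_notMem_tsupport fun h => hq ⟨mem_univ q.1, h⟩, zero_mul, mul_zero]
  have hint : Integrable (fun q : X × Y => w q.1 * (f q.2 * K q.2 q.1)) (ν.prod μ) :=
    (by fun_prop : Continuous _).integrable_of_hasCompactSupport hcpt'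
  simp only [← integral_const_mul]
  rw [integral_integral_swap hint]
  simp only [mul_left_comm]

theorem integral_sphere_secondDerivSq_kirchhoff_mul_lorentzian (hS : ContDiff ℝ 2 S)
    (hsupp : ∀ z, ρ ≤ ‖z‖ → S z = 0) (hR : 0 ≤ R) (hρ : ρ < R) (y : ℝ³) {δ : ℝ} (hδ : 0 < δ) :
    ∫ ω : 𝕊², (∫ q in Ioi (0 : ℝ), (R - ⟪(ω : ℝ³), y⟫) *
        secondDerivSq (kirchhoff S (R • (ω : ℝ³))) √q *
          (δ⁻¹ * lorentzian (δ⁻¹ * (q - ‖R • (ω : ℝ³) - y‖ ^ 2)))) ∂σ₂ =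
      ∫ q : 𝕊² × ℝ, S (y + (δ * q.2) • (q.1 : ℝ³)) *
        backprojectionKernel R ⟪y, q.1⟫ (δ * q.2 + 2 * ⟪y, q.1⟫) q.2
        ∂(σ₂).prod (volume.restrict (Ioi 0)) := by
  have hlor := continuous_deriv_deriv_lorentzian
  have hx (ω : 𝕊²) : ρ < ‖R • (ω : ℝ³)‖ := by rwa [norm_smul_coe_sphere hR]
  set M : ℝ³ → ℝ := fun z => ∫ ω : 𝕊², (R - ⟪(ω : ℝ³), y⟫) * deriv (deriv lorentzian)
    (δ⁻¹ * (‖z - R • (ω : ℝ³)‖ ^ 2 - ‖R • (ω : ℝ³) - y‖ ^ 2)) ∂σ₂ with hM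
  calc _ = ∫ ω : 𝕊², (2 * π * δ ^ 3)⁻¹ * ((R - ⟪(ω : ℝ³), y⟫) * ∫ z, S z *
          deriv (deriv lorentzian)
            (δ⁻¹ * (‖z - R • (ω : ℝ³)‖ ^ 2 - ‖R • (ω : ℝ³) - y‖ ^ 2))) ∂σ₂ := by
        simp only [mul_assoc (R - _), integral_const_mul,
          integral_Ioi_secondDerivSq_kirchhoff_mul_lorentzian hS hsupp (hx _),
          mul_left_comm (R - _) (2 * π * δ ^ 3)⁻¹]
    _ = (2 * π * δ ^ 3)⁻¹ * ∫ z, S z * M z := by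
        rw [integral_const_mul, integral_mul_integral_swap (by fun_prop) hS.continuous
          (hasCompactSupport_of_forall_le_norm hsupp) (by fun_prop)]
    _ = (2 * π)⁻¹ * ∫ w, S (y + δ • w) * M (y + δ • w) := by
        rw [integral_eq_pow_smul_integral_add_smul volume _ y hδ, finrank_euclideanSpace_fin,
          smul_eq_mul]
        field_simp
    _ = _ := by
        rw [integral_eq_integral_sphere_prod_Ioi, ← integral_const_mul]
        refine integral_congr_ae (ae_of_all _ fun q => ?_)
        have hker := sq_mul_integral_sphere_eq_backprojectionKernel R y
          (norm_eq_of_mem_sphere q.1) q.2 hδ.ne'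
        simp only [finrank_euclideanSpace_fin, Nat.reduceSub, smul_eq_mul, mul_smul]
        rw [mul_left_comm (q.2 ^ 2), hM, hker]
        field_simp

theorem norm_smul_coe_sphere_sub_pos {E : Type*} [NormedAddCommGroup E] [NormedSpace ℝ E] {y : E}
    (hy : ‖y‖ < R) (ω : sphere (0 : E) 1) : 0 < ‖R • (ω : E) - y‖ := by
  have hdist := norm_sub_norm_le (R • (ω : E)) y
  rw [norm_smul_coe_sphere ((norm_nonneg y).trans hy.le)] at hdist
  linarith

theorem kirchhoff_smul_coe_sphere_eq_zero (hsupp : ∀ z, ρ ≤ ‖z‖ → S z = 0) (hR : 0 ≤ R) (ω : 𝕊²)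
    (t : ℝ) (ht : |t| ∉ Icc (R - ρ) (R + ρ)) : kirchhoff S (R • (ω : ℝ³)) t = 0 :=
  kirchhoff_eq_zero hsupp (by rwa [norm_smul_coe_sphere hR])

theorem continuous_secondDerivSq_kirchhoff (hS : ContDiff ℝ 2 S) (hsupp : ∀ z, ρ ≤ ‖z‖ → S z = 0)
    (hR : 0 ≤ R) (hρ : ρ < R) :
    Continuous (Function.uncurry fun ω : 𝕊² => secondDerivSq (kirchhoff S (R • (ω : ℝ³)))) :=
  continuous_uncurry_secondDerivSq (continuous_deriv_kirchhoff hS R)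
    (continuous_deriv_deriv_kirchhoff hS R) (sub_pos.2 hρ)
    (kirchhoff_smul_coe_sphere_eq_zero hsupp hR)

theorem abs_sqrt_notMem_Icc {a b q : ℝ} (ha : 0 < a) (hq : |q| ∉ Icc (a ^ 2) (b ^ 2)) :
    |√q| ∉ Icc a b := by
  rw [abs_of_nonneg (sqrt_nonneg q)]
  rintro ⟨haq, hqb⟩
  have hq₀ : 0 < q := sqrt_pos.1 (ha.trans_le haq)
  rw [abs_of_pos hq₀] at hq
  exact hq ⟨(le_sqrt' ha).1 haq, (sqrt_le_left (ha.le.trans (haq.trans hqb))).1 hqb⟩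

theorem integral_sphere_secondDerivSq_kirchhoff (hS : ContDiff ℝ 2 S)
    (hsupp : ∀ z, ρ ≤ ‖z‖ → S z = 0) (hρ : ρ < R) {y : ℝ³} (hy : ‖y‖ < R) :
    ∫ ω : 𝕊², (R - ⟪(ω : ℝ³), y⟫) *
      secondDerivSq (kirchhoff S (R • (ω : ℝ³))) ‖R • (ω : ℝ³) - y‖ ∂σ₂ =
        -(π / (2 * R ^ 2)) * S y := by
  have hR : 0 ≤ R := (norm_nonneg y).trans hy.le
  have hsq := continuous_secondDerivSq_kirchhoff hS hsupp hR hρ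
  have hG : Continuous (Function.uncurry fun (ω : 𝕊²) q =>
      (R - ⟪(ω : ℝ³), y⟫) * secondDerivSq (kirchhoff S (R • (ω : ℝ³))) √q) :=
    (by fun_prop : Continuous fun q : 𝕊² × ℝ => R - ⟪(q.1 : ℝ³), y⟫).mul
      (hsq.comp (by fun_prop : Continuous fun q : 𝕊² × ℝ => (q.1, √q.2)))
  have hcpt := hasCompactSupport_uncurry_of_abs_notMem_Icc (f := fun (ω : 𝕊²) q =>
      (R - ⟪(ω : ℝ³), y⟫) * secondDerivSq (kirchhoff S (R • (ω : ℝ³))) √q) fun ω q hq => by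
    rw [secondDerivSq_eq_zero (kirchhoff_smul_coe_sphere_eq_zero hsupp hR ω)
      (abs_sqrt_notMem_Icc (sub_pos.2 hρ) hq), mul_zero]
  have hpeak := tendsto_integral_setIntegral_mul_lorentzian (ν := σ₂) measurableSet_Ioi hG hcpt
    (r := fun ω => ‖R • (ω : ℝ³) - y‖ ^ 2) (by fun_prop)
    fun ω => Ioi_mem_nhds (pow_pos (norm_smul_coe_sphere_sub_pos hy ω) 2)
  have hsource := tendsto_integral_mul_backprojectionKernel hS.continuous
    (fun z hz => hsupp z (hρ.le.trans hz)) hy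
  have hlim := tendsto_nhds_unique hpeak (hsource.congr' ?_)
  · simp only [sqrt_sq (norm_nonneg _), integral_const_mul] at hlim
    apply mul_left_cancel₀ pi_ne_zero
    rw [hlim]
    ring
  · filter_upwards [self_mem_nhdsWithin] with δ hδ
    exact (integral_sphere_secondDerivSq_kirchhoff_mul_lorentzian hS hsupp hR hρ y hδ).symm

end BackprojectionFormula

section FrequencyDomain

open Set Metric

/-- The Fourier transform `∫ t in Ioi 0, f t * exp (I * k * t)` of a causal signal `f`, which turns
the wave field at a point into its frequency-domain counterpart. -/
noncomputable def temporalFourier (f : ℝ → ℝ) (k : ℝ) : ℂ :=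
  ∫ t in Ioi (0 : ℝ), (f t : ℂ) * Complex.exp (Complex.I * k * t)

/-- The spherical Hankel function of the first kind of order zero, restricted to real arguments. -/
noncomputable def sphericalHankelZero (z : ℝ) : ℂ :=
  -Complex.I * Complex.exp (Complex.I * z) / z

theorem hasDerivAt_sphericalHankelZero {z : ℝ} (hz : z ≠ 0) :
    HasDerivAt sphericalHankelZero
      ((1 / z + Complex.I / z ^ 2) * Complex.exp (Complex.I * z)) z := by
  have hz' : (z : ℂ) ≠ 0 := Complex.ofReal_ne_zero.2 hz
  have hid : HasDerivAt (fun z : ℝ => (z : ℂ)) 1 z := Complex.ofRealCLM.hasDerivAt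
  refine (((hid.const_mul Complex.I).cexp.const_mul (-Complex.I)).div hid hz').congr_deriv ?_
  field_simp
  linear_combination (-(z : ℂ)) * Complex.I_sq

theorem hasFDerivAt_norm_sub_const {E : Type*} [NormedAddCommGroup E] [InnerProductSpace ℝ E]
    {x y : E} (hxy : x ≠ y) :
    HasFDerivAt (fun x => ‖x - y‖) (‖x - y‖⁻¹ • innerSL ℝ (x - y)) x := by
  have hr : ‖x - y‖ ≠ 0 := norm_ne_zero_iff.2 (sub_ne_zero.2 hxy)
  have hsqrt := ((hasFDerivAt_id x).sub_const y).norm_sq.sqrt (pow_ne_zero 2 hr)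
  simp only [id_eq, sqrt_sq (norm_nonneg _)] at hsqrt
  refine hsqrt.congr_fderiv ?_
  ext v
  simp only [ContinuousLinearMap.comp_id, smul_apply, smul_eq_mul, nsmul_eq_mul,
    Nat.cast_ofNat]
  field_simp

theorem fderiv_sphericalHankelZero_norm_sub {E : Type*} [NormedAddCommGroup E]
    [InnerProductSpace ℝ E] {x y : E} (hxy : x ≠ y) {k : ℝ} (hk : k ≠ 0) (v : E) :
    fderiv ℝ (fun x => sphericalHankelZero (k * ‖x - y‖)) x v =
      (⟪x - y, v⟫ / ‖x - y‖ : ℝ) * ((1 / ‖x - y‖ + Complex.I / (k * ‖x - y‖ ^ 2)) *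
        Complex.exp (Complex.I * k * ‖x - y‖)) := by
  have hr : ‖x - y‖ ≠ 0 := norm_ne_zero_iff.2 (sub_ne_zero.2 hxy)
  have hk' : (k : ℂ) ≠ 0 := Complex.ofReal_ne_zero.2 hk
  have hr' : (‖x - y‖ : ℂ) ≠ 0 := Complex.ofReal_ne_zero.2 hr
  have hcomp := (hasDerivAt_sphericalHankelZero (mul_ne_zero hk hr)).hasFDerivAt.comp x
    ((hasFDerivAt_norm_sub_const hxy).const_mul k)
  rw [show (fun x => sphericalHankelZero (k * ‖x - y‖)) =
    sphericalHankelZero ∘ fun x => k * ‖x - y‖ from rfl, hcomp.fderiv]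
  simp only [ContinuousLinearMap.comp_apply, smul_apply, smul_eq_mul,
    ContinuousLinearMap.toSpanSingleton_apply, innerSL_apply_apply, Complex.real_smul]
  push_cast
  rw [← mul_assoc Complex.I]
  field_simp

theorem integrable_ofReal_mul {f : ℝ → ℝ} (hf : Continuous f) {a b : ℝ}
    (hsupp : ∀ t, |t| ∉ Icc a b → f t = 0) {φ : ℝ → ℂ} (hφ : Continuous φ) :
    Integrable fun t => (f t : ℂ) * φ t :=
  (by fun_prop : Continuous _).integrable_of_hasCompactSupport
    ((hasCompactSupport_of_abs_notMem_Icc hsupp).comp_left Complex.ofReal_zero).mul_right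

theorem re_integral_Ioi_mul_cexp {f : ℝ → ℝ} (hf : Continuous f) {a b : ℝ}
    (hsupp : ∀ t, |t| ∉ Icc a b → f t = 0) (k r : ℝ) :
    (∫ t in Ioi (0 : ℝ), (f t : ℂ) * Complex.exp (-(Complex.I * k * (t - r : ℝ)))).re =
      ∫ t in Ioi (0 : ℝ), f t * cos (k * (t - r)) := by
  have hint := integrable_ofReal_mul hf hsupp
    (φ := fun t => Complex.exp (-(Complex.I * k * (t - r : ℝ)))) (by fun_prop)
  have hcos (t : ℝ) : (Complex.exp (-(Complex.I * k * (t - r : ℝ)))).re = cos (k * (t - r)) := by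
    simp [Complex.exp_re]
  simpa only [RCLike.re_eq_complex_re, Complex.re_ofReal_mul, hcos] using
    (integral_re (hint.integrableOn (s := Ioi 0))).symm

theorem integral_Ioi_deriv_mul_cexp {f : ℝ → ℝ} (hf : ContDiff ℝ 1 f) {a b : ℝ} (ha : 0 < a)
    (hsupp : ∀ t, |t| ∉ Icc a b → f t = 0) (k : ℝ) :
    ∫ t in Ioi (0 : ℝ), ((deriv f t : ℝ) : ℂ) * Complex.exp (-(Complex.I * k * t)) =
      Complex.I * k * ∫ t in Ioi (0 : ℝ), (f t : ℂ) * Complex.exp (-(Complex.I * k * t)) := by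
  have hf' := hf.continuous_deriv le_rfl
  have hexp : Continuous fun t : ℝ => Complex.exp (-(Complex.I * k * t)) := by fun_prop
  have hint₀ := integrable_ofReal_mul hf.continuous hsupp hexp |>.integrableOn (s := Ioi 0)
  have hint₁ := integrable_ofReal_mul hf' (deriv_eq_zero_of_abs_notMem_Icc hsupp) hexp
    |>.integrableOn (s := Ioi 0)
  rw [← integral_const_mul, ← sub_eq_zero, ← integral_sub hint₁ (hint₀.const_mul _)]
  refine integral_Ioi_eq_zero_of_hasDerivAt ha
    (g := fun t => (f t : ℂ) * Complex.exp (-(Complex.I * k * t)))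
    (fun t ht => by rw [hsupp t ht, Complex.ofReal_zero, zero_mul]) (fun t _ => ?_)
    (hint₁.sub (hint₀.const_mul _))
  have hft := ((hf.differentiable one_ne_zero t).hasDerivAt).ofReal_comp
  have hid : HasDerivAt (fun t : ℝ => (t : ℂ)) 1 t := Complex.ofRealCLM.hasDerivAt
  refine (hft.mul (hid.const_mul (Complex.I * k)).neg.cexp).congr_deriv ?_
  simp only [Pi.neg_apply]
  ring

theorem conj_temporalFourier (f : ℝ → ℝ) (k : ℝ) :
    (starRingEnd ℂ) (temporalFourier f k) =
      ∫ t in Ioi (0 : ℝ), (f t : ℂ) * Complex.exp (-(Complex.I * k * t)) := by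
  simp only [temporalFourier, ← integral_conj, map_mul, Complex.conj_ofReal, ← Complex.exp_conj,
    Complex.conj_I, neg_mul]

theorem sq_mul_mul_conj_temporalFourier {f : ℝ → ℝ} (hf : ContDiff ℝ 2 f) {a b : ℝ} (ha : 0 < a)
    (hsupp : ∀ t, |t| ∉ Icc a b → f t = 0) (r : ℝ) {k : ℝ} (hk : k ≠ 0) :
    k ^ 2 * ((1 / r + Complex.I / (k * r ^ 2)) * Complex.exp (Complex.I * k * r) *
      (starRingEnd ℂ) (temporalFourier f k)) =
        ∫ t in Ioi (0 : ℝ), ((deriv f t / r ^ 2 - deriv (deriv f) t / r : ℝ) : ℂ) *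
          Complex.exp (-(Complex.I * k * (t - r : ℝ))) := by
  have hf' : ContDiff ℝ 1 (deriv f) := hf.deriv'
  have hsupp' := deriv_eq_zero_of_abs_notMem_Icc hsupp
  have hcont : Continuous fun t : ℝ => Complex.exp (-(Complex.I * k * t)) := by fun_prop
  have hint₁ := integrable_ofReal_mul hf'.continuous hsupp' hcont |>.integrableOn (s := Ioi 0)
  have hint₂ := integrable_ofReal_mul (hf'.continuous_deriv le_rfl)
    (deriv_eq_zero_of_abs_notMem_Icc hsupp') hcont |>.integrableOn (s := Ioi 0)
  have hsplit (t : ℝ) : ((deriv f t / r ^ 2 - deriv (deriv f) t / r : ℝ) : ℂ) *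
      Complex.exp (-(Complex.I * k * (t - r : ℝ))) = Complex.exp (Complex.I * k * r) *
        (1 / r ^ 2 * (deriv f t * Complex.exp (-(Complex.I * k * t))) -
          1 / r * (deriv (deriv f) t * Complex.exp (-(Complex.I * k * t)))) := by
    have hexp : -(Complex.I * k * (t - r : ℝ)) = Complex.I * k * r + -(Complex.I * k * t) := by
      push_cast
      ring
    rw [hexp, Complex.exp_add]
    push_cast
    ring
  simp only [hsplit]
  rw [integral_const_mul, integral_sub (hint₁.const_mul _) (hint₂.const_mul _), integral_const_mul,
    integral_const_mul, integral_Ioi_deriv_mul_cexp hf' ha hsupp',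
    integral_Ioi_deriv_mul_cexp (hf.of_le one_le_two) ha hsupp, conj_temporalFourier]
  have hk' : (k : ℂ) ≠ 0 := Complex.ofReal_ne_zero.2 hk
  have hcancel : (k : ℂ) ^ 2 * (Complex.I / (k * r ^ 2)) = Complex.I * k / r ^ 2 := by
    field_simp
  linear_combination (Complex.exp (Complex.I * k * r) * ∫ t in Ioi (0 : ℝ),
    (f t : ℂ) * Complex.exp (-(Complex.I * k * t))) * (hcancel + k ^ 2 / r * Complex.I_sq)

end FrequencyDomain

section FrequencyDomainBackprojection

open Set Metric

/-- The density in time whose cosine transform about the arrival time `‖R • ω - y‖` is `k ^ 2` times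
the integrand of the frequency-domain reconstruction formula at the boundary point `R • ω`. -/
noncomputable def arrivalDensity (S : ℝ³ → ℝ) (R : ℝ) (y : ℝ³) (ω : 𝕊²) (t : ℝ) : ℝ :=
  (R - ⟪(ω : ℝ³), y⟫) / ‖R • (ω : ℝ³) - y‖ *
    (deriv (kirchhoff S (R • (ω : ℝ³))) t / ‖R • (ω : ℝ³) - y‖ ^ 2 -
      deriv (deriv (kirchhoff S (R • (ω : ℝ³)))) t / ‖R • (ω : ℝ³) - y‖)

variable {S : ℝ³ → ℝ} {R ρ : ℝ} {y : ℝ³}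

theorem arrivalDensity_norm_sub (hy : ‖y‖ < R) (ω : 𝕊²) :
    arrivalDensity S R y ω ‖R • (ω : ℝ³) - y‖ = -4 * ((R - ⟪(ω : ℝ³), y⟫) *
      secondDerivSq (kirchhoff S (R • (ω : ℝ³))) ‖R • (ω : ℝ³) - y‖) := by
  have hr := (norm_smul_coe_sphere_sub_pos hy ω).ne'
  rw [arrivalDensity, secondDerivSq]
  field_simp
  ring

theorem continuous_arrivalDensity (hS : ContDiff ℝ 2 S) (hy : ‖y‖ < R) :
    Continuous (Function.uncurry (arrivalDensity S R y)) := by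
  have hr (q : 𝕊² × ℝ) : ‖R • (q.1 : ℝ³) - y‖ ≠ 0 := (norm_smul_coe_sphere_sub_pos hy q.1).ne'
  have hP' := continuous_deriv_kirchhoff hS R
  have hP'' := continuous_deriv_deriv_kirchhoff hS R
  exact (Continuous.div (by fun_prop) (by fun_prop) hr).mul
    ((hP'.div (by fun_prop) fun q => pow_ne_zero 2 (hr q)).sub (hP''.div (by fun_prop) hr))

theorem hasCompactSupport_arrivalDensity (hsupp : ∀ z, ρ ≤ ‖z‖ → S z = 0) (hR : 0 ≤ R) (y : ℝ³) :
    HasCompactSupport (Function.uncurry (arrivalDensity S R y)) := by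
  refine hasCompactSupport_uncurry_of_abs_notMem_Icc (a := R - ρ) (b := R + ρ) fun ω t ht => ?_
  have hP' := deriv_eq_zero_of_abs_notMem_Icc (kirchhoff_smul_coe_sphere_eq_zero hsupp hR ω)
  rw [arrivalDensity, hP' t ht, deriv_eq_zero_of_abs_notMem_Icc hP' t ht, zero_div, zero_div,
    sub_zero, mul_zero]

theorem sq_mul_re_fderiv_sphericalHankelZero_mul_conj (hS : ContDiff ℝ 2 S)
    (hsupp : ∀ z, ρ ≤ ‖z‖ → S z = 0) (hρ : ρ < R) (hy : ‖y‖ < R) {k : ℝ} (hk : k ≠ 0) (ω : 𝕊²) :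
    k ^ 2 * (fderiv ℝ (fun x => sphericalHankelZero (k * ‖x - y‖)) (R • (ω : ℝ³)) ω *
      (starRingEnd ℂ) (temporalFourier (kirchhoff S (R • (ω : ℝ³))) k)).re =
        ∫ t in Ioi (0 : ℝ), arrivalDensity S R y ω t * cos (k * (t - ‖R • (ω : ℝ³) - y‖)) := by
  set P := kirchhoff S (R • (ω : ℝ³)) with hP
  set r := ‖R • (ω : ℝ³) - y‖ with hr
  have hPdiff : ContDiff ℝ 2 P := contDiff_kirchhoff_right hS _
  have hPdiff' : ContDiff ℝ 1 (deriv P) := hPdiff.deriv'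
  have hP₀ := kirchhoff_smul_coe_sphere_eq_zero hsupp ((norm_nonneg y).trans hy.le) ω
  have hP₁ := deriv_eq_zero_of_abs_notMem_Icc hP₀
  have hcont : Continuous fun t => deriv P t / r ^ 2 - deriv (deriv P) t / r :=
    (hPdiff'.continuous.div_const _).sub ((hPdiff'.continuous_deriv le_rfl).div_const _)
  have hzero (t : ℝ) (ht : |t| ∉ Icc (R - ρ) (R + ρ)) :
      deriv P t / r ^ 2 - deriv (deriv P) t / r = 0 := by
    rw [hP₁ t ht, deriv_eq_zero_of_abs_notMem_Icc hP₁ t ht, zero_div, zero_div, sub_zero]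
  have hinner : ⟪R • (ω : ℝ³) - y, ω⟫ = R - ⟪(ω : ℝ³), y⟫ := by
    rw [inner_sub_left, real_inner_smul_left, real_inner_self_eq_norm_sq, norm_eq_of_mem_sphere,
      one_pow, mul_one, real_inner_comm]
  have hne : R • (ω : ℝ³) ≠ y := sub_ne_zero.1 (norm_pos_iff.1 (norm_smul_coe_sphere_sub_pos hy ω))
  rw [fderiv_sphericalHankelZero_norm_sub hne hk, hinner, mul_assoc, Complex.re_ofReal_mul,
    mul_left_comm, ← Complex.re_ofReal_mul, Complex.ofReal_pow,
    sq_mul_mul_conj_temporalFourier hPdiff (sub_pos.2 hρ) hP₀ r hk,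
    re_integral_Ioi_mul_cexp hcont hzero, ← integral_const_mul]
  simp only [arrivalDensity, mul_assoc, ← hP, ← hr]

theorem integral_Ioi_exp_mul_integral_sphere_eq (hS : ContDiff ℝ 2 S)
    (hsupp : ∀ z, ρ ≤ ‖z‖ → S z = 0) (hρ : ρ < R) (hy : ‖y‖ < R) {ε : ℝ} (hε : 0 < ε) :
    ∫ k in Ioi (0 : ℝ), exp (-ε * k) * k ^ 2 * ∫ ω : 𝕊², R ^ 2 *
      (fderiv ℝ (fun x => sphericalHankelZero (k * ‖x - y‖)) (R • (ω : ℝ³)) ω *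
        (starRingEnd ℂ) (temporalFourier (kirchhoff S (R • (ω : ℝ³))) k)).re ∂σ₂ =
      R ^ 2 * ∫ ω : 𝕊², (∫ t in Ioi (0 : ℝ), arrivalDensity S R y ω t *
        (ε⁻¹ * lorentzian (ε⁻¹ * (t - ‖R • (ω : ℝ³) - y‖)))) ∂σ₂ := by
  have hA := continuous_arrivalDensity hS hy
  have hcpt := hasCompactSupport_arrivalDensity hsupp ((norm_nonneg y).trans hy.le) y
  have hlor := continuous_lorentzian
  have hfubini {φ : 𝕊² × ℝ → ℝ} (hφ : Continuous φ) :
      ∫ q, Function.uncurry (arrivalDensity S R y) q * φ q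
          ∂(σ₂).prod (volume.restrict (Ioi 0)) =
        ∫ ω, (∫ t in Ioi (0 : ℝ), arrivalDensity S R y ω t * φ (ω, t)) ∂σ₂ :=
    integral_prod _ ((hA.mul hφ).integrable_of_hasCompactSupport hcpt.mul_right)
  have hdelay : Continuous fun q : 𝕊² × ℝ => q.2 - ‖R • (q.1 : ℝ³) - y‖ := by fun_prop
  have habel := integral_exp_neg_mul_integral_mul_cos
    (hA.integrable_of_hasCompactSupport hcpt (μ := (σ₂).prod (volume.restrict (Ioi 0))))
    hdelay.measurable hε
  rw [hfubini (by fun_prop)] at habel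
  refine Eq.trans ?_ (congrArg (R ^ 2 * ·) habel)
  rw [← integral_const_mul]
  refine setIntegral_congr_fun measurableSet_Ioi fun k (hk : 0 < k) => ?_
  have hcos := hfubini (φ := fun q => cos (k * (q.2 - ‖R • (q.1 : ℝ³) - y‖))) (by fun_prop)
  simp only [← sq_mul_re_fderiv_sphericalHankelZero_mul_conj hS hsupp hρ hy hk.ne',
    integral_const_mul] at hcos
  simp only [integral_const_mul]
  rw [hcos]
  ring

theorem tendsto_integral_Ioi_exp_mul_integral_sphere (hS : ContDiff ℝ 2 S)
    (hsupp : ∀ z, ρ ≤ ‖z‖ → S z = 0) (hρ : ρ < R) (hy : ‖y‖ < R) :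
    Tendsto (fun ε => ∫ k in Ioi (0 : ℝ), exp (-ε * k) * k ^ 2 * ∫ ω : 𝕊², R ^ 2 *
      (fderiv ℝ (fun x => sphericalHankelZero (k * ‖x - y‖)) (R • (ω : ℝ³)) ω *
        (starRingEnd ℂ) (temporalFourier (kirchhoff S (R • (ω : ℝ³))) k)).re ∂σ₂)
      (𝓝[>] 0) (𝓝 (2 * π ^ 2 * S y)) := by
  have hR : 0 < R := (norm_nonneg y).trans_lt hy
  have hlim := tendsto_integral_setIntegral_mul_lorentzian (ν := σ₂) measurableSet_Ioi
    (continuous_arrivalDensity hS hy) (hasCompactSupport_arrivalDensity hsupp hR.le y)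
    (r := fun ω => ‖R • (ω : ℝ³) - y‖) (by fun_prop)
    fun ω => Ioi_mem_nhds (norm_smul_coe_sphere_sub_pos hy ω)
  have hvalue : R ^ 2 * ∫ ω : 𝕊², π * arrivalDensity S R y ω ‖R • (ω : ℝ³) - y‖ ∂σ₂ =
      2 * π ^ 2 * S y := by
    simp only [arrivalDensity_norm_sub hy, integral_const_mul,
      integral_sphere_secondDerivSq_kirchhoff hS hsupp hρ hy]
    field_simp
    ring
  rw [← hvalue]
  refine (hlim.const_mul (R ^ 2)).congr' ?_
  filter_upwards [self_mem_nhdsWithin] with ε hε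
  exact (integral_Ioi_exp_mul_integral_sphere_eq hS hsupp hρ hy hε).symm

end FrequencyDomainBackprojection

theorem near_field_reconstruction_freq_3d_general (R : ℝ)
    (σ : Measure (Metric.sphere (0 : EuclideanSpace ℝ (Fin 3)) 1))
    (hσ : σ = (volume : Measure (EuclideanSpace ℝ (Fin 3))).toSphere)
    (S : EuclideanSpace ℝ (Fin 3) → ℝ) (hS : ContDiff ℝ 2 S)
    (hsub : tsupport S ⊆ Metric.ball (0 : EuclideanSpace ℝ (Fin 3)) R)
    (p : EuclideanSpace ℝ (Fin 3) → ℝ → ℝ)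
    (hp : ∀ x t, p x t = (t / (4 * π)) *
      ∫ ω : Metric.sphere (0 : EuclideanSpace ℝ (Fin 3)) 1,
        S (x + t • (ω : EuclideanSpace ℝ (Fin 3))) ∂σ)
    (u : EuclideanSpace ℝ (Fin 3) → ℝ → ℂ)
    (hu : ∀ x k, u x k =
      ∫ t in Set.Ioi (0 : ℝ), (p x t : ℂ) * Complex.exp (Complex.I * (k : ℂ) * (t : ℂ)))
    (h₀ : ℝ → ℂ)
    (hh₀ : ∀ z : ℝ, h₀ z = -Complex.I * Complex.exp (Complex.I * (z : ℂ)) / (z : ℂ))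
    (y : EuclideanSpace ℝ (Fin 3))
    (hy : y ∈ Metric.ball (0 : EuclideanSpace ℝ (Fin 3)) R) :
    Tendsto (fun ε : ℝ =>
        (1 / (2 * π ^ 2)) *
          ∫ k in Set.Ioi (0 : ℝ), Real.exp (-ε * k) * k ^ 2 *
            ∫ ω : Metric.sphere (0 : EuclideanSpace ℝ (Fin 3)) 1,
              (R ^ 2 : ℝ) *
                (fderiv ℝ
                    (fun x : EuclideanSpace ℝ (Fin 3) => h₀ (k * ‖x - y‖))
                    (R • (ω : EuclideanSpace ℝ (Fin 3)))
                    (ω : EuclideanSpace ℝ (Fin 3)) *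
                  (starRingEnd ℂ) (u (R • (ω : EuclideanSpace ℝ (Fin 3))) k)).re ∂σ)
      (𝓝[>] (0 : ℝ)) (𝓝 (S y)) := by
  subst hσ
  obtain rfl : p = kirchhoff S := funext₂ hp
  obtain rfl : u = fun x => temporalFourier (kirchhoff S x) := funext₂ hu
  obtain rfl : h₀ = sphericalHankelZero := funext hh₀
  obtain ⟨ρ, hρ, hball⟩ := exists_lt_subset_ball (isClosed_tsupport S) hsub
  have hsupp (z : ℝ³) (hz : ρ ≤ ‖z‖) : S z = 0 :=
    image_eq_zero_of_notMem_tsupport fun hmem => hz.not_gt (mem_ball_zero_iff.1 (hball hmem))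
  have hlim := (tendsto_integral_Ioi_exp_mul_integral_sphere hS hsupp hρ
    (mem_ball_zero_iff.1 hy)).const_mul (1 / (2 * π ^ 2))
  rwa [← mul_assoc, one_div_mul_cancel (by positivity), one_mul] at hlim

/-- **Frequency-domain near-field reconstruction in 3D** (Theorem 2.5).
Let `S` be smooth with compact support in `B_R(0)`, `p` the Kirchhoff solution with
initial velocity `S`, and `u(x,k) = ∫_0^∞ p(x,t) e^{ikt} dt` the temporal Fourier
transform of the boundary data. With `h₀(z) = −i e^{iz}/z`, for every `y ∈ B_R(0)`,
`S(y) = lim_{ε→0⁺} (1/(2π²)) ∫_0^∞ e^{−εk} k² ∫_{∂B_R(0)}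
  Re[ ∂_{ν_x} h₀(k|x−y|) conj(u(x,k)) ] ds(x) dk`,
where the surface integral over the sphere of radius `R` is parametrized as `x = Rω`
with surface element `R² dσ(ω)` and outward unit normal `ν_x = ω`. -/
theorem near_field_reconstruction_freq_3d (R : ℝ) (hR : 0 < R)
    (σ : Measure (Metric.sphere (0 : EuclideanSpace ℝ (Fin 3)) 1))
    (hσ : σ = (volume : Measure (EuclideanSpace ℝ (Fin 3))).toSphere)
    (S : EuclideanSpace ℝ (Fin 3) → ℝ)
    (hS : ContDiff ℝ (⊤ : ℕ∞) S) (hsupp : HasCompactSupport S)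
    (hsub : tsupport S ⊆ Metric.ball (0 : EuclideanSpace ℝ (Fin 3)) R)
    (p : EuclideanSpace ℝ (Fin 3) → ℝ → ℝ)
    (hp : ∀ x t, p x t = (t / (4 * π)) *
      ∫ ω : Metric.sphere (0 : EuclideanSpace ℝ (Fin 3)) 1,
        S (x + t • (ω : EuclideanSpace ℝ (Fin 3))) ∂σ)
    (u : EuclideanSpace ℝ (Fin 3) → ℝ → ℂ)
    (hu : ∀ x k, u x k =
      ∫ t in Set.Ioi (0 : ℝ), (p x t : ℂ) * Complex.exp (Complex.I * (k : ℂ) * (t : ℂ)))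
    (h₀ : ℝ → ℂ)
    (hh₀ : ∀ z : ℝ, h₀ z = -Complex.I * Complex.exp (Complex.I * (z : ℂ)) / (z : ℂ))
    (y : EuclideanSpace ℝ (Fin 3))
    (hy : y ∈ Metric.ball (0 : EuclideanSpace ℝ (Fin 3)) R) :
    Tendsto (fun ε : ℝ =>
        (1 / (2 * π ^ 2)) *
          ∫ k in Set.Ioi (0 : ℝ), Real.exp (-ε * k) * k ^ 2 *
            ∫ ω : Metric.sphere (0 : EuclideanSpace ℝ (Fin 3)) 1,
              (R ^ 2 : ℝ) *
                (fderiv ℝ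
                    (fun x : EuclideanSpace ℝ (Fin 3) => h₀ (k * ‖x - y‖))
                    (R • (ω : EuclideanSpace ℝ (Fin 3)))
                    (ω : EuclideanSpace ℝ (Fin 3)) *
                  (starRingEnd ℂ) (u (R • (ω : EuclideanSpace ℝ (Fin 3))) k)).re ∂σ)
      (𝓝[>] (0 : ℝ)) (𝓝 (S y)) := by
  exact near_field_reconstruction_freq_3d_general R σ hσ S (contDiff_infty.1 hS 2) hsub p hp
    u hu h₀ hh₀ y hy
end

section
/- Let S : ℝ³ → ℝ be continuous with compact support, and let p(x,t) := (t/(4π)) ∫_{S²} S(x + tω) dσ(ω) be the Kirchhoff solution with initial velocity S. Fix a unit vector x̂ ∈ ℝ³ and orthonormal vectors u, v such that {x̂, u, v} is an orthonormal basis of ℝ³. Then for every t ∈ ℝ, lim_{r→∞} r · p(r x̂, t + r) = (1/(4π)) ∫_{ℝ²} S(−t x̂ + a u + b v) da db. In particular the time-domain far-field pattern p^∞(x̂, t) := lim_{r→∞} r·p(r x̂, t + r) equals 1/(4π) times the integral of S over the plane {y ∈ ℝ³ : x̂ · y = −t}. -/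
open MeasureTheory Real Filter
open scoped RealInnerProductSpace Topology

/-!
The value `r p(r x̂, t + r)` is, up to a factor tending to `1 / (4π)`, the integral of `S` over the
sphere of radius `t + r` centred at `r x̂`. This sphere passes through `-t x̂` with normal `x̂`
there, and as `r → ∞` it flattens out to the plane through `-t x̂` orthogonal to `x̂`.

To pass to the limit, the hemisphere around a unit vector `e` is parametrised by the tangent
hyperplane, sending `w ⟂ e` to `(e + w) / ‖e + w‖`. In these coordinates the surface measure of the
unit sphere of an `n`-dimensional space has density `‖e + w‖⁻ⁿ`, as one sees by computing the volume
of the cone over a part of the hemisphere by slices orthogonal to `e`. After the substitution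
`w ↦ w / R` the integrals converge by dominated convergence, because the parametrisation has the
inclusion of the hyperplane as its derivative at `0`.
-/

open Module Set Metric
open scoped Pointwise ENNReal

lemma setLIntegral_Ioo_pow (n : ℕ) {a : ℝ} (ha : 0 ≤ a) :
    ∫⁻ s in Ioo 0 a, ENNReal.ofReal (s ^ n) = ENNReal.ofReal (a ^ (n + 1) / (n + 1)) := by
  rw [restrict_Ioo_eq_restrict_Ioc, ← ofReal_integral_eq_lintegral_ofReal,
    ← intervalIntegral.integral_of_le ha, integral_pow]
  · simp
  · exact (intervalIntegral.intervalIntegrable_pow n).1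
  · filter_upwards [ae_restrict_mem measurableSet_Ioc] with s hs using pow_nonneg hs.1.le n

lemma lintegral_eq_pow_mul_lintegral_comp_smul {H : Type*} [NormedAddCommGroup H]
    [NormedSpace ℝ H] [FiniteDimensional ℝ H] [MeasurableSpace H] [BorelSpace H]
    (μ : Measure H) [μ.IsAddHaarMeasure] (h : H → ℝ≥0∞) {s : ℝ} (hs : 0 < s) :
    ∫⁻ w, h w ∂μ = ENNReal.ofReal (s ^ finrank ℝ H) * ∫⁻ w, h (s • w) ∂μ := by
  have hscale : ∫⁻ w, h (s • w) ∂μ = ENNReal.ofReal (s ^ finrank ℝ H)⁻¹ * ∫⁻ w, h w ∂μ := by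
    rw [← (measurableEmbedding_const_smul₀ hs.ne').lintegral_map h (μ := μ),
      Measure.map_addHaar_smul μ hs.ne', lintegral_smul_measure, abs_of_pos (by positivity),
      smul_eq_mul]
  rw [hscale, ← mul_assoc, ← ENNReal.ofReal_mul (by positivity), mul_inv_cancel₀ (by positivity),
    ENNReal.ofReal_one, one_mul]

lemma tendsto_div_const_add_atTop_nhds_one (t : ℝ) :
    Tendsto (fun r : ℝ ↦ r / (t + r)) atTop (𝓝 1) := by
  have hshift : Tendsto (fun r : ℝ ↦ t + r) atTop atTop :=
    tendsto_atTop_add_const_left _ t tendsto_id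
  have hlim : Tendsto (fun r : ℝ ↦ 1 - t / (t + r)) atTop (𝓝 1) := by
    simpa using (hshift.const_div_atTop t).const_sub 1
  refine hlim.congr' ?_
  filter_upwards [hshift.eventually_ne_atTop 0] with r hr
  rw [one_sub_div hr, add_sub_cancel_left]

section Gnomonic

variable {E : Type*} [NormedAddCommGroup E] [InnerProductSpace ℝ E] {e : E}

/-- The parametrisation of the open hemisphere around the unit vector `e` by its tangent
hyperplane: the ray from the origin through `e + w` meets the unit sphere in `gnomonic e w`. -/
noncomputable def gnomonic (e : E) (w : (ℝ ∙ e)ᗮ) : E := ‖e + w‖⁻¹ • (e + w)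

lemma inner_coe_orthogonal (w : (ℝ ∙ e)ᗮ) : ⟪e, (w : E)⟫ = 0 :=
  Submodule.mem_orthogonal_singleton_iff_inner_right.1 w.2

lemma inner_add_coe_orthogonal (he : ‖e‖ = 1) (w : (ℝ ∙ e)ᗮ) : ⟪e, e + w⟫ = 1 := by
  rw [inner_add_right, real_inner_self_eq_norm_sq, he, inner_coe_orthogonal, one_pow, add_zero]

lemma norm_add_coe_orthogonal (he : ‖e‖ = 1) (w : (ℝ ∙ e)ᗮ) : ‖e + w‖ = √(1 + ‖w‖ ^ 2) := by
  rw [← sqrt_sq (norm_nonneg (e + (w : E))), norm_add_sq_real, inner_coe_orthogonal, he,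
    Submodule.coe_norm]
  ring_nf

lemma one_le_norm_add_coe_orthogonal (he : ‖e‖ = 1) (w : (ℝ ∙ e)ᗮ) : 1 ≤ ‖e + w‖ := by
  rw [norm_add_coe_orthogonal he, one_le_sqrt]
  exact le_add_of_nonneg_right (sq_nonneg _)

lemma norm_add_coe_orthogonal_pos (he : ‖e‖ = 1) (w : (ℝ ∙ e)ᗮ) : 0 < ‖e + w‖ :=
  one_pos.trans_le (one_le_norm_add_coe_orthogonal he w)

lemma gnomonic_zero (he : ‖e‖ = 1) : gnomonic e 0 = e := by
  simp [gnomonic, he]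

lemma continuous_gnomonic (he : ‖e‖ = 1) : Continuous (gnomonic e) := by
  unfold gnomonic
  have hne (w : (ℝ ∙ e)ᗮ) := (norm_add_coe_orthogonal_pos he w).ne'
  fun_prop (disch := exact hne)

lemma hasFDerivAt_inv_norm_add_coe_orthogonal (he : ‖e‖ = 1) :
    HasFDerivAt (𝕜 := ℝ) (fun w : (ℝ ∙ e)ᗮ ↦ ‖e + w‖⁻¹) 0 0 := by
  have hsq : HasFDerivAt (𝕜 := ℝ) (fun w : (ℝ ∙ e)ᗮ ↦ 1 + ‖w‖ ^ 2) 0 0 := by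
    simpa using ((hasFDerivAt_id (𝕜 := ℝ) (0 : (ℝ ∙ e)ᗮ)).norm_sq).const_add 1
  simp_rw [norm_add_coe_orthogonal he]
  exact ((hasDerivAt_inv (by simp)).comp_hasFDerivAt 0 (hsq.sqrt (by simp))).congr_fderiv (by simp)

lemma hasFDerivAt_gnomonic_zero (he : ‖e‖ = 1) :
    HasFDerivAt (gnomonic e) (ℝ ∙ e)ᗮ.subtypeL 0 := by
  have hadd : HasFDerivAt (fun w : (ℝ ∙ e)ᗮ ↦ e + (w : E)) (ℝ ∙ e)ᗮ.subtypeL 0 :=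
    (ℝ ∙ e)ᗮ.subtypeL.hasFDerivAt.const_add e
  refine ((hasFDerivAt_inv_norm_add_coe_orthogonal he).fun_smul hadd).congr_fderiv ?_
  ext
  simp [he]

lemma norm_le_norm_add_mul_norm_gnomonic_sub (he : ‖e‖ = 1) (w : (ℝ ∙ e)ᗮ) :
    ‖w‖ ≤ ‖e + w‖ * ‖gnomonic e w - e‖ := by
  have hN := norm_add_coe_orthogonal_pos he w
  have hinner : ⟪(w : E), ‖e + w‖ • (gnomonic e w - e)⟫ = ‖w‖ * ‖w‖ := by
    rw [smul_sub, gnomonic, smul_inv_smul₀ hN.ne', inner_sub_right, inner_add_right,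
      real_inner_smul_right, real_inner_comm, inner_coe_orthogonal,
      real_inner_self_eq_norm_mul_norm, Submodule.coe_norm]
    ring
  rcases (norm_nonneg w).eq_or_lt with hw | hw
  · rw [← hw]; positivity
  · refine le_of_mul_le_mul_left ?_ hw
    calc ‖w‖ * ‖w‖ ≤ ‖(w : E)‖ * ‖‖e + w‖ • (gnomonic e w - e)‖ := hinner ▸ real_inner_le_norm _ _
      _ = _ := by rw [norm_smul, norm_norm, Submodule.coe_norm]

lemma norm_add_coe_orthogonal_le_two (he : ‖e‖ = 1) {w : (ℝ ∙ e)ᗮ}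
    (hw : ‖gnomonic e w - e‖ ≤ 1 / 2) : ‖e + w‖ ≤ 2 := by
  have hN := norm_add_coe_orthogonal_pos he w
  have hinner : ⟪e, e - gnomonic e w⟫ = 1 - ‖e + w‖⁻¹ := by
    rw [inner_sub_right, gnomonic, real_inner_smul_right, inner_add_coe_orthogonal he,
      real_inner_self_eq_norm_sq, he, one_pow, mul_one]
  have hle : 1 - ‖e + w‖⁻¹ ≤ 1 / 2 := calc
    1 - ‖e + w‖⁻¹ ≤ ‖e‖ * ‖e - gnomonic e w‖ := hinner ▸ real_inner_le_norm _ _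
    _ ≤ 1 / 2 := by rwa [he, one_mul, norm_sub_rev]
  rw [← inv_le_inv₀ two_pos hN]
  linarith

lemma norm_le_two_mul_of_norm_smul_gnomonic_sub_le (he : ‖e‖ = 1) {M R : ℝ} (hR : 0 < R)
    (hMR : 2 * M ≤ R) {w : (ℝ ∙ e)ᗮ} (hw : ‖R • (gnomonic e (R⁻¹ • w) - e)‖ ≤ M) :
    ‖w‖ ≤ 2 * M := by
  rw [norm_smul, norm_of_nonneg hR.le] at hw
  have hclose : ‖gnomonic e (R⁻¹ • w) - e‖ ≤ 1 / 2 := by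
    refine le_of_mul_le_mul_left ?_ hR
    linarith
  calc
    ‖w‖ = R * ‖R⁻¹ • w‖ := by
      rw [norm_smul, norm_of_nonneg (by positivity), mul_inv_cancel_left₀ hR.ne']
    _ ≤ R * (‖e + (R⁻¹ • w : (ℝ ∙ e)ᗮ)‖ * ‖gnomonic e (R⁻¹ • w) - e‖) := by
      gcongr
      exact norm_le_norm_add_mul_norm_gnomonic_sub he _
    _ ≤ R * (2 * ‖gnomonic e (R⁻¹ • w) - e‖) := by
      gcongr
      exact norm_add_coe_orthogonal_le_two he hclose
    _ = 2 * (R * ‖gnomonic e (R⁻¹ • w) - e‖) := by ring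
    _ ≤ 2 * M := by gcongr

end Gnomonic

section Blowup

variable {E F : Type*} [NormedAddCommGroup E] [InnerProductSpace ℝ E] [NormedAddCommGroup F]
  [NormedSpace ℝ F] {e : E} {f : E → F} {M C R : ℝ}

/-- The function `ω ↦ f (R • (ω - e))` on the hemisphere around `e`, in the gnomonic coordinate
`R⁻¹ • w` and weighted by the density of the surface measure in this coordinate. -/
noncomputable def gnomonicBlowup (e : E) (f : E → F) (R : ℝ) (w : (ℝ ∙ e)ᗮ) : F :=
  (‖e + (R⁻¹ • w : (ℝ ∙ e)ᗮ)‖ ^ finrank ℝ E)⁻¹ • f (R • (gnomonic e (R⁻¹ • w) - e))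

lemma continuous_gnomonicBlowup (he : ‖e‖ = 1) (hf : Continuous f) (R : ℝ) :
    Continuous (gnomonicBlowup e f R) := by
  have hgn := continuous_gnomonic he
  have hne (w : (ℝ ∙ e)ᗮ) : ‖e + (R⁻¹ • w : (ℝ ∙ e)ᗮ)‖ ^ finrank ℝ E ≠ 0 :=
    (pow_pos (norm_add_coe_orthogonal_pos he _) _).ne'
  unfold gnomonicBlowup
  fun_prop (disch := exact hne)

lemma norm_gnomonicBlowup_le_indicator (he : ‖e‖ = 1) (hf : ∀ y, M < ‖y‖ → f y = 0)
    (hC : ∀ y, ‖f y‖ ≤ C) (hR : 0 < R) (hMR : 2 * M ≤ R) (w : (ℝ ∙ e)ᗮ) :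
    ‖gnomonicBlowup e f R w‖ ≤ (closedBall (0 : (ℝ ∙ e)ᗮ) (2 * M)).indicator (fun _ ↦ C) w := by
  rw [gnomonicBlowup]
  by_cases hw : ‖w‖ ≤ 2 * M
  · rw [indicator_of_mem (mem_closedBall_zero_iff.2 hw), norm_smul, norm_inv, norm_pow, norm_norm]
    refine (mul_le_of_le_one_left (norm_nonneg _) ?_).trans (hC _)
    exact inv_le_one_of_one_le₀ (one_le_pow₀ (one_le_norm_add_coe_orthogonal he _))
  · have hfar : M < ‖R • (gnomonic e (R⁻¹ • w) - e)‖ := by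
      contrapose! hw
      exact norm_le_two_mul_of_norm_smul_gnomonic_sub_le he hR hMR hw
    rw [indicator_of_notMem (mt mem_closedBall_zero_iff.1 hw), hf _ hfar, smul_zero, norm_zero]

lemma tendsto_gnomonicBlowup (he : ‖e‖ = 1) (hf : Continuous f) (w : (ℝ ∙ e)ᗮ) :
    Tendsto (fun R ↦ gnomonicBlowup e f R w) atTop (𝓝 (f w)) := by
  have hscale : Tendsto (fun R : ℝ ↦ R⁻¹ • w) atTop (𝓝 0) := by
    simpa using (tendsto_inv_atTop_zero (𝕜 := ℝ)).smul_const w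
  have hweight : Tendsto (fun R : ℝ ↦ (‖e + (R⁻¹ • w : (ℝ ∙ e)ᗮ)‖ ^ finrank ℝ E)⁻¹)
      atTop (𝓝 1) := by
    have hcont : ContinuousAt (fun w : (ℝ ∙ e)ᗮ ↦ (‖e + w‖ ^ finrank ℝ E)⁻¹) 0 := by
      fun_prop (disch := simp [he])
    simpa [he, Function.comp_def] using hcont.tendsto.comp hscale
  have hpoint : Tendsto (fun R : ℝ ↦ R • (gnomonic e (R⁻¹ • w) - e)) atTop (𝓝 (w : E)) := by
    simpa [gnomonic_zero he] using (hasFDerivAt_gnomonic_zero he).lim_real w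
  simpa [gnomonicBlowup] using hweight.smul ((hf.tendsto _).comp hpoint)

lemma setIntegral_inner_pos_comp_smul_sub [MeasurableSpace E] (μ : Measure (sphere (0 : E) 1))
    (he : ‖e‖ = 1) (hf : ∀ y, M < ‖y‖ → f y = 0) (hMR : M < R) :
    ∫ ω in {ω | 0 < ⟪e, (ω : E)⟫}, f (R • (ω - e)) ∂μ = ∫ ω, f (R • (ω - e)) ∂μ := by
  refine setIntegral_eq_integral_of_forall_compl_eq_zero fun ω hω ↦ hf _ ?_
  have hω : ⟪e, (ω : E)⟫ ≤ 0 := not_lt.1 hω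
  have hdist : 1 ≤ ‖(ω : E) - e‖ := calc
    1 ≤ ⟪e, e - (ω : E)⟫ := by
      rw [inner_sub_right, real_inner_self_eq_norm_sq, he]
      linarith
    _ ≤ ‖e‖ * ‖e - (ω : E)‖ := real_inner_le_norm _ _
    _ = ‖(ω : E) - e‖ := by rw [he, one_mul, norm_sub_rev]
  calc M < ‖R‖ := hMR.trans_le (le_norm_self R)
    _ ≤ ‖R‖ * ‖(ω : E) - e‖ := le_mul_of_one_le_right (norm_nonneg R) hdist
    _ = ‖R • ((ω : E) - e)‖ := (norm_smul _ _).symm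

end Blowup

section Cone

variable {E : Type*} [NormedAddCommGroup E] [InnerProductSpace ℝ E] {e : E}

lemma Ioo_smul_image_hemisphere (e : E) (B : Set E) :
    Ioo (0 : ℝ) 1 • ((↑) '' ({ω : sphere (0 : E) 1 | 0 < ⟪e, (ω : E)⟫} ∩ (↑) ⁻¹' B) : Set E) =
      {y | ‖y‖ < 1 ∧ ‖y‖⁻¹ • y ∈ B} ∩ {y | 0 < ⟪e, y⟫} := by
  ext y
  constructor
  · rintro ⟨s, ⟨hs0, hs1⟩, _, ⟨ω, ⟨hpos, hB⟩, rfl⟩, rfl⟩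
    have hnorm : ‖s • (ω : E)‖ = s := by simp [norm_smul, abs_of_pos hs0]
    simp only [mem_inter_iff, mem_ofPred_eq, hnorm, inv_smul_smul₀ hs0.ne', real_inner_smul_right]
    exact ⟨⟨hs1, hB⟩, mul_pos hs0 hpos⟩
  · rintro ⟨⟨hlt, hB⟩, hpos⟩
    have hy : 0 < ‖y‖ := norm_pos_iff.2 fun h ↦ by simp [h] at hpos
    refine ⟨‖y‖, ⟨hy, hlt⟩, ‖y‖⁻¹ • y, ⟨⟨‖y‖⁻¹ • y, ?_⟩, ⟨?_, hB⟩, rfl⟩, smul_inv_smul₀ hy.ne' y⟩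
    · simp [norm_smul, hy.ne']
    · simpa [real_inner_smul_right, hy] using hpos

lemma setLIntegral_Ioi_pow_mul_indicator_smul_add (he : ‖e‖ = 1) (n : ℕ) (B : Set E)
    (w : (ℝ ∙ e)ᗮ) :
    ∫⁻ s in Ioi (0 : ℝ), ENNReal.ofReal (s ^ n) *
        {y | ‖y‖ < 1 ∧ ‖y‖⁻¹ • y ∈ B}.indicator 1 (s • (e + w)) =
      ENNReal.ofReal ((‖e + w‖ ^ (n + 1))⁻¹ / (n + 1)) * (gnomonic e ⁻¹' B).indicator 1 w := by
  have hN := norm_add_coe_orthogonal_pos he w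
  have hray : ∀ s ∈ Ioi (0 : ℝ), ENNReal.ofReal (s ^ n) *
      {y | ‖y‖ < 1 ∧ ‖y‖⁻¹ • y ∈ B}.indicator 1 (s • (e + w)) =
        (Iio ‖e + w‖⁻¹).indicator (fun s ↦ ENNReal.ofReal (s ^ n)) s *
          (gnomonic e ⁻¹' B).indicator 1 w := by
    intro s (hs : 0 < s)
    have hnorm : ‖s • (e + (w : E))‖ = s * ‖e + w‖ := by rw [norm_smul, norm_of_nonneg hs.le]
    have hdir : (s * ‖e + w‖)⁻¹ • s • (e + (w : E)) = gnomonic e w := by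
      rw [mul_inv_rev, mul_smul, inv_smul_smul₀ hs.ne', gnomonic]
    have hlt : s * ‖e + w‖ < 1 ↔ s < ‖e + w‖⁻¹ := by rw [← lt_div_iff₀ hN, one_div]
    classical
    simp only [indicator, mem_ofPred_eq, hnorm, hdir, hlt, mem_Iio, mem_preimage, Pi.one_apply]
    split_ifs <;> simp_all
  rw [setLIntegral_congr_fun measurableSet_Ioi hray,
    lintegral_mul_const _ (by fun_prop (disch := measurability)),
    setLIntegral_indicator measurableSet_Iio, Iio_inter_Ioi,
    setLIntegral_Ioo_pow n (inv_nonneg.2 hN.le), inv_pow]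

end Cone

section Measure

variable {E : Type*} [NormedAddCommGroup E] [InnerProductSpace ℝ E] [FiniteDimensional ℝ E]
  [MeasurableSpace E] [BorelSpace E] {e : E}

lemma measurePreserving_smul_add_coe_orthogonal (he : ‖e‖ = 1) :
    MeasurePreserving (fun q : ℝ × (ℝ ∙ e)ᗮ ↦ q.1 • e + (q.2 : E)) := by
  have hline := (LinearIsometryEquiv.toSpanUnitSingleton (𝕜 := ℝ) e he).measurePreserving
  have hsum := (ℝ ∙ e).orthogonalDecomposition.symm.measurePreserving.comp
    (WithLp.volume_preserving_toLp (ℝ ∙ e) (ℝ ∙ e)ᗮ)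
  convert hsum.comp (hline.prod (.id volume)) using 1
  · ext q
    simp
  · rfl

lemma setLIntegral_inner_pos (he : ‖e‖ = 1) {h : E → ℝ≥0∞} (hh : Measurable h) :
    ∫⁻ y in {y | 0 < ⟪e, y⟫}, h y = ∫⁻ w : (ℝ ∙ e)ᗮ, ∫⁻ s in Ioi (0 : ℝ),
      ENNReal.ofReal (s ^ finrank ℝ (ℝ ∙ e)ᗮ) * h (s • (e + w)) := by
  have hmp := measurePreserving_smul_add_coe_orthogonal he
  have hpre : (fun q : ℝ × (ℝ ∙ e)ᗮ ↦ q.1 • e + (q.2 : E)) ⁻¹' {y | 0 < ⟪e, y⟫} =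
      Ioi 0 ×ˢ univ := by
    ext q
    simp [inner_add_right, real_inner_smul_right, inner_coe_orthogonal, he]
  have hhalf : MeasurableSet {y : E | 0 < ⟪e, y⟫} :=
    measurableSet_lt measurable_const (by fun_prop)
  calc ∫⁻ y in {y | 0 < ⟪e, y⟫}, h y
      = ∫⁻ q in Ioi (0 : ℝ) ×ˢ (univ : Set (ℝ ∙ e)ᗮ), h (q.1 • e + (q.2 : E)) := by
        rw [← hpre, hmp.setLIntegral_comp_preimage hhalf hh]
    _ = ∫⁻ s in Ioi (0 : ℝ), ∫⁻ w : (ℝ ∙ e)ᗮ, h (s • e + (w : E)) := by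
        rw [Measure.volume_eq_prod, setLIntegral_prod _ (by fun_prop), Measure.restrict_univ]
    _ = ∫⁻ s in Ioi (0 : ℝ), ∫⁻ w : (ℝ ∙ e)ᗮ,
          ENNReal.ofReal (s ^ finrank ℝ (ℝ ∙ e)ᗮ) * h (s • (e + w)) := by
        refine setLIntegral_congr_fun measurableSet_Ioi fun s hs ↦ ?_
        rw [lintegral_eq_pow_mul_lintegral_comp_smul volume _ hs,
          ← lintegral_const_mul _ (by fun_prop)]
        simp only [smul_add, Submodule.coe_smul]
    _ = _ := lintegral_lintegral_swap (by fun_prop)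

lemma map_restrict_toSphere_inner_pos (he : ‖e‖ = 1) :
    ((volume : Measure E).toSphere.restrict {ω | 0 < ⟪e, (ω : E)⟫}).map (↑) =
      ((volume : Measure (ℝ ∙ e)ᗮ).withDensity
        fun w ↦ ENNReal.ofReal (‖e + w‖ ^ finrank ℝ E)⁻¹).map (gnomonic e) := by
  have hgn := (continuous_gnomonic he).measurable
  ext B hB
  have hcone : MeasurableSet {y : E | ‖y‖ < 1 ∧ ‖y‖⁻¹ • y ∈ B} :=
    (measurableSet_lt measurable_norm measurable_const).inter
      (measurable_norm.inv.smul measurable_id hB)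
  have hhemi : MeasurableSet {ω : sphere (0 : E) 1 | 0 < ⟪e, (ω : E)⟫} :=
    measurableSet_lt measurable_const (by fun_prop)
  have hdim : finrank ℝ (ℝ ∙ e)ᗮ + 1 = finrank ℝ E := by
    rw [← (ℝ ∙ e).finrank_add_finrank_orthogonal,
      finrank_span_singleton (ne_zero_of_norm_ne_zero (he ▸ one_ne_zero)), add_comm]
  rw [Measure.map_apply measurable_subtype_coe hB, Measure.restrict_apply' hhemi, inter_comm,
    Measure.toSphere_apply' _ (hhemi.inter (measurable_subtype_coe hB)),
    Ioo_smul_image_hemisphere, ← Measure.restrict_apply hcone, ← lintegral_indicator_one hcone,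
    setLIntegral_inner_pos he (measurable_one.indicator hcone)]
  simp_rw [setLIntegral_Ioi_pow_mul_indicator_smul_add he]
  rw [Measure.map_apply hgn hB, withDensity_apply _ (hgn hB), ← lintegral_indicator (hgn hB),
    ← lintegral_const_mul _ (by fun_prop (disch := measurability))]
  refine lintegral_congr fun w ↦ ?_
  by_cases hw : w ∈ gnomonic e ⁻¹' B
  · rw [indicator_of_mem hw, indicator_of_mem hw, Pi.one_apply, mul_one, ← hdim,
      ← ENNReal.ofReal_natCast, ← ENNReal.ofReal_mul (by positivity), Nat.cast_add_one,
      mul_div_cancel₀ _ (by positivity)]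
  · rw [indicator_of_notMem hw, indicator_of_notMem hw, mul_zero, mul_zero]

variable {F : Type*} [NormedAddCommGroup F] [NormedSpace ℝ F] {f : E → F}

lemma setIntegral_toSphere_inner_pos (he : ‖e‖ = 1) (hf : StronglyMeasurable f) :
    ∫ ω in {ω : sphere (0 : E) 1 | 0 < ⟪e, (ω : E)⟫}, f ω ∂(volume : Measure E).toSphere =
      ∫ w : (ℝ ∙ e)ᗮ, (‖e + w‖ ^ finrank ℝ E)⁻¹ • f (gnomonic e w) := by
  have hgn := (continuous_gnomonic he).measurable
  rw [← integral_map measurable_subtype_coe.aemeasurable hf.aestronglyMeasurable,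
    map_restrict_toSphere_inner_pos he,
    integral_map hgn.aemeasurable hf.aestronglyMeasurable,
    integral_withDensity_eq_integral_toReal_smul (by fun_prop) (by simp)]
  simp (disch := positivity) only [ENNReal.toReal_ofReal]

lemma pow_smul_setIntegral_toSphere_inner_pos (he : ‖e‖ = 1) (hf : StronglyMeasurable f)
    {R : ℝ} (hR : 0 < R) :
    R ^ finrank ℝ (ℝ ∙ e)ᗮ • ∫ ω in {ω : sphere (0 : E) 1 | 0 < ⟪e, (ω : E)⟫},
        f (R • (ω - e)) ∂(volume : Measure E).toSphere =
      ∫ w, gnomonicBlowup e f R w := by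
  rw [setIntegral_toSphere_inner_pos he (f := fun y ↦ f (R • (y - e)))
      (hf.comp_measurable (by fun_prop)),
    ← Measure.integral_comp_inv_smul_of_nonneg volume _ hR.le]
  rfl

lemma tendsto_integral_gnomonicBlowup (he : ‖e‖ = 1) (hf : Continuous f)
    (hsupp : HasCompactSupport f) :
    Tendsto (fun R ↦ ∫ w, gnomonicBlowup e f R w) atTop (𝓝 (∫ w : (ℝ ∙ e)ᗮ, f w)) := by
  obtain ⟨C, hC⟩ := hsupp.exists_bound_of_continuous hf
  obtain ⟨M, hM_pos, hM⟩ := hsupp.exists_pos_le_norm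
  refine tendsto_integral_filter_of_dominated_convergence
    ((closedBall 0 (2 * M)).indicator fun _ ↦ C) ?_ ?_ ?_ ?_
  · exact .of_forall fun R ↦ (continuous_gnomonicBlowup he hf R).aestronglyMeasurable
  · filter_upwards [eventually_ge_atTop (2 * M)] with R hR
    exact .of_forall (norm_gnomonicBlowup_le_indicator he (fun y hy ↦ hM y hy.le) hC
      (by linarith) hR)
  · exact (integrableOn_const measure_closedBall_lt_top.ne).integrable_indicator
      measurableSet_closedBall
  · exact .of_forall (tendsto_gnomonicBlowup he hf)

theorem tendsto_pow_smul_integral_toSphere (he : ‖e‖ = 1) (hf : Continuous f)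
    (hsupp : HasCompactSupport f) :
    Tendsto (fun R : ℝ ↦ R ^ finrank ℝ (ℝ ∙ e)ᗮ •
        ∫ ω : sphere (0 : E) 1, f (R • (ω - e)) ∂(volume : Measure E).toSphere)
      atTop (𝓝 (∫ w : (ℝ ∙ e)ᗮ, f w)) := by
  obtain ⟨M, hM_pos, hM⟩ := hsupp.exists_pos_le_norm
  refine (tendsto_integral_gnomonicBlowup he hf hsupp).congr' ?_
  filter_upwards [eventually_gt_atTop M] with R hR
  rw [← setIntegral_inner_pos_comp_smul_sub _ he (fun y hy ↦ hM y hy.le) hR,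
    pow_smul_setIntegral_toSphere_inner_pos he
      (hf.stronglyMeasurable_of_hasCompactSupport hsupp) (hM_pos.trans hR)]

theorem tendsto_pow_smul_integral_toSphere_tangent_hyperplane {x : E} (hx : ‖x‖ = 1)
    (hf : Continuous f) (hsupp : HasCompactSupport f) (t : ℝ) :
    Tendsto (fun r : ℝ ↦ (t + r) ^ finrank ℝ (ℝ ∙ x)ᗮ •
        ∫ ω : sphere (0 : E) 1, f (r • x + (t + r) • (ω : E)) ∂(volume : Measure E).toSphere)
      atTop (𝓝 (∫ w : (ℝ ∙ x)ᗮ, f ((-t) • x + w))) := by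
  have hblowup := tendsto_pow_smul_integral_toSphere (e := -x) (by rwa [norm_neg])
    (f := fun y ↦ f ((-t) • x + y)) (by fun_prop)
    (hsupp.comp_homeomorph (.addLeft ((-t) • x)))
  rw [← Set.neg_singleton, Submodule.span_neg] at hblowup
  refine (hblowup.comp (tendsto_atTop_add_const_left _ t tendsto_id)).congr fun r ↦ ?_
  have hpoint (ω : E) : (-t) • x + (t + r) • (ω - -x) = r • x + (t + r) • ω := by module
  simp only [Function.comp_apply, id_eq, hpoint]

end Measure

section OrthonormalBasis

lemma exists_orthonormalBasis_submodule_coe_eq {𝕜 E ι : Type*} [RCLike 𝕜] [NormedAddCommGroup E]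
    [InnerProductSpace 𝕜 E] [Fintype ι] {K : Submodule 𝕜 E} [FiniteDimensional 𝕜 K] {v : ι → E}
    (hv : Orthonormal 𝕜 v) (hmem : ∀ i, v i ∈ K) (hcard : Fintype.card ι = finrank 𝕜 K) :
    ∃ b : OrthonormalBasis ι 𝕜 K, ∀ i, (b i : E) = v i := by
  have hw : Orthonormal 𝕜 (fun i ↦ (⟨v i, hmem i⟩ : K)) := hv.codRestrict K hmem
  have hspan := (hw.linearIndependent.span_eq_top_of_card_eq_finrank' hcard).ge
  exact ⟨.mk hw hspan, fun i ↦ by simp⟩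

variable {E F : Type*} [NormedAddCommGroup E] [InnerProductSpace ℝ E] [FiniteDimensional ℝ E]
  [MeasurableSpace E] [BorelSpace E] [NormedAddCommGroup F] [NormedSpace ℝ F]

lemma integral_eq_integral_pi_sum_smul {ι : Type*} [Fintype ι] (b : OrthonormalBasis ι ℝ E)
    (g : E → F) : ∫ y, g y = ∫ a : ι → ℝ, g (∑ i, a i • b i) := by
  rw [← b.measurePreserving_measurableEquiv.symm.integral_comp' g,
    ← (EuclideanSpace.volume_preserving_symm_measurableEquiv_toLp ι).symm.integral_comp']
  simp [OrthonormalBasis.measurableEquiv, OrthonormalBasis.sum_repr_symm]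

lemma integral_submodule_eq_integral_prod {K : Submodule ℝ E} (hK : finrank ℝ K = 2) {u v : E}
    (hu_mem : u ∈ K) (hv_mem : v ∈ K) (hu : ‖u‖ = 1) (hv : ‖v‖ = 1) (huv : ⟪u, v⟫ = 0)
    (g : E → F) :
    ∫ w : K, g w = ∫ ab : ℝ × ℝ, g (ab.1 • u + ab.2 • v) := by
  have horth : Orthonormal ℝ ![u, v] := by simp [orthonormal_vecCons_iff, hu, hv, huv]
  have hmem (i : Fin 2) : ![u, v] i ∈ K := by fin_cases i <;> simpa
  obtain ⟨b, hb⟩ := exists_orthonormalBasis_submodule_coe_eq horth hmem hK.symm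
  rw [integral_eq_integral_pi_sum_smul b,
    ← (volume_preserving_finTwoArrow ℝ).symm.integral_comp']
  simp [hb]

end OrthonormalBasis

/-- **Time-domain far-field pattern in 3D** (Theorem 3.1, `d = 3`).
Let `S : ℝ³ → ℝ` be continuous with compact support and let
`p(x,t) = (t/(4π)) ∫_{S²} S(x + tω) dσ(ω)` be the Kirchhoff solution with initial
velocity `S`. Fix a unit vector `x̂` and orthonormal vectors `u, v` completing it to an
orthonormal basis of `ℝ³`. Then for every `t ∈ ℝ`,
`lim_{r→∞} r p(r x̂, t + r) = (1/(4π)) ∫_{ℝ²} S(−t x̂ + a u + b v) da db`. -/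
theorem far_field_pattern_3d
    (σ : Measure (Metric.sphere (0 : EuclideanSpace ℝ (Fin 3)) 1))
    (hσ : σ = (volume : Measure (EuclideanSpace ℝ (Fin 3))).toSphere)
    (S : EuclideanSpace ℝ (Fin 3) → ℝ)
    (hS : Continuous S) (hsupp : HasCompactSupport S)
    (p : EuclideanSpace ℝ (Fin 3) → ℝ → ℝ)
    (hp : ∀ x t, p x t = (t / (4 * π)) *
      ∫ ω : Metric.sphere (0 : EuclideanSpace ℝ (Fin 3)) 1,
        S (x + t • (ω : EuclideanSpace ℝ (Fin 3))) ∂σ)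
    (xhat u v : EuclideanSpace ℝ (Fin 3))
    (hxhat : ‖xhat‖ = 1) (hu : ‖u‖ = 1) (hv : ‖v‖ = 1)
    (hxu : ⟪xhat, u⟫ = 0) (hxv : ⟪xhat, v⟫ = 0) (huv : ⟪u, v⟫ = 0)
    (t : ℝ) :
    Tendsto (fun r : ℝ => r * p (r • xhat) (t + r)) atTop
      (𝓝 ((1 / (4 * π)) *
        ∫ ab : ℝ × ℝ, S ((-t) • xhat + ab.1 • u + ab.2 • v))) := by
  have hne : xhat ≠ 0 := ne_zero_of_norm_ne_zero (hxhat ▸ one_ne_zero)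
  have : Fact (finrank ℝ (EuclideanSpace ℝ (Fin 3)) = 2 + 1) := ⟨finrank_euclideanSpace_fin⟩
  have hrank : finrank ℝ (ℝ ∙ xhat)ᗮ = 2 := Submodule.finrank_orthogonal_span_singleton hne
  have hplane := integral_submodule_eq_integral_prod hrank
    (Submodule.mem_orthogonal_singleton_iff_inner_right.2 hxu)
    (Submodule.mem_orthogonal_singleton_iff_inner_right.2 hxv) hu hv huv
    (fun y ↦ S ((-t) • xhat + y))
  have hsphere := tendsto_pow_smul_integral_toSphere_tangent_hyperplane hxhat hS hsupp t
  rw [hrank, hplane] at hsphere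
  have hlim := ((tendsto_div_const_add_atTop_nhds_one t).mul hsphere).const_mul (1 / (4 * π))
  simp only [one_mul, ← add_assoc] at hlim
  refine hlim.congr' ?_
  filter_upwards [eventually_gt_atTop (-t)] with r hr
  have hradius : t + r ≠ 0 := by linarith
  rw [hp, hσ, smul_eq_mul]
  field_simp
end

section
/- Let S : ℝ² → ℝ be continuous with compact support, and let p(x,t) := ∫_{ℝ²} 1_{{|x−y| < t}} · S(y) / (2π √(t² − |x−y|²)) dy be the solution of the two-dimensional wave equation with zero initial value and initial velocity S. Then for every unit vector x̂ ∈ ℝ² and every t ∈ ℝ, lim_{r→∞} √r · p(r x̂, t + r) = (1/(2√2 π)) ∫_{ℝ²} 1_{{t + x̂·y > 0}} (t + x̂·y)^{−1/2} S(y) dy. -/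
open MeasureTheory Real Filter
open scoped RealInnerProductSpace Topology

/-!
The rescaled kernel converges pointwise, because
`(t + r)² - ‖r x̂ - y‖² = 2 r (t + ⟪x̂, y⟫) + t² - ‖y‖²`, but its singularity sits on the wavefront,
a sphere that moves with `r`, so no fixed integrable function dominates it. On the line at distance
`b` from the axis `ℝ x̂` the wavefront is met where `⟪x̂, y⟫ = r - √((t + r)² - b²)`. Shearing along
`x̂` by this amount preserves the volume and makes the front a hyperplane `{u = 0}`, near which the
kernel is at most a multiple of `u ^ (-1/2)`. Pulled back, these bounds form a family of dominating
functions that depends on `r` but has constant integral and converges pointwise, which is enough for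
dominated convergence.
-/

theorem ae_norm_le_toReal_eLpNorm_top {α F : Type*} [MeasurableSpace α] {μ : Measure α}
    [NormedAddCommGroup F] {f : α → F} (hf : MemLp f ⊤ μ) :
    ∀ᵐ a ∂μ, ‖f a‖ ≤ (eLpNorm f ⊤ μ).toReal := by
  filter_upwards [ae_le_eLpNormEssSup (f := f) (μ := μ)] with a ha
  rw [← eLpNorm_exponent_top] at ha
  simpa only [toReal_enorm] using ENNReal.toReal_mono hf.eLpNorm_ne_top ha

section MovingDominants

variable {α ι F : Type*} [MeasurableSpace α] {μ : Measure α} [NormedAddCommGroup F]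
  {l : Filter ι} [l.IsCountablyGenerated] {g : ι → α → ℝ} {g₀ : α → ℝ}

/-- Scheffé's lemma. -/
theorem tendsto_integral_abs_sub_of_tendsto_integral
    (hg_int : ∀ᶠ i in l, Integrable (g i) μ) (hg₀_int : Integrable g₀ μ)
    (hg_nonneg : ∀ᶠ i in l, 0 ≤ᵐ[μ] g i)
    (hg_lim : ∀ᵐ a ∂μ, Tendsto (fun i => g i a) l (𝓝 (g₀ a)))
    (hg_integral : Tendsto (fun i => ∫ a, g i a ∂μ) l (𝓝 (∫ a, g₀ a ∂μ))) :
    Tendsto (fun i => ∫ a, |g i a - g₀ a| ∂μ) l (𝓝 0) := by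
  have min_lim : Tendsto (fun i => ∫ a, min (g i a) (g₀ a) ∂μ) l (𝓝 (∫ a, g₀ a ∂μ)) := by
    refine tendsto_integral_filter_of_dominated_convergence (fun a => |g₀ a|) ?_ ?_ hg₀_int.abs ?_
    · filter_upwards [hg_int] with i hi using (hi.inf hg₀_int).aestronglyMeasurable
    · filter_upwards [hg_nonneg] with i hi
      filter_upwards [hi] with a ha
      rw [Real.norm_eq_abs, abs_le]
      exact ⟨le_min ((neg_nonpos.2 (abs_nonneg _)).trans ha) (neg_abs_le _),
        (min_le_right _ _).trans (le_abs_self _)⟩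
    · filter_upwards [hg_lim] with a ha
      simpa only [min_self] using ha.min (tendsto_const_nhds (x := g₀ a))
  have sum_lim := (hg_integral.add_const (∫ a, g₀ a ∂μ)).sub (min_lim.const_mul 2)
  rw [two_mul, sub_self] at sum_lim
  refine sum_lim.congr' ?_
  filter_upwards [hg_int] with i hi
  rw [← integral_add hi hg₀_int, ← integral_const_mul]
  refine (integral_sub (hi.add hg₀_int) ((hi.inf hg₀_int).const_mul 2)).symm.trans ?_
  congr with a
  change g i a + g₀ a - 2 * min (g i a) (g₀ a) = _
  linarith [max_sub_min_eq_abs (g i a) (g₀ a), abs_sub_comm (g i a) (g₀ a),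
    min_add_max (g i a) (g₀ a)]

variable [NormedSpace ℝ F] {f : ι → α → F} {f₀ : α → F}

theorem tendsto_integral_of_norm_le_of_tendsto_integral_abs_sub
    (hf_meas : ∀ᶠ i in l, AEStronglyMeasurable (f i) μ) (hf₀_int : Integrable f₀ μ)
    (hg_int : ∀ᶠ i in l, Integrable (g i) μ) (hg₀_int : Integrable g₀ μ)
    (hfg : ∀ᶠ i in l, ∀ᵐ a ∂μ, ‖f i a‖ ≤ g i a)
    (hf_lim : ∀ᵐ a ∂μ, Tendsto (fun i => f i a) l (𝓝 (f₀ a)))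
    (hg_L1 : Tendsto (fun i => ∫ a, |g i a - g₀ a| ∂μ) l (𝓝 0)) :
    Tendsto (fun i => ∫ a, f i a ∂μ) l (𝓝 (∫ a, f₀ a ∂μ)) := by
  have hf_int : ∀ᶠ i in l, Integrable (f i) μ := by
    filter_upwards [hf_meas, hg_int, hfg] with i hf hg hi using hg.mono' hf hi
  have cap_int : Integrable (fun a => |g₀ a| + ‖f₀ a‖) μ := hg₀_int.abs.add hf₀_int.norm
  have capped_lim :
      Tendsto (fun i => ∫ a, min ‖f i a - f₀ a‖ (|g₀ a| + ‖f₀ a‖) ∂μ) l (𝓝 0) := by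
    rw [show (0 : ℝ) = ∫ _, 0 ∂μ from (integral_zero α ℝ).symm]
    refine tendsto_integral_filter_of_dominated_convergence _ ?_ ?_ cap_int ?_
    · filter_upwards [hf_int] with i hf
      exact ((hf.sub hf₀_int).norm.inf cap_int).aestronglyMeasurable
    · refine .of_forall fun i => .of_forall fun a => ?_
      rw [Real.norm_of_nonneg (by positivity)]
      exact min_le_right _ _
    · filter_upwards [hf_lim] with a ha
      have h := (ha.sub_const (f₀ a)).norm.min (tendsto_const_nhds (x := |g₀ a| + ‖f₀ a‖))
      rwa [sub_self, norm_zero, min_eq_left (by positivity)] at h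
  rw [tendsto_iff_norm_sub_tendsto_zero]
  refine squeeze_zero' (.of_forall fun i => norm_nonneg _) ?_
    (by simpa only [add_zero] using capped_lim.add hg_L1)
  filter_upwards [hf_int, hg_int, hfg] with i hf hg hi
  have capped_int := (hf.sub hf₀_int).norm.inf cap_int
  rw [← integral_sub hf hf₀_int]
  refine (norm_integral_le_integral_norm _).trans ?_
  refine (integral_mono_ae (hf.sub hf₀_int).norm (capped_int.add (hg.sub hg₀_int).abs) ?_).trans_eq
    (integral_add capped_int (hg.sub hg₀_int).abs)
  filter_upwards [hi] with a ha
  change ‖f i a - f₀ a‖ ≤ min ‖f i a - f₀ a‖ (|g₀ a| + ‖f₀ a‖) + |g i a - g₀ a|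
  rw [← min_add_add_right]
  refine le_min (le_add_of_nonneg_right (abs_nonneg _)) ?_
  linarith [norm_sub_le (f i a) (f₀ a), le_abs_self (g i a - g₀ a), le_abs_self (g₀ a)]

/-- Pratt's generalization of the dominated convergence theorem. -/
theorem tendsto_integral_of_norm_le_of_tendsto_integral
    (hf_meas : ∀ᶠ i in l, AEStronglyMeasurable (f i) μ) (hf₀_int : Integrable f₀ μ)
    (hg_int : ∀ᶠ i in l, Integrable (g i) μ) (hg₀_int : Integrable g₀ μ)
    (hfg : ∀ᶠ i in l, ∀ᵐ a ∂μ, ‖f i a‖ ≤ g i a)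
    (hf_lim : ∀ᵐ a ∂μ, Tendsto (fun i => f i a) l (𝓝 (f₀ a)))
    (hg_lim : ∀ᵐ a ∂μ, Tendsto (fun i => g i a) l (𝓝 (g₀ a)))
    (hg_integral : Tendsto (fun i => ∫ a, g i a ∂μ) l (𝓝 (∫ a, g₀ a ∂μ))) :
    Tendsto (fun i => ∫ a, f i a ∂μ) l (𝓝 (∫ a, f₀ a ∂μ)) := by
  have hg_nonneg : ∀ᶠ i in l, 0 ≤ᵐ[μ] g i := by
    filter_upwards [hfg] with i hi
    filter_upwards [hi] with a ha using (norm_nonneg _).trans ha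
  have hg_L1 :=
    tendsto_integral_abs_sub_of_tendsto_integral hg_int hg₀_int hg_nonneg hg_lim hg_integral
  exact tendsto_integral_of_norm_le_of_tendsto_integral_abs_sub hf_meas hf₀_int hg_int hg₀_int hfg
    hf_lim hg_L1

end MovingDominants

section Profile

/-- The integrable function `e^{-u} u^{-1/2}` on the half-line, a majorant of `u^{-1/2}` on bounded
sets up to a constant. It vanishes for `u ≤ 0`, where `√u = 0`. -/
noncomputable def gammaProfile (u : ℝ) : ℝ := exp (-u) * (√u)⁻¹

theorem gammaProfile_nonneg (u : ℝ) : 0 ≤ gammaProfile u := by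
  unfold gammaProfile
  positivity

theorem continuousAt_gammaProfile {u : ℝ} (hu : u ≠ 0) : ContinuousAt gammaProfile u := by
  rcases hu.lt_or_gt with hneg | hpos
  · refine (continuousAt_const (y := (0 : ℝ))).congr ?_
    filter_upwards [eventually_lt_nhds hneg] with v hv
    simp [gammaProfile, sqrt_eq_zero_of_nonpos hv.le]
  · exact continuous_neg.rexp.continuousAt.mul
      (continuous_sqrt.continuousAt.inv₀ (sqrt_pos.2 hpos).ne')

theorem integrable_gammaProfile : Integrable gammaProfile := by
  have h : IntegrableOn gammaProfile (Set.Ioi 0) := by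
    refine (GammaIntegral_convergent one_half_pos).congr_fun (fun u hu => ?_) measurableSet_Ioi
    rw [gammaProfile, sqrt_eq_rpow, ← rpow_neg (Set.mem_Ioi.1 hu).le]
    norm_num
  refine h.integrable_of_forall_notMem_eq_zero fun u hu => ?_
  simp [gammaProfile, sqrt_eq_zero_of_nonpos (Set.notMem_Ioi.1 hu)]

theorem inv_sqrt_le_exp_mul_gammaProfile {u M : ℝ} (hu : u ≤ M) :
    (√u)⁻¹ ≤ exp M * gammaProfile u := by
  rw [gammaProfile, ← mul_assoc, ← exp_add]
  exact le_mul_of_one_le_left (by positivity) (one_le_exp (by linarith))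

end Profile

section FrontShift

/-- A sphere of radius `t + r` about `r x̂` meets the line parallel to `x̂` at distance `b` from the
axis `ℝ x̂` at axial coordinate `-frontShift t r b` (and at one further point, far away for
large `r`). -/
noncomputable def frontShift (t r b : ℝ) : ℝ := √((t + r) ^ 2 - b ^ 2) - r

theorem measurable_frontShift (t r : ℝ) : Measurable (frontShift t r) := by
  unfold frontShift
  fun_prop

theorem frontShift_le {t r : ℝ} (hr : 0 ≤ t + r) (b : ℝ) : frontShift t r b ≤ t := by
  have : √((t + r) ^ 2 - b ^ 2) ≤ t + r :=
    sqrt_le_iff.2 ⟨hr, sub_le_self _ (sq_nonneg b)⟩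
  unfold frontShift
  linarith

theorem tendsto_sqrt_sq_sub_sq_sub_self (b : ℝ) :
    Tendsto (fun s : ℝ => √(s ^ 2 - b ^ 2) - s) atTop (𝓝 0) := by
  have lower_lim : Tendsto (fun s : ℝ => -(b ^ 2 * s⁻¹)) atTop (𝓝 0) := by
    simpa using (tendsto_inv_atTop_zero.const_mul (b ^ 2)).neg
  refine tendsto_of_tendsto_of_tendsto_of_le_of_le' lower_lim tendsto_const_nhds ?_ ?_
  · filter_upwards [eventually_gt_atTop 0, eventually_ge_atTop |b|] with s hs hbs
    have hb : b ^ 2 ≤ s ^ 2 := sq_le_sq.2 (hbs.trans (le_abs_self s))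
    have hsq : (s - b ^ 2 * s⁻¹) ^ 2 ≤ s ^ 2 - b ^ 2 := by
      have hratio : (b ^ 2 * s⁻¹) ^ 2 ≤ b ^ 2 := by
        rw [← div_eq_mul_inv, div_pow, div_le_iff₀ (by positivity)]
        nlinarith [sq_nonneg b]
      have hprod : s * (b ^ 2 * s⁻¹) = b ^ 2 := by field_simp
      nlinarith
    linarith [le_sqrt_of_sq_le hsq]
  · filter_upwards [eventually_ge_atTop 0] with s hs
    exact sub_nonpos.2 (sqrt_le_iff.2 ⟨hs, sub_le_self _ (sq_nonneg b)⟩)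

theorem tendsto_frontShift (t b : ℝ) :
    Tendsto (fun r => frontShift t r b) atTop (𝓝 t) := by
  have h := ((tendsto_sqrt_sq_sub_sq_sub_self b).comp
    (tendsto_atTop_add_const_left atTop t tendsto_id)).add_const t
  rw [zero_add] at h
  refine h.congr fun r => ?_
  simp only [Function.comp_apply, id, frontShift]
  ring

end FrontShift

section Shear

variable {E : Type*} [NormedAddCommGroup E] [InnerProductSpace ℝ E]

theorem norm_sq_eq_inner_sq_add_norm_sq_orthogonalProjectionOnto {v : E} (hv : ‖v‖ = 1) (y : E) :
    ‖y‖ ^ 2 = ⟪v, y⟫ ^ 2 + ‖(ℝ ∙ v)ᗮ.orthogonalProjectionOnto y‖ ^ 2 := by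
  have h : ‖(ℝ ∙ v).orthogonalProjectionOnto y‖ = |⟪v, y⟫| := by
    rw [Submodule.coe_norm, ← Submodule.starProjection_apply,
      Submodule.starProjection_unit_singleton ℝ hv, norm_smul, hv, mul_one, Real.norm_eq_abs]
  rw [Submodule.norm_sq_eq_add_norm_sq_projection y (ℝ ∙ v), h, sq_abs]

/-- Cartesian coordinates of `y` with respect to the axis `ℝ v` and its orthogonal complement, with
the axial coordinate shifted by an amount `c` that depends only on the transverse one. -/
noncomputable def shearedCoords (v : E) (c : (ℝ ∙ v)ᗮ → ℝ) (y : E) : ℝ × (ℝ ∙ v)ᗮ :=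
  (⟪v, y⟫ + c ((ℝ ∙ v)ᗮ.orthogonalProjectionOnto y), (ℝ ∙ v)ᗮ.orthogonalProjectionOnto y)

theorem measurePreserving_shear {β G : Type*} [MeasurableSpace β] [MeasurableSpace G] [AddGroup G]
    [MeasurableAdd₂ G] (μ : Measure G) [SFinite μ] [μ.IsAddRightInvariant]
    (ν : Measure β) [SFinite ν] {c : β → G} (hc : Measurable c) :
    MeasurePreserving (fun z : G × β => (z.1 + c z.2, z.2)) (μ.prod ν) (μ.prod ν) := by
  have h := (MeasurePreserving.id ν).skew_product (μc := μ) (g := fun b x => x + c b)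
    (by simp only [Function.uncurry_def]; fun_prop)
    (.of_forall fun b => (measurePreserving_add_right μ (c b)).map_eq)
  exact Measure.measurePreserving_swap.comp (h.comp Measure.measurePreserving_swap)

variable [FiniteDimensional ℝ E] [MeasurableSpace E] [BorelSpace E]

theorem measurePreserving_inner_prodMk_orthogonalProjectionOnto {v : E} (hv : ‖v‖ = 1) :
    MeasurePreserving fun y : E => (⟪v, y⟫, (ℝ ∙ v)ᗮ.orthogonalProjectionOnto y) := by
  have split := (WithLp.volume_preserving_ofLp (ℝ ∙ v) (ℝ ∙ v)ᗮ).comp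
    (ℝ ∙ v).orthogonalDecomposition.measurePreserving
  let toLine := LinearIsometryEquiv.toSpanUnitSingleton (𝕜 := ℝ) v hv
  convert (toLine.symm.measurePreserving.prod (MeasurePreserving.id volume)).comp split
    using 1
  on_goal 2 => rfl
  ext y : 1
  have axial : toLine.symm ((ℝ ∙ v).orthogonalProjectionOnto y) = ⟪v, y⟫ := by
    rw [LinearIsometryEquiv.symm_apply_eq]
    ext
    rw [← Submodule.starProjection_apply, Submodule.starProjection_unit_singleton ℝ hv]
    rfl
  simp [axial]

theorem measurePreserving_shearedCoords {v : E} (hv : ‖v‖ = 1) {c : (ℝ ∙ v)ᗮ → ℝ}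
    (hc : Measurable c) : MeasurePreserving (shearedCoords v c) :=
  (measurePreserving_shear volume volume hc).comp
    (measurePreserving_inner_prodMk_orthogonalProjectionOnto hv)

theorem ae_add_inner_ne_zero {v : E} (hv : ‖v‖ = 1) (t : ℝ) :
    ∀ᵐ y : E, t + ⟪v, y⟫ ≠ 0 := by
  have h := Measure.quasiMeasurePreserving_fst.comp
    (measurePreserving_inner_prodMk_orthogonalProjectionOnto hv).quasiMeasurePreserving
  filter_upwards [h.ae (Measure.ae_ne volume (-t))] with y hy ht
  exact hy (eq_neg_of_add_eq_zero_right ht)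

theorem integral_comp_shearedCoords {v : E} (hv : ‖v‖ = 1) {c : (ℝ ∙ v)ᗮ → ℝ} (hc : Measurable c)
    {F : Type*} [NormedAddCommGroup F] [NormedSpace ℝ F] {G : ℝ × (ℝ ∙ v)ᗮ → F}
    (hG : AEStronglyMeasurable G) : ∫ y, G (shearedCoords v c y) = ∫ z, G z := by
  have hmp := measurePreserving_shearedCoords hv hc
  rw [← hmp.map_eq, integral_map hmp.measurable.aemeasurable (by rwa [hmp.map_eq])]

end Shear

section Kernel

variable {E : Type*} [NormedAddCommGroup E] [InnerProductSpace ℝ E]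

/-- The kernel of `√r p(r x̂, t + r)` up to the factor `2π`. For `t + r ≥ 0` it vanishes outside the
light cone `‖r x̂ - y‖ < t + r`, where the square root of a nonpositive number is `0`. -/
noncomputable def retardedKernel (xhat : E) (t r : ℝ) (y : E) : ℝ :=
  √r * (√((t + r) ^ 2 - ‖r • xhat - y‖ ^ 2))⁻¹

/-- The limit of `retardedKernel xhat t r` as `r → ∞`. It vanishes for `t + ⟪xhat, y⟫ ≤ 0`, where
the square root is `0`. -/
noncomputable def farFieldKernel (xhat : E) (t : ℝ) (y : E) : ℝ :=
  (√(2 * (t + ⟪xhat, y⟫)))⁻¹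

variable {xhat : E} {t r : ℝ} {y : E}

theorem measurable_retardedKernel [MeasurableSpace E] [BorelSpace E] (xhat : E) (t r : ℝ) :
    Measurable (retardedKernel xhat t r) := by
  unfold retardedKernel
  fun_prop

theorem measurable_farFieldKernel [MeasurableSpace E] [BorelSpace E] (xhat : E) (t : ℝ) :
    Measurable (farFieldKernel xhat t) := by
  have h : Continuous fun y : E => ⟪xhat, y⟫ := by fun_prop
  exact ((h.measurable.const_add t).const_mul 2).sqrt.inv

theorem retardedKernel_nonneg : 0 ≤ retardedKernel xhat t r y := by
  unfold retardedKernel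
  positivity

theorem sq_sub_norm_smul_sub_sq (hxhat : ‖xhat‖ = 1) :
    (t + r) ^ 2 - ‖r • xhat - y‖ ^ 2 = 2 * r * (t + ⟪xhat, y⟫) + (t ^ 2 - ‖y‖ ^ 2) := by
  rw [norm_sub_sq_real, norm_smul, hxhat, mul_one, Real.norm_eq_abs, sq_abs, real_inner_smul_left]
  ring

theorem tendsto_retardedKernel (hxhat : ‖xhat‖ = 1) (hy : t + ⟪xhat, y⟫ ≠ 0) :
    Tendsto (fun r => retardedKernel xhat t r y) atTop (𝓝 (farFieldKernel xhat t y)) := by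
  have radicand_lim : Tendsto (fun r : ℝ => 2 * (t + ⟪xhat, y⟫) + (t ^ 2 - ‖y‖ ^ 2) * r⁻¹) atTop
      (𝓝 (2 * (t + ⟪xhat, y⟫))) := by
    simpa using (tendsto_inv_atTop_zero.const_mul (t ^ 2 - ‖y‖ ^ 2)).const_add
      (2 * (t + ⟪xhat, y⟫))
  have kernel_eq : ∀ᶠ r : ℝ in atTop,
      (√(2 * (t + ⟪xhat, y⟫) + (t ^ 2 - ‖y‖ ^ 2) * r⁻¹))⁻¹ = retardedKernel xhat t r y := by
    filter_upwards [eventually_gt_atTop 0] with r hr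
    rw [retardedKernel, sq_sub_norm_smul_sub_sq hxhat, ← inv_inv (√r), ← mul_inv,
      ← div_eq_inv_mul, ← sqrt_div' _ hr.le]
    congr 2
    field_simp
  refine Tendsto.congr' kernel_eq ?_
  rcases hy.lt_or_gt with hneg | hpos
  · rw [farFieldKernel, sqrt_eq_zero_of_nonpos (by linarith), inv_zero]
    refine tendsto_const_nhds.congr' ?_
    filter_upwards [radicand_lim.eventually_lt_const (show 2 * (t + ⟪xhat, y⟫) < 0 by linarith)]
      with r hr
    rw [sqrt_eq_zero_of_nonpos hr.le, inv_zero]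
  · exact radicand_lim.sqrt.inv₀ (sqrt_pos.2 (by positivity)).ne'

theorem retardedKernel_le_inv_sqrt (hxhat : ‖xhat‖ = 1) (hr : 0 < r) (hy : 2 * ‖y‖ ≤ r)
    (hyt : ‖y‖ ≤ t + r) :
    retardedKernel xhat t r y ≤
      √2 * (√(⟪xhat, y⟫ + frontShift t r ‖(ℝ ∙ xhat)ᗮ.orthogonalProjectionOnto y‖))⁻¹ := by
  set b := ‖(ℝ ∙ xhat)ᗮ.orthogonalProjectionOnto y‖
  set a := ⟪xhat, y⟫
  set d := √((t + r) ^ 2 - b ^ 2)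
  have pythagoras : ‖y‖ ^ 2 = a ^ 2 + b ^ 2 :=
    norm_sq_eq_inner_sq_add_norm_sq_orthogonalProjectionOnto hxhat y
  have hb : b ≤ ‖y‖ := Submodule.norm_orthogonalProjectionOnto_apply_le _ y
  have ha : a ≤ ‖y‖ := by simpa [hxhat] using real_inner_le_norm xhat y
  have hd : d ^ 2 = (t + r) ^ 2 - b ^ 2 :=
    sq_sqrt (sub_nonneg.2 (pow_le_pow_left₀ (norm_nonneg _) (hb.trans hyt) 2))
  have far_factor : r / 2 ≤ d + r - a := by linarith [sqrt_nonneg ((t + r) ^ 2 - b ^ 2)]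
  have factorization : (t + r) ^ 2 - ‖r • xhat - y‖ ^ 2 = (a + frontShift t r b) * (d + r - a) := by
    change _ = (a + (d - r)) * (d + r - a)
    rw [sq_sub_norm_smul_sub_sq hxhat]
    linear_combination -hd - pythagoras
  have far_bound : √r * (√(d + r - a))⁻¹ ≤ √2 := by
    rw [← div_eq_mul_inv, ← sqrt_div hr.le]
    exact sqrt_le_sqrt ((div_le_iff₀ (by linarith)).2 (by linarith))
  rw [retardedKernel, factorization, sqrt_mul' _ (by linarith), mul_inv_rev, ← mul_assoc]
  gcongr

theorem sqrt_mul_ite_eq_retardedKernel_smul (hr : 0 ≤ t + r) (s : ℝ) :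
    √r * (if ‖r • xhat - y‖ < t + r
      then s / (2 * π * √((t + r) ^ 2 - ‖r • xhat - y‖ ^ 2)) else 0) =
      (2 * π)⁻¹ * (retardedKernel xhat t r y • s) := by
  rw [retardedKernel, smul_eq_mul]
  split_ifs with h
  · rw [div_eq_mul_inv, mul_inv]
    ring
  · rw [sqrt_eq_zero_of_nonpos (sub_nonpos.2 (pow_le_pow_left₀ hr (not_lt.1 h) 2))]
    simp

theorem ite_eq_farFieldKernel_smul (s : ℝ) :
    1 / (2 * √2 * π) * (if 0 < t + ⟪xhat, y⟫ then (√(t + ⟪xhat, y⟫))⁻¹ * s else 0) =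
      (2 * π)⁻¹ * (farFieldKernel xhat t y • s) := by
  rw [farFieldKernel, sqrt_mul zero_le_two, smul_eq_mul]
  split_ifs with h
  · field_simp
  · rw [sqrt_eq_zero_of_nonpos (not_lt.1 h)]
    simp

end Kernel

section Majorant

variable {W : Type*} [NormedAddCommGroup W] {R : ℝ}

/-- A majorant for the singularity `u^{-1/2}` of the kernel at the straightened front `u = 0`, cut
off to the cylinder of transverse radius `R`. -/
noncomputable def frontMajorant (R : ℝ) (z : ℝ × W) : ℝ :=
  gammaProfile z.1 * (Metric.closedBall 0 R).indicator 1 z.2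

theorem frontMajorant_nonneg (z : ℝ × W) : 0 ≤ frontMajorant R z :=
  mul_nonneg (gammaProfile_nonneg _) (Set.indicator_nonneg (fun _ _ => zero_le_one) _)

theorem integrable_frontMajorant [InnerProductSpace ℝ W] [FiniteDimensional ℝ W]
    [MeasurableSpace W] [BorelSpace W] : Integrable (frontMajorant (W := W) R) := by
  refine integrable_gammaProfile.mul_prod (ν := volume) ?_
  exact (integrable_indicator_iff Metric.isClosed_closedBall.measurableSet).2
    (integrableOn_const Metric.isBounded_closedBall.measure_lt_top.ne)

variable {E F : Type*} [NormedAddCommGroup E] [InnerProductSpace ℝ E] [NormedAddCommGroup F]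
  [NormedSpace ℝ F] {xhat y : E} {t r C : ℝ} {S : E → F}

theorem retardedKernel_le_frontMajorant (hxhat : ‖xhat‖ = 1) (hr : 0 < r) (hRr : 2 * R ≤ r)
    (hRt : R ≤ t + r) (hy : ‖y‖ ≤ R) :
    retardedKernel xhat t r y ≤ √2 * exp (R + t) *
      frontMajorant R (shearedCoords xhat (fun w => frontShift t r ‖w‖) y) := by
  have transverse_le : ‖(ℝ ∙ xhat)ᗮ.orthogonalProjectionOnto y‖ ≤ R :=
    (Submodule.norm_orthogonalProjectionOnto_apply_le _ y).trans hy
  have axial_le : ⟪xhat, y⟫ ≤ R :=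
    calc ⟪xhat, y⟫ ≤ ‖xhat‖ * ‖y‖ := real_inner_le_norm xhat y
      _ ≤ R := by rwa [hxhat, one_mul]
  have shift_le := frontShift_le (by linarith [norm_nonneg y] : 0 ≤ t + r)
    ‖(ℝ ∙ xhat)ᗮ.orthogonalProjectionOnto y‖
  rw [frontMajorant, shearedCoords, Set.indicator_of_mem (mem_closedBall_zero_iff.2 transverse_le),
    Pi.one_apply, mul_one, mul_assoc]
  refine (retardedKernel_le_inv_sqrt hxhat hr (by linarith) (by linarith)).trans ?_
  gcongr
  exact inv_sqrt_le_exp_mul_gammaProfile (add_le_add axial_le shift_le)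

theorem norm_retardedKernel_smul_le (hxhat : ‖xhat‖ = 1) (hr : 0 < r) (hRr : 2 * R ≤ r)
    (hRt : R ≤ t + r) (hSR : S y ≠ 0 → ‖y‖ ≤ R) (hSC : ‖S y‖ ≤ C) :
    ‖retardedKernel xhat t r y • S y‖ ≤ √2 * exp (R + t) * C *
      frontMajorant R (shearedCoords xhat (fun w => frontShift t r ‖w‖) y) := by
  have majorant_nonneg := frontMajorant_nonneg (R := R)
    (shearedCoords xhat (fun w => frontShift t r ‖w‖) y)
  have hC : 0 ≤ C := (norm_nonneg _).trans hSC
  by_cases hS : S y = 0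
  · rw [hS, smul_zero, norm_zero]
    positivity
  · rw [norm_smul, Real.norm_of_nonneg retardedKernel_nonneg, mul_right_comm]
    gcongr
    exact retardedKernel_le_frontMajorant hxhat hr hRr hRt (hSR hS)

theorem tendsto_frontMajorant_shearedCoords (hy : t + ⟪xhat, y⟫ ≠ 0) :
    Tendsto (fun r => frontMajorant R (shearedCoords xhat (fun w => frontShift t r ‖w‖) y)) atTop
      (𝓝 (frontMajorant R (shearedCoords xhat (fun _ => t) y))) := by
  refine Tendsto.mul_const _ (Tendsto.comp (continuousAt_gammaProfile ?_) ?_)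
  · rwa [shearedCoords, add_comm]
  · exact (tendsto_frontShift t _).const_add _

end Majorant

section Limit

variable {E F : Type*} [NormedAddCommGroup E] [InnerProductSpace ℝ E] [FiniteDimensional ℝ E]
  [MeasurableSpace E] [BorelSpace E] [NormedAddCommGroup F] [NormedSpace ℝ F]

theorem integrable_frontMajorant_shearedCoords {v : E} (hv : ‖v‖ = 1) {c : (ℝ ∙ v)ᗮ → ℝ}
    (hc : Measurable c) {R : ℝ} : Integrable fun y => frontMajorant R (shearedCoords v c y) :=
  (measurePreserving_shearedCoords hv hc).integrable_comp_of_integrable integrable_frontMajorant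

theorem integral_frontMajorant_shearedCoords {v : E} (hv : ‖v‖ = 1) {c : (ℝ ∙ v)ᗮ → ℝ}
    (hc : Measurable c) {R : ℝ} :
    ∫ y, frontMajorant R (shearedCoords v c y) = ∫ z : ℝ × (ℝ ∙ v)ᗮ, frontMajorant R z :=
  integral_comp_shearedCoords hv hc integrable_frontMajorant.aestronglyMeasurable

theorem tendsto_integral_retardedKernel_smul {S : E → F} (hS : MemLp S ⊤)
    (hsupp : HasCompactSupport S) {xhat : E} (hxhat : ‖xhat‖ = 1) (t : ℝ) :
    Tendsto (fun r => ∫ y, retardedKernel xhat t r y • S y) atTop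
      (𝓝 (∫ y, farFieldKernel xhat t y • S y)) := by
  obtain ⟨R, hR⟩ := hsupp.isCompact.isBounded.exists_norm_le
  have hSR : ∀ y, S y ≠ 0 → ‖y‖ ≤ R := fun y hy => hR y (subset_tsupport S hy)
  obtain ⟨C, hC⟩ : ∃ C, ∀ᵐ y, ‖S y‖ ≤ C := ⟨_, ae_norm_le_toReal_eLpNorm_top hS⟩
  let g (r : ℝ) (y : E) : ℝ := √2 * exp (R + t) * C *
    frontMajorant R (shearedCoords xhat (fun w => frontShift t r ‖w‖) y)
  let g₀ (y : E) : ℝ := √2 * exp (R + t) * C *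
    frontMajorant R (shearedCoords xhat (fun _ => t) y)
  have shift_meas : ∀ r, Measurable fun w : (ℝ ∙ xhat)ᗮ => frontShift t r ‖w‖ := fun r =>
    (measurable_frontShift t r).comp measurable_norm
  have g_int : ∀ r, Integrable (g r) := fun r =>
    (integrable_frontMajorant_shearedCoords hxhat (shift_meas r)).const_mul _
  have g₀_int : Integrable g₀ :=
    (integrable_frontMajorant_shearedCoords hxhat measurable_const).const_mul _
  have g_integral : ∀ r, ∫ y, g r y = ∫ y, g₀ y := fun r => by
    simp only [g, g₀, integral_const_mul,
      integral_frontMajorant_shearedCoords hxhat (shift_meas r),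
      integral_frontMajorant_shearedCoords hxhat measurable_const]
  have g_lim : ∀ᵐ y, Tendsto (fun r => g r y) atTop (𝓝 (g₀ y)) := by
    filter_upwards [ae_add_inner_ne_zero hxhat t] with y hy
    exact (tendsto_frontMajorant_shearedCoords hy).const_mul _
  have f_lim : ∀ᵐ y, Tendsto (fun r => retardedKernel xhat t r y • S y) atTop
      (𝓝 (farFieldKernel xhat t y • S y)) := by
    filter_upwards [ae_add_inner_ne_zero hxhat t] with y hy
    exact (tendsto_retardedKernel hxhat hy).smul_const _
  have bound : ∀ᶠ r in atTop, ∀ y, ‖S y‖ ≤ C → ‖retardedKernel xhat t r y • S y‖ ≤ g r y := by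
    filter_upwards [eventually_gt_atTop 0, eventually_ge_atTop (2 * R), eventually_ge_atTop (R - t)]
      with r hr hRr hRt y hy
    exact norm_retardedKernel_smul_le hxhat hr hRr (by linarith) (hSR y) hy
  have f₀_int : Integrable fun y => farFieldKernel xhat t y • S y := by
    refine g₀_int.mono' ((measurable_farFieldKernel xhat t).aestronglyMeasurable.smul hS.1) ?_
    filter_upwards [hC, f_lim, g_lim] with y hy hf hg
    exact le_of_tendsto_of_tendsto hf.norm hg (bound.mono fun r hr => hr y hy)
  refine tendsto_integral_of_norm_le_of_tendsto_integral (.of_forall fun r =>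
    (measurable_retardedKernel xhat t r).aestronglyMeasurable.smul hS.1) f₀_int
    (.of_forall g_int) g₀_int (bound.mono fun r hr => hC.mono hr) f_lim g_lim ?_
  simp only [g_integral]
  exact tendsto_const_nhds

theorem far_field_pattern_2d_general (S : E → ℝ) (hS : MemLp S ⊤) (hsupp : HasCompactSupport S)
    (xhat : E) (hxhat : ‖xhat‖ = 1) (t : ℝ) :
    Tendsto (fun r : ℝ => √r * ∫ y : E,
        if ‖r • xhat - y‖ < t + r
        then S y / (2 * π * √((t + r) ^ 2 - ‖r • xhat - y‖ ^ 2)) else 0) atTop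
      (𝓝 ((1 / (2 * √2 * π)) * ∫ y : E,
        if 0 < t + ⟪xhat, y⟫ then (√(t + ⟪xhat, y⟫))⁻¹ * S y else 0)) := by
  have h := (tendsto_integral_retardedKernel_smul hS hsupp hxhat t).const_mul (2 * π)⁻¹
  simp only [← integral_const_mul] at h ⊢
  simp only [ite_eq_farFieldKernel_smul]
  refine h.congr' ?_
  filter_upwards [eventually_ge_atTop (-t)] with r hr
  simp only [sqrt_mul_ite_eq_retardedKernel_smul (by linarith : 0 ≤ t + r)]

end Limit

/-- **Time-domain far-field pattern in 2D** (Theorem 3.1, `d = 2`).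
Let `S : ℝ² → ℝ` be continuous with compact support and let
`p(x,t) = ∫_{|x−y|<t} S(y)/(2π√(t²−|x−y|²)) dy` be the Poisson solution of the 2D wave
equation with zero initial value and initial velocity `S`. Then for every unit vector
`x̂ ∈ ℝ²` and every `t ∈ ℝ`,
`lim_{r→∞} √r p(r x̂, t + r) = (1/(2√2 π)) ∫_{t + x̂·y > 0} (t + x̂·y)^{−1/2} S(y) dy`. -/
theorem far_field_pattern_2d
    (S : EuclideanSpace ℝ (Fin 2) → ℝ)
    (hS : Continuous S) (hsupp : HasCompactSupport S)
    (p : EuclideanSpace ℝ (Fin 2) → ℝ → ℝ)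
    (hp : ∀ x t, p x t =
      ∫ y : EuclideanSpace ℝ (Fin 2),
        if ‖x - y‖ < t then S y / (2 * π * Real.sqrt (t ^ 2 - ‖x - y‖ ^ 2)) else 0)
    (xhat : EuclideanSpace ℝ (Fin 2)) (hxhat : ‖xhat‖ = 1) (t : ℝ) :
    Tendsto (fun r : ℝ => Real.sqrt r * p (r • xhat) (t + r)) atTop
      (𝓝 ((1 / (2 * Real.sqrt 2 * π)) *
        ∫ y : EuclideanSpace ℝ (Fin 2),
          if 0 < t + ⟪xhat, y⟫ then (Real.sqrt (t + ⟪xhat, y⟫))⁻¹ * S y else 0)) := by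
  simp only [hp]
  exact far_field_pattern_2d_general S (hS.memLp_of_hasCompactSupport hsupp) hsupp xhat hxhat t
end

section
/- Let S : ℝ² → ℝ be continuous with compact support and define the two-dimensional time-domain far-field pattern p^∞(x̂,t) := (1/(2√2 π)) ∫_{ℝ²} 1_{{t + x̂·y > 0}} (t + x̂·y)^{−1/2} S(y) dy. Then for every unit vector x̂ ∈ ℝ² and every k > 0, the Abel-regularized temporal Fourier transform of p^∞ satisfies lim_{η→0⁺} ∫_ℝ p^∞(x̂,t) e^{ikt} e^{−ηt} dt = (e^{iπ/4}/√(8πk)) ∫_{ℝ²} e^{−ik x̂·y} S(y) dy. (For each η > 0 the integral converges absolutely, since p^∞(x̂,t) vanishes for t below a finite threshold and decays like t^{−1/2} as t → +∞.) -/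
open MeasureTheory Real Filter
open scoped RealInnerProductSpace Topology

/-!
For fixed `x̂` the pattern `p^∞(x̂, ·)` is a superposition of the translates `t ↦ K (t + x̂·y)` of
the kernel `K s = s₊^{-1/2}`, weighted by `S`. Its Laplace transform at `z = η - ik` therefore
factors, by Fubini and translation invariance, as the Laplace transform `(π / z)^{1/2}` of `K` times
`∫ e^{z x̂·y} S(y) dy`. Both factors have a limit as `η → 0⁺`: the first because `π / z` tends to
`iπ / k`, which is off the branch cut, the second by dominated convergence.
-/

section Superposition

variable {X : Type*} [MeasurableSpace X] {μ : Measure X}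

theorem integral_integral_comp_add_mul {G 𝕜 : Type*} [MeasurableSpace G] [AddGroup G]
    [MeasurableAdd₂ G] {ν : Measure G} [ν.IsAddRightInvariant] [SFinite ν] [SFinite μ] [RCLike 𝕜]
    {φ : X → G} {f : G → 𝕜} {g : X → 𝕜}
    (hφ : Measurable φ) (hf : Integrable f ν) (hg : Integrable g μ) :
    ∫ t, ∫ y, f (t + φ y) * g y ∂μ ∂ν = (∫ s, f s ∂ν) * ∫ y, g y ∂μ := by
  have shear : MeasurePreserving (fun p : X × G ↦ (p.1, p.2 + φ p.1)) (μ.prod ν) (μ.prod ν) :=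
    (MeasurePreserving.id μ).skew_product (by fun_prop)
      (ae_of_all _ fun y ↦ map_add_right_eq_self ν (φ y))
  have integrable_shear : Integrable (fun p : G × X ↦ f (p.1 + φ p.2) * g p.2) (ν.prod μ) := by
    simpa only [Function.comp_def, Prod.fst_swap, Prod.snd_swap, mul_comm] using
      (shear.integrable_comp_of_integrable (hg.mul_prod hf)).swap
  calc ∫ t, ∫ y, f (t + φ y) * g y ∂μ ∂ν
      = ∫ y, ∫ t, f (t + φ y) * g y ∂ν ∂μ := integral_integral_swap integrable_shear
    _ = ∫ y, (∫ s, f s ∂ν) * g y ∂μ := by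
      simp only [integral_mul_const, integral_add_right_eq_self f]
    _ = (∫ s, f s ∂ν) * ∫ y, g y ∂μ := integral_const_mul _ _

variable {φ : X → ℝ}

theorem integral_superposition_mul_cexp [SFinite μ] {K : ℝ → ℂ} {S : X → ℂ} {z : ℂ}
    (hφ : Measurable φ) (hK : Integrable fun s : ℝ ↦ K s * Complex.exp (-(z * s)))
    (hS : Integrable (fun y ↦ Complex.exp (z * φ y) * S y) μ) :
    ∫ t : ℝ, (∫ y, K (t + φ y) * S y ∂μ) * Complex.exp (-(z * t)) =
      (∫ s : ℝ, K s * Complex.exp (-(z * s))) * ∫ y, Complex.exp (z * φ y) * S y ∂μ := by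
  rw [← integral_integral_comp_add_mul hφ hK hS]
  refine integral_congr_ae (ae_of_all _ fun t ↦ ?_)
  simp only [← integral_mul_const]
  refine integral_congr_ae (ae_of_all _ fun y ↦ ?_)
  have exp_split : Complex.exp (-(z * t)) =
      Complex.exp (-(z * (t + φ y : ℝ))) * Complex.exp (z * φ y) := by
    rw [← Complex.exp_add]
    push_cast
    ring_nf
  simp only [exp_split]
  ring

section ExpWeight

variable {E : Type*} [NormedAddCommGroup E] [NormedSpace ℝ E] {g : X → E} {η η₀ : ℝ}

theorem norm_exp_mul_smul_le (hη : 0 ≤ η) (hηη₀ : η ≤ η₀) (x : ℝ) (v : E) :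
    ‖rexp (η * x) • v‖ ≤ ‖v‖ + ‖rexp (η₀ * x) • v‖ := by
  have exp_le : rexp (η * x) ≤ 1 + rexp (η₀ * x) := by
    rcases le_total 0 x with hx | hx
    · linarith [exp_le_exp.2 (mul_le_mul_of_nonneg_right hηη₀ hx)]
    · linarith [exp_le_one_iff.2 (mul_nonpos_of_nonneg_of_nonpos hη hx), exp_pos (η₀ * x)]
  simpa only [norm_smul, norm_eq_abs, abs_exp, add_mul, one_mul] using
    mul_le_mul_of_nonneg_right exp_le (norm_nonneg v)

theorem integrable_exp_mul_smul (hφ : Measurable φ) (hg : Integrable g μ)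
    (hgexp : Integrable (fun y ↦ rexp (η₀ * φ y) • g y) μ) (hη : 0 ≤ η) (hηη₀ : η ≤ η₀) :
    Integrable (fun y ↦ rexp (η * φ y) • g y) μ :=
  (hg.norm.add hgexp.norm).mono'
    ((by fun_prop : Measurable fun y ↦ rexp (η * φ y)).aestronglyMeasurable.smul hg.1)
    (ae_of_all _ fun y ↦ norm_exp_mul_smul_le hη hηη₀ (φ y) (g y))

theorem tendsto_integral_exp_mul_smul (hφ : Measurable φ) (hg : Integrable g μ) (hη₀ : 0 < η₀)
    (hgexp : Integrable (fun y ↦ rexp (η₀ * φ y) • g y) μ) :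
    Tendsto (fun η ↦ ∫ y, rexp (η * φ y) • g y ∂μ) (𝓝[>] 0) (𝓝 (∫ y, g y ∂μ)) := by
  have eventually_mem : ∀ᶠ η in 𝓝[>] (0 : ℝ), η ∈ Set.Ioo 0 η₀ := Ioo_mem_nhdsGT hη₀
  refine tendsto_integral_filter_of_dominated_convergence _ ?_ ?_ (hg.norm.add hgexp.norm)
    (ae_of_all _ fun y ↦ ?_)
  · filter_upwards [eventually_mem] with η hη
    exact (integrable_exp_mul_smul hφ hg hgexp hη.1.le hη.2.le).1
  · filter_upwards [eventually_mem] with η hη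
    exact ae_of_all _ fun y ↦ norm_exp_mul_smul_le hη.1.le hη.2.le (φ y) (g y)
  · have continuous_weight : Continuous fun η ↦ rexp (η * φ y) • g y := by fun_prop
    simpa using (continuous_weight.tendsto 0).mono_left nhdsWithin_le_nhds

end ExpWeight

theorem tendsto_abel_fourier_superposition [SFinite μ] {K : ℝ → ℂ} {S : X → ℂ} {k η₀ : ℝ} {L : ℂ}
    (hφ : Measurable φ) (hS : Integrable S μ) (hη₀ : 0 < η₀)
    (hSexp : Integrable (fun y ↦ rexp (η₀ * φ y) • S y) μ)
    (hK : ∀ η : ℝ, 0 < η →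
      Integrable fun s : ℝ ↦ K s * Complex.exp (-((η - Complex.I * k) * s)))
    (hKlim : Tendsto (fun η : ℝ ↦ ∫ s : ℝ, K s * Complex.exp (-((η - Complex.I * k) * s)))
      (𝓝[>] 0) (𝓝 L)) :
    Tendsto
      (fun η : ℝ ↦ ∫ t : ℝ, (∫ y, K (t + φ y) * S y ∂μ) *
        Complex.exp (-((η - Complex.I * k) * t)))
      (𝓝[>] 0) (𝓝 (L * ∫ y, Complex.exp (-Complex.I * k * φ y) * S y ∂μ)) := by
  let T (y : X) : ℂ := Complex.exp (-Complex.I * k * φ y) * S y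
  have norm_phase (y : X) : ‖Complex.exp (-Complex.I * k * φ y)‖ = 1 := by
    simp [Complex.norm_exp]
  have measurable_phase : AEStronglyMeasurable (fun y ↦ Complex.exp (-Complex.I * k * φ y)) μ :=
    (by fun_prop : Measurable _).aestronglyMeasurable
  have hT : Integrable T μ := hS.bdd_mul measurable_phase (ae_of_all _ fun y ↦ (norm_phase y).le)
  have hTexp : Integrable (fun y ↦ rexp (η₀ * φ y) • T y) μ := by
    simpa only [T, mul_smul_comm] using
      hSexp.bdd_mul measurable_phase (ae_of_all _ fun y ↦ (norm_phase y).le)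
  have exp_mul_eq (η : ℝ) (y : X) :
      Complex.exp ((η - Complex.I * k) * φ y) * S y = rexp (η * φ y) • T y := by
    simp only [T, Complex.real_smul, Complex.ofReal_exp, ← mul_assoc, ← Complex.exp_add]
    push_cast
    ring_nf
  refine (hKlim.mul (tendsto_integral_exp_mul_smul hφ hT hη₀ hTexp)).congr' ?_
  filter_upwards [Ioo_mem_nhdsGT hη₀] with η hη
  have hTη := integrable_exp_mul_smul hφ hT hTexp hη.1.le hη.2.le
  simp only [← exp_mul_eq] at hTη ⊢
  exact (integral_superposition_mul_cexp hφ (hK η hη.1) hTη).symm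

end Superposition

section AbelKernel

/-- The Abel kernel `s₊^{-1/2}`, i.e. `1 / √s` for `s > 0` and `0` otherwise: the time profile of
the two-dimensional far field of a point source. -/
noncomputable def abelKernel : ℝ → ℝ :=
  (Set.Ioi 0).indicator fun s ↦ (√s)⁻¹

theorem abelKernel_mul (s : ℝ) (c : ℂ) :
    (abelKernel s : ℂ) * c = if 0 < s then (√s : ℂ)⁻¹ * c else 0 := by
  split_ifs with hs <;> simp [abelKernel, hs]

theorem abelKernel_mul_cexp_eq_indicator (z : ℂ) :
    (fun s : ℝ ↦ (abelKernel s : ℂ) * Complex.exp (-(z * s))) =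
      (Set.Ioi 0).indicator fun s : ℝ ↦ (√s : ℂ)⁻¹ * Complex.exp (-(z * s)) := by
  ext s
  simp only [abelKernel_mul, Set.indicator_apply, Set.mem_Ioi]

theorem integrable_abelKernel_mul_cexp {z : ℂ} (hz : 0 < z.re) :
    Integrable fun s : ℝ ↦ (abelKernel s : ℂ) * Complex.exp (-(z * s)) := by
  rw [abelKernel_mul_cexp_eq_indicator, integrable_indicator_iff measurableSet_Ioi]
  have integrable_bound : IntegrableOn (fun s ↦ s ^ (-1 / 2 : ℝ) * rexp (-z.re * s ^ (1 : ℝ)))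
      (Set.Ioi 0) :=
    integrableOn_rpow_mul_exp_neg_mul_rpow (by norm_num) one_pos hz
  refine Integrable.mono' integrable_bound
    (by fun_prop : Measurable _).aestronglyMeasurable ?_
  filter_upwards [ae_restrict_mem measurableSet_Ioi] with s (hs : 0 < s)
  have rpow_eq : s ^ (-1 / 2 : ℝ) = (√s)⁻¹ := by
    rw [sqrt_eq_rpow, ← rpow_neg hs.le, neg_div]
  simp [rpow_eq, Complex.norm_exp, abs_of_nonneg (sqrt_nonneg s)]

-- The substitution `s = x ^ 2` turns the integral into a Gaussian one.
theorem integral_abelKernel_mul_cexp {z : ℂ} (hz : 0 < z.re) :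
    ∫ s : ℝ, (abelKernel s : ℂ) * Complex.exp (-(z * s)) = (π / z) ^ (1 / 2 : ℂ) := by
  rw [abelKernel_mul_cexp_eq_indicator, integral_indicator measurableSet_Ioi,
    ← integral_comp_rpow_Ioi_of_pos two_pos]
  calc ∫ x : ℝ in Set.Ioi 0, (2 * x ^ ((2 : ℝ) - 1)) •
        ((√(x ^ (2 : ℝ)) : ℂ)⁻¹ * Complex.exp (-(z * (x ^ (2 : ℝ) : ℝ))))
      = ∫ x : ℝ in Set.Ioi 0, 2 * Complex.exp (-z * (x : ℂ) ^ 2) := by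
        refine setIntegral_congr_fun measurableSet_Ioi fun x (hx : 0 < x) ↦ ?_
        have jacobian : x ^ ((2 : ℝ) - 1) = x := by norm_num
        have hx' : (x : ℂ) ≠ 0 := by exact_mod_cast hx.ne'
        simp only [jacobian, rpow_two, sqrt_sq hx.le, Complex.real_smul, neg_mul]
        push_cast
        field_simp
    _ = (π / z) ^ (1 / 2 : ℂ) := by
        rw [integral_const_mul, integral_gaussian_complex_Ioi hz, mul_div_cancel₀ _ two_ne_zero]

theorem ofReal_mul_I_cpow {r : ℝ} (hr : 0 < r) (a : ℂ) :
    ((r : ℂ) * Complex.I) ^ a = (r : ℂ) ^ a * Complex.exp (π / 2 * Complex.I * a) := by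
  have hr' : (r : ℂ) ≠ 0 := by exact_mod_cast hr.ne'
  rw [Complex.cpow_def_of_ne_zero (mul_ne_zero hr' Complex.I_ne_zero),
    Complex.cpow_def_of_ne_zero hr', Complex.log_ofReal_mul hr Complex.I_ne_zero, Complex.log_I,
    Complex.ofReal_log hr.le, add_mul, Complex.exp_add]

theorem tendsto_ofReal_div_sub_I_mul_cpow {c k : ℝ} (hc : 0 < c) (hk : 0 < k) (a : ℂ) :
    Tendsto (fun η : ℝ ↦ (c / (η - Complex.I * k) : ℂ) ^ a) (𝓝 0)
      (𝓝 (((c / k : ℝ) : ℂ) ^ a * Complex.exp (π / 2 * Complex.I * a))) := by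
  have hk' : (k : ℂ) ≠ 0 := by exact_mod_cast hk.ne'
  have base_zero : (c / ((0 : ℝ) - Complex.I * k) : ℂ) = (c / k : ℝ) * Complex.I := by
    rw [div_eq_iff (by simp [hk'])]
    push_cast
    field_simp
    linear_combination (c * k : ℂ) * Complex.I_mul_I
  have continuousAt_base : ContinuousAt (fun η : ℝ ↦ (c / (η - Complex.I * k) : ℂ)) 0 :=
    continuousAt_const.div (by fun_prop) (by simp [hk'])
  have base_zero_mem : (c / ((0 : ℝ) - Complex.I * k) : ℂ) ∈ Complex.slitPlane := by
    rw [base_zero, Complex.mem_slitPlane_iff]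
    simp [hk.ne', hc.ne']
  rw [← ofReal_mul_I_cpow (by positivity), ← base_zero]
  exact (continuousAt_base.cpow continuousAt_const base_zero_mem).tendsto

theorem tendsto_integral_abelKernel_mul_cexp {k : ℝ} (hk : 0 < k) :
    Tendsto
      (fun η : ℝ ↦ ∫ s : ℝ, (abelKernel s : ℂ) * Complex.exp (-((η - Complex.I * k) * s)))
      (𝓝[>] 0) (𝓝 (√(π / k) * Complex.exp (Complex.I * π / 4))) := by
  have limit_eq : ((π / k : ℝ) : ℂ) ^ (1 / 2 : ℂ) * Complex.exp (π / 2 * Complex.I * (1 / 2)) =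
      √(π / k) * Complex.exp (Complex.I * π / 4) := by
    rw [sqrt_eq_rpow, Complex.ofReal_cpow (by positivity)]
    push_cast
    ring_nf
  rw [← limit_eq]
  refine ((tendsto_ofReal_div_sub_I_mul_cpow pi_pos hk _).mono_left nhdsWithin_le_nhds).congr' ?_
  filter_upwards [self_mem_nhdsWithin] with η (hη : 0 < η)
  exact (integral_abelKernel_mul_cexp (by simpa using hη)).symm

end AbelKernel

theorem one_div_two_mul_sqrt_two_mul_pi_mul_sqrt_pi_div (k : ℝ) :
    1 / (2 * √2 * π) * √(π / k) = 1 / √(8 * π * k) := by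
  have sqrt_eight : √8 = 2 * √2 := by
    rw [show (8 : ℝ) = 2 ^ 2 * 2 by norm_num, sqrt_mul (by norm_num), sqrt_sq zero_le_two]
  rw [sqrt_div pi_pos.le, sqrt_mul (by positivity), sqrt_mul (by norm_num), sqrt_eight]
  nth_rw 1 [← mul_self_sqrt pi_pos.le]
  field_simp

theorem far_field_fourier_2d_general {X : Type*} [MeasurableSpace X] {μ : Measure X} [SFinite μ]
    {φ : X → ℝ} {S : X → ℂ} {p : ℝ → ℂ} {k η₀ : ℝ} (hφ : Measurable φ) (hS : Integrable S μ)
    (hη₀ : 0 < η₀) (hSexp : Integrable (fun y ↦ rexp (η₀ * φ y) • S y) μ)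
    (hp : ∀ t, p t = (1 / (2 * √2 * π) : ℝ) *
      ∫ y, if 0 < t + φ y then (√(t + φ y) : ℂ)⁻¹ * S y else 0 ∂μ)
    (hk : 0 < k) :
    Tendsto (fun η : ℝ ↦ ∫ t : ℝ, p t * Complex.exp (Complex.I * k * t) * rexp (-η * t))
      (𝓝[>] 0)
      (𝓝 (Complex.exp (Complex.I * π / 4) / √(8 * π * k) *
        ∫ y, Complex.exp (-Complex.I * k * φ y) * S y ∂μ)) := by
  have limit := (tendsto_abel_fourier_superposition hφ hS hη₀ hSexp
    (fun η hη ↦ integrable_abelKernel_mul_cexp (by simpa using hη))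
    (tendsto_integral_abelKernel_mul_cexp hk)).const_mul ((1 / (2 * √2 * π) : ℝ) : ℂ)
  have constant_eq : ((1 / (2 * √2 * π) : ℝ) : ℂ) * (√(π / k) * Complex.exp (Complex.I * π / 4)) =
      Complex.exp (Complex.I * π / 4) / √(8 * π * k) := by
    rw [← mul_assoc, ← Complex.ofReal_mul, one_div_two_mul_sqrt_two_mul_pi_mul_sqrt_pi_div]
    push_cast
    ring
  have exp_eq (η t : ℝ) : Complex.exp (Complex.I * k * t) * rexp (-η * t) =
      Complex.exp (-((η - Complex.I * k) * t)) := by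
    rw [Complex.ofReal_exp, ← Complex.exp_add]
    push_cast
    ring_nf
  rw [← mul_assoc, constant_eq] at limit
  refine limit.congr fun η ↦ ?_
  rw [← integral_const_mul]
  refine integral_congr_ae (ae_of_all _ fun t ↦ ?_)
  dsimp only
  rw [mul_assoc (p t), exp_eq, hp, ← mul_assoc]
  simp only [abelKernel_mul]

/-- **Time/frequency correspondence of the far-field patterns in 2D** (Theorem 3.4, `d = 2`).
Let `S : ℝ² → ℝ` be continuous with compact support and
`p^∞(x̂,t) = (1/(2√2 π)) ∫_{t + x̂·y > 0} (t + x̂·y)^{−1/2} S(y) dy` be the 2D time-domain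
far-field pattern. Then for every unit vector `x̂` and every `k > 0`, the Abel-regularized
temporal Fourier transform satisfies
`lim_{η→0⁺} ∫_ℝ p^∞(x̂,t) e^{ikt} e^{−ηt} dt = (e^{iπ/4}/√(8πk)) ∫_{ℝ²} e^{−ik x̂·y} S(y) dy`. -/
theorem far_field_fourier_2d
    (S : EuclideanSpace ℝ (Fin 2) → ℝ)
    (hS : Continuous S) (hsupp : HasCompactSupport S)
    (pinf : EuclideanSpace ℝ (Fin 2) → ℝ → ℝ)
    (hpinf : ∀ xhat t, pinf xhat t =
      (1 / (2 * Real.sqrt 2 * π)) *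
        ∫ y : EuclideanSpace ℝ (Fin 2),
          if 0 < t + ⟪xhat, y⟫ then (Real.sqrt (t + ⟪xhat, y⟫))⁻¹ * S y else 0)
    (xhat : EuclideanSpace ℝ (Fin 2)) (hxhat : ‖xhat‖ = 1) (k : ℝ) (hk : 0 < k) :
    Tendsto (fun η : ℝ =>
        ∫ t : ℝ, (pinf xhat t : ℂ) * Complex.exp (Complex.I * (k : ℂ) * (t : ℂ)) *
          (Real.exp (-η * t) : ℂ))
      (𝓝[>] (0 : ℝ))
      (𝓝 ((Complex.exp (Complex.I * (π : ℂ) / 4) / (Real.sqrt (8 * π * k) : ℂ)) *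
        ∫ y : EuclideanSpace ℝ (Fin 2),
          Complex.exp (-Complex.I * (k : ℂ) * (⟪xhat, y⟫ : ℂ)) * (S y : ℂ))) := by
  have hSc : Continuous fun y ↦ (S y : ℂ) := by fun_prop
  have hSc_supp : HasCompactSupport fun y ↦ (S y : ℂ) := hsupp.comp_left Complex.ofReal_zero
  have hweight : Continuous fun y ↦ rexp (1 * ⟪xhat, y⟫) := by fun_prop
  exact far_field_fourier_2d_general (by fun_prop)
    (hSc.integrable_of_hasCompactSupport hSc_supp) one_pos
    (hweight.locallyIntegrable.integrable_smul_right_of_hasCompactSupport hSc hSc_supp)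
    (fun t ↦ by simp [hpinf, ← integral_complex_ofReal, apply_ite Complex.ofReal]) hk
end

section
/- Let S : ℝ³ → ℝ be smooth with compact support. Let P : S² × ℝ → ℝ be the time-domain far-field pattern, i.e. P(x̂,t) = (1/(4π)) ∫_{ℝ²} S(−t x̂ + a u + b v) da db for every unit vector x̂ and every (equivalently, some) orthonormal pair u, v completing x̂ to an orthonormal basis of ℝ³. Then for every y ∈ ℝ³, S(y) = (1/(2π²)) ∫_{ℝ³} ( ∫_ℝ P(x/|x|, t − (x/|x|)·y) e^{i|x|t} dt ) dx, where the inner integral converges absolutely for each x ≠ 0 and the outer integral converges absolutely over ℝ³. -/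
open MeasureTheory Real Filter
open scoped RealInnerProductSpace Topology

open Module
open scoped FourierTransform

/-!
The far-field pattern is `1 / (4π)` times the Radon transform of `S`. On the hyperplane
`⟪e, ·⟫ = -t` the character `z ↦ exp (-i k ⟪e, z⟫)` is the constant `exp (i k t)`, so slicing space
into these hyperplanes (Fubini) identifies the Fourier integral of the Radon transform in `t` with
that of `S` at `k e`; this is the Fourier slice theorem. Replacing `t` by `t - ⟪e, y⟫` multiplies
it by `exp (i k ⟪e, y⟫)`. With `x = k e` the outer integral is therefore the Fourier inversion
integral for `S` at `y`, and `(2π)³ / (4π) = 2π²` is the constant.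
-/

section InnerProductSpace

variable {E F : Type*} [NormedAddCommGroup E] [InnerProductSpace ℝ E]

lemma inner_neg_smul_add_orthogonal {e : E} (he : ‖e‖ = 1) (t : ℝ) (w : (ℝ ∙ e)ᗮ) :
    ⟪e, -t • e + (w : E)⟫ = -t := by
  rw [inner_add_right, inner_smul_right, real_inner_self_eq_norm_sq, he,
    Submodule.mem_orthogonal_singleton_iff_inner_right.mp w.2]
  ring

variable [FiniteDimensional ℝ E] [MeasurableSpace E] [BorelSpace E] [NormedAddCommGroup F]

lemma measurePreserving_neg_smul_add_orthogonal {e : E} (he : ‖e‖ = 1) :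
    MeasurePreserving fun p : ℝ × (ℝ ∙ e)ᗮ ↦ -p.1 • e + (p.2 : E) := by
  have line_preserving :=
    (LinearIsometryEquiv.toSpanUnitSingleton (𝕜 := ℝ) e he).measurePreserving.comp
      (Measure.measurePreserving_neg volume)
  have split_preserving := (ℝ ∙ e).orthogonalDecomposition.symm.measurePreserving.comp
    (WithLp.volume_preserving_toLp (ℝ ∙ e) (ℝ ∙ e)ᗮ)
  rw [Measure.volume_eq_prod]
  convert split_preserving.comp (line_preserving.prod (.id volume)) using 1
  ext p
  simp

lemma integral_eq_integral_orthonormalBasis_fin_two [NormedSpace ℝ F]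
    (b : OrthonormalBasis (Fin 2) ℝ E) (g : E → F) :
    ∫ w, g w = ∫ p : ℝ × ℝ, g (p.1 • b 0 + p.2 • b 1) := by
  rw [← b.measurePreserving_measurableEquiv.symm.integral_comp',
    ← (EuclideanSpace.volume_preserving_symm_measurableEquiv_toLp (Fin 2)).symm.integral_comp',
    ← (volume_preserving_finTwoArrow ℝ).symm.integral_comp']
  congr! 3 with p
  exact (b.sum_repr_symm _).symm.trans (by simp [Fin.sum_univ_two])

/-- The Radon transform of `f`: the integral of `f` over the hyperplane `⟪e, ·⟫ = -t` orthogonal to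
the unit vector `e`, parametrized by the subspace `(ℝ ∙ e)ᗮ` with its Lebesgue measure. The sign
of `t` is that of the far-field pattern. -/
noncomputable def radonTransform [NormedSpace ℝ F] (f : E → F) (e : E) (t : ℝ) : F :=
  ∫ w : (ℝ ∙ e)ᗮ, f (-t • e + w)

section RadonTransform

variable [NormedSpace ℝ F] {f : E → F} {e : E}

lemma integrable_radonTransform (hf : Integrable f) (he : ‖e‖ = 1) :
    Integrable (radonTransform f e) :=
  ((measurePreserving_neg_smul_add_orthogonal he).integrable_comp_of_integrable
    hf).integral_prod_left

lemma integral_radonTransform (hf : Integrable f) (he : ‖e‖ = 1) :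
    ∫ t, radonTransform f e t = ∫ z, f z := by
  have hmp := measurePreserving_neg_smul_add_orthogonal he
  rw [← hmp.map_eq] at hf ⊢
  rw [integral_map hmp.aemeasurable hf.aestronglyMeasurable]
  exact integral_integral (hf.comp_measurable hmp.measurable)

lemma radonTransform_eq_integral_orthonormalBasis (b : OrthonormalBasis (Fin 2) ℝ (ℝ ∙ e)ᗮ)
    (f : E → F) (t : ℝ) :
    radonTransform f e t = ∫ p : ℝ × ℝ, f (-t • e + p.1 • (b 0 : E) + p.2 • (b 1 : E)) := by
  simp [radonTransform, integral_eq_integral_orthonormalBasis_fin_two b, add_assoc]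

end RadonTransform

section FourierTransform

variable [NormedSpace ℂ F] {f : E → F} {e : E}

lemma radonTransform_fourierChar_smul (he : ‖e‖ = 1) (f : E → F) (k t : ℝ) :
    radonTransform (fun z ↦ 𝐞 (-⟪z, k • e⟫) • f z) e t = 𝐞 (k * t) • radonTransform f e t := by
  have phase (w : (ℝ ∙ e)ᗮ) : -⟪-t • e + (w : E), k • e⟫ = k * t := by
    rw [inner_smul_right, real_inner_comm, inner_neg_smul_add_orthogonal he]
    ring
  simp only [radonTransform, phase, Circle.smul_def]
  exact integral_smul _ _

theorem fourierInv_radonTransform (hf : Integrable f) (he : ‖e‖ = 1) (k : ℝ) :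
    𝓕⁻ (radonTransform f e) k = 𝓕 f (k • e) :=
  calc 𝓕⁻ (radonTransform f e) k
      = ∫ t, radonTransform (fun z ↦ 𝐞 (-⟪z, k • e⟫) • f z) e t := by
        simp [fourierInv_eq, radonTransform_fourierChar_smul he]
    _ = 𝓕 f (k • e) :=
        integral_radonTransform ((fourierIntegral_convergent_iff _).mpr hf) he

lemma fourierInv_comp_sub_right (f : E → F) (a w : E) :
    𝓕⁻ (fun v ↦ f (v - a)) w = 𝐞 ⟪a, w⟫ • 𝓕⁻ f w := by
  simpa [Function.comp_def, ← sub_eq_add_neg] using!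
    congrFun (VectorFourier.fourierIntegral_comp_add_right 𝐞 volume (-innerₗ E) f (-a)) w

lemma fourierInv_radonTransform_sub_inner (hf : Integrable f) (he : ‖e‖ = 1) (k : ℝ) (y : E) :
    𝓕⁻ (fun t ↦ radonTransform f e (t - ⟪e, y⟫)) k = 𝐞 ⟪k • e, y⟫ • 𝓕 f (k • e) := by
  rw [fourierInv_comp_sub_right, fourierInv_radonTransform hf he, real_inner_smul_left,
    RCLike.inner_apply, conj_trivial]

lemma fourierInv_div_two_pi (g : ℝ → F) (r : ℝ) :
    𝓕⁻ g (r / (2 * π)) = ∫ t : ℝ, Complex.exp (Complex.I * r * t) • g t := by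
  rw [fourierInv_eq']
  congr! 4 with t
  simp only [RCLike.inner_apply, ringHom_apply, Complex.ofReal_mul, Complex.ofReal_ofNat,
    Complex.ofReal_div]
  field_simp

lemma integrable_fourierChar_inner_smul (hf : Integrable f) (y : E) :
    Integrable fun w ↦ 𝐞 ⟪w, y⟫ • f w := by
  simpa using (fourierIntegral_convergent_iff (-y)).mpr hf

lemma integral_fourierChar_smul_fourier_inv_two_pi_smul [CompleteSpace F] (hf : Integrable f)
    (hFf : Integrable (𝓕 f)) {y : E} (hy : ContinuousAt f y) :
    ∫ x : E, 𝐞 ⟪(2 * π)⁻¹ • x, y⟫ • 𝓕 f ((2 * π)⁻¹ • x) = (2 * π) ^ finrank ℝ E • f y := by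
  rw [Measure.integral_comp_smul volume (fun ξ ↦ 𝐞 ⟪ξ, y⟫ • 𝓕 f ξ), ← fourierInv_eq,
    hf.fourierInv_fourier_eq hFf hy, inv_pow, inv_inv, abs_of_pos (by positivity)]

lemma integrable_fourier_of_contDiff_of_hasCompactSupport (hf : ContDiff ℝ (⊤ : ℕ∞) f)
    (hsupp : HasCompactSupport f) : Integrable (𝓕 f) :=
  (𝓕 (hsupp.toSchwartzMap hf)).integrable

end FourierTransform

/-- `P` is the time-domain far-field pattern of the initial velocity `S`: in dimension three,
`P e t` is `1 / (4π)` times the integral of `S` over the plane `⟪e, ·⟫ = -t`, in the coordinates of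
any orthonormal pair `u`, `v` completing the unit vector `e`. Nothing is required of `P e` when
`‖e‖ ≠ 1`. -/
def IsFarFieldPattern (S : E → ℝ) (P : E → ℝ → ℝ) : Prop :=
  ∀ e : E, ‖e‖ = 1 → ∀ u v : E, ‖u‖ = 1 → ‖v‖ = 1 → ⟪e, u⟫ = 0 → ⟪e, v⟫ = 0 → ⟪u, v⟫ = 0 →
    ∀ t : ℝ, P e t = (1 / (4 * π)) * ∫ ab : ℝ × ℝ, S ((-t) • e + ab.1 • u + ab.2 • v)

namespace IsFarFieldPattern

variable {S : E → ℝ} {P : E → ℝ → ℝ}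

lemma eq_radonTransform (hP : IsFarFieldPattern S P) (hE : finrank ℝ E = 3) {e : E}
    (he : ‖e‖ = 1) (t : ℝ) : P e t = (1 / (4 * π)) * radonTransform S e t := by
  have : Fact (finrank ℝ E = 2 + 1) := ⟨hE⟩
  have he0 : e ≠ 0 := ne_zero_of_norm_ne_zero (he ▸ one_ne_zero)
  let b := OrthonormalBasis.fromOrthogonalSpanSingleton (𝕜 := ℝ) 2 (v := e) he0
  have inner_b (i : Fin 2) : ⟪e, b i⟫ = 0 :=
    Submodule.mem_orthogonal_singleton_iff_inner_right.mp (b i).2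
  rw [radonTransform_eq_integral_orthonormalBasis b]
  exact hP e he (b 0) (b 1) (b.norm_eq_one 0) (b.norm_eq_one 1) (inner_b 0) (inner_b 1)
    (b.inner_eq_zero (by decide)) t

lemma integrable_mul_cexp (hP : IsFarFieldPattern S P) (hE : finrank ℝ E = 3)
    (hS : Integrable S) {e : E} (he : ‖e‖ = 1) (a r : ℝ) :
    Integrable fun t : ℝ ↦ (P e (t - a) : ℂ) * Complex.exp (Complex.I * r * t) := by
  have hPe : Integrable (P e) := by
    simpa only [← hP.eq_radonTransform hE he] using
      (integrable_radonTransform hS he).const_mul (1 / (4 * π))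
  refine (hPe.comp_sub_right a).ofReal.mul_bdd (c := 1) (by fun_prop) (.of_forall fun t ↦ ?_)
  simp [Complex.norm_exp]

lemma integral_mul_cexp (hP : IsFarFieldPattern S P) (hE : finrank ℝ E = 3)
    (hS : Integrable S) (y : E) {x : E} (hx : x ≠ 0) :
    ∫ t : ℝ, (P (‖x‖⁻¹ • x) (t - ⟪‖x‖⁻¹ • x, y⟫) : ℂ) * Complex.exp (Complex.I * ‖x‖ * t) =
      (1 / (4 * π)) * (𝐞 ⟪(2 * π)⁻¹ • x, y⟫ • 𝓕 (fun z ↦ (S z : ℂ)) ((2 * π)⁻¹ • x)) := by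
  have he : ‖‖x‖⁻¹ • x‖ = 1 := norm_smul_inv_norm hx
  have hPc (t : ℝ) : (P (‖x‖⁻¹ • x) t : ℂ) =
      (1 / (4 * π)) * radonTransform (fun z ↦ (S z : ℂ)) (‖x‖⁻¹ • x) t := by
    simp [hP.eq_radonTransform hE he, radonTransform, integral_complex_ofReal]
  have hξ : (2 * π)⁻¹ • x = (‖x‖ / (2 * π)) • ‖x‖⁻¹ • x := by
    rw [smul_smul]
    field_simp [norm_ne_zero_iff.mpr hx]
  rw [hξ, ← fourierInv_radonTransform_sub_inner hS.ofReal he, fourierInv_div_two_pi,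
    ← integral_const_mul]
  congr! 2
  rw [hPc, smul_eq_mul]
  ring

end IsFarFieldPattern

theorem far_field_reconstruction_3d_general (hE : finrank ℝ E = 3) {S : E → ℝ}
    (hS : Integrable S) (hFS : Integrable (𝓕 fun z ↦ (S z : ℂ))) {P : E → ℝ → ℝ}
    (hP : IsFarFieldPattern S P) {y : E} (hy : ContinuousAt S y) :
    (∀ x : E, x ≠ 0 → Integrable fun t : ℝ ↦
        (P (‖x‖⁻¹ • x) (t - ⟪‖x‖⁻¹ • x, y⟫) : ℂ) * Complex.exp (Complex.I * ‖x‖ * t)) ∧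
      Integrable (fun x : E ↦ ∫ t : ℝ,
        (P (‖x‖⁻¹ • x) (t - ⟪‖x‖⁻¹ • x, y⟫) : ℂ) * Complex.exp (Complex.I * ‖x‖ * t)) ∧
      (S y : ℂ) = (1 / (2 * (π : ℂ) ^ 2)) * ∫ x : E, ∫ t : ℝ,
        (P (‖x‖⁻¹ • x) (t - ⟪‖x‖⁻¹ • x, y⟫) : ℂ) * Complex.exp (Complex.I * ‖x‖ * t) := by
  have : Nontrivial E := nontrivial_of_finrank_pos (R := ℝ) (by lia)
  have hae := (Measure.ae_ne volume (0 : E)).mono fun x hx ↦ hP.integral_mul_cexp hE hS y hx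
  refine ⟨fun x hx ↦ hP.integrable_mul_cexp hE hS (norm_smul_inv_norm hx) _ _, ?_, ?_⟩
  · have inv_two_pi_ne_zero : (2 * π)⁻¹ ≠ 0 := by positivity
    rw [integrable_congr hae]
    exact ((integrable_fourierChar_inner_smul hFS y).comp_smul inv_two_pi_ne_zero).const_mul _
  · have hyc : ContinuousAt (fun z ↦ (S z : ℂ)) y := by fun_prop
    rw [integral_congr_ae hae, integral_const_mul,
      integral_fourierChar_smul_fourier_inv_two_pi_smul hS.ofReal hFS hyc, hE, Complex.real_smul]
    push_cast
    field_simp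
    norm_num

end InnerProductSpace

/-- **Far-field reconstruction formula in 3D** (Theorem 3.5, `d = 3`).
Let `S : ℝ³ → ℝ` be smooth with compact support and let `P(x̂,t)` be the time-domain
far-field pattern, i.e. `P(x̂,t) = (1/(4π)) ∫_{ℝ²} S(−t x̂ + a u + b v) da db` for every
unit vector `x̂` and every orthonormal pair `u, v` completing `x̂` to an orthonormal basis
of `ℝ³`. Then for every `y ∈ ℝ³`, the inner `t`-integral below converges absolutely for
each `x ≠ 0`, the outer `x`-integral converges absolutely, and
`S(y) = (1/(2π²)) ∫_{ℝ³} ∫_ℝ P(x/|x|, t − (x/|x|)·y) e^{i|x|t} dt dx`. -/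
theorem far_field_reconstruction_3d
    (S : EuclideanSpace ℝ (Fin 3) → ℝ)
    (hS : ContDiff ℝ (⊤ : ℕ∞) S) (hsupp : HasCompactSupport S)
    (P : EuclideanSpace ℝ (Fin 3) → ℝ → ℝ)
    (hP : ∀ xhat : EuclideanSpace ℝ (Fin 3), ‖xhat‖ = 1 →
      ∀ u v : EuclideanSpace ℝ (Fin 3), ‖u‖ = 1 → ‖v‖ = 1 →
        ⟪xhat, u⟫ = 0 → ⟪xhat, v⟫ = 0 → ⟪u, v⟫ = 0 →
          ∀ t : ℝ, P xhat t =
            (1 / (4 * π)) * ∫ ab : ℝ × ℝ, S ((-t) • xhat + ab.1 • u + ab.2 • v))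
    (y : EuclideanSpace ℝ (Fin 3)) :
    (∀ x : EuclideanSpace ℝ (Fin 3), x ≠ 0 →
        Integrable (fun t : ℝ =>
          (P (‖x‖⁻¹ • x) (t - ⟪‖x‖⁻¹ • x, y⟫) : ℂ) *
            Complex.exp (Complex.I * (‖x‖ : ℂ) * (t : ℂ)))) ∧
      Integrable (fun x : EuclideanSpace ℝ (Fin 3) =>
        ∫ t : ℝ, (P (‖x‖⁻¹ • x) (t - ⟪‖x‖⁻¹ • x, y⟫) : ℂ) *
          Complex.exp (Complex.I * (‖x‖ : ℂ) * (t : ℂ))) ∧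
      (S y : ℂ) = (1 / (2 * (π : ℂ) ^ 2)) *
        ∫ x : EuclideanSpace ℝ (Fin 3),
          ∫ t : ℝ, (P (‖x‖⁻¹ • x) (t - ⟪‖x‖⁻¹ • x, y⟫) : ℂ) *
            Complex.exp (Complex.I * (‖x‖ : ℂ) * (t : ℂ)) :=
  far_field_reconstruction_3d_general finrank_euclideanSpace_fin
    (hS.continuous.integrable_of_hasCompactSupport hsupp)
    (integrable_fourier_of_contDiff_of_hasCompactSupport (Complex.ofRealCLM.contDiff.comp hS)
      (hsupp.comp_left Complex.ofReal_zero)) hP hS.continuous.continuousAt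
end
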